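/- arXiv:1811.07449 — 3 statements merged into one kernel-verified Lean document; each statement's English description precedes it below -/
import Mathlib

section
/- For every integer m ≥ 6 there exists a finite planar ({5,m};3)-graph on 2m+2 vertices, so m+7 ≤ n_p({5,m};3) ≤ 2m+2; moreover, for every m ≥ 13 there exists a finite planar ({5,m};3)-graph on m+15 vertices, so in that range n_p({5,m};3) ≤ m+15. -/
open SimpleGraph

/-- `H` is a minor of `G`: there is an assignment of pairwise disjoint connected
branch sets in `G` to the vertices of `H`, with an edge of `G` between the branch
sets of any two adjacent vertices of `H`. -/
def SimpleGraph.IsMinorOf {W V : Type*} (H : SimpleGraph W) (G : SimpleGraph V) : Prop :=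
  ∃ f : W → Set V,
    (∀ w, (G.induce (f w)).Connected) ∧
    (Pairwise fun w₁ w₂ => Disjoint (f w₁) (f w₂)) ∧
    ∀ ⦃w₁ w₂⦄, H.Adj w₁ w₂ → ∃ v₁ ∈ f w₁, ∃ v₂ ∈ f w₂, G.Adj v₁ v₂

/-- A graph is planar iff it has no `K₅` minor and no `K₃,₃` minor (Wagner's theorem). -/
def SimpleGraph.IsPlanar {V : Type*} (G : SimpleGraph V) : Prop :=
  ¬ (completeGraph (Fin 5)).IsMinorOf G ∧
    ¬ (completeBipartiteGraph (Fin 3) (Fin 3)).IsMinorOf G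

/-- A graph is outerplanar iff it has no `K₄` minor and no `K₂,₃` minor. -/
def SimpleGraph.IsOuterplanar {V : Type*} (G : SimpleGraph V) : Prop :=
  ¬ (completeGraph (Fin 4)).IsMinorOf G ∧
    ¬ (completeBipartiteGraph (Fin 2) (Fin 3)).IsMinorOf G

/-- The degree of a vertex, as the cardinality of its neighbour set. -/
noncomputable def SimpleGraph.degN {V : Type*} (G : SimpleGraph V) (v : V) : ℕ :=
  (G.neighborSet v).ncard

/-- An `({r,m};g)`-graph: girth `g`, every vertex has degree `r` or `m`, both occur. -/
def IsBigirthGraph {V : Type*} (G : SimpleGraph V) (r m g : ℕ) : Prop :=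
  G.girth = g ∧ (∀ v, G.degN v = r ∨ G.degN v = m) ∧
    (∃ v, G.degN v = r) ∧ (∃ v, G.degN v = m)

/-- The set of orders of finite planar `({r,m};g)`-graphs. -/
def bicageOrders (r m g : ℕ) : Set ℕ :=
  {n | ∃ (V : Type) (_ : Fintype V) (G : SimpleGraph V),
    G.IsPlanar ∧ IsBigirthGraph G r m g ∧ Fintype.card V = n}

/-! ### A mod 2 certificate (van Kampen style) excluding `K₅` and `K₃,₃` minors -/

/-- A mod 2 certificate of planarity. -/
def Cert {V : Type*} (G : SimpleGraph V) : Prop :=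
  ∃ (s : V → V → ZMod 2) (M : V → V → V → ZMod 2),
    (∀ x y, x ≠ y → s y x = 1 + s x y) ∧
    ∀ a b c d, G.Adj a b → G.Adj c d → a ≠ c → a ≠ d → b ≠ c → b ≠ d →
      s a c + s b c + s a d + s b d + M a b c + M a b d + M c d a + M c d b = 0

/-- Sum of `M` along a walk. -/
def wsum {V : Type*} {G : SimpleGraph V} (M : V → V → V → ZMod 2) :
    {a b : V} → G.Walk a b → V → ZMod 2
  | _, _, .nil, _ => 0
  | _, _, .cons (u := u) (v := v) _ p, x => M u v x + wsum M p x

lemma two_eq_zero_zmod : (2 : ZMod 2) = 0 := by decide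

lemma cert_edge_walk {V : Type*} {G : SimpleGraph V} {s : V → V → ZMod 2}
    {M : V → V → V → ZMod 2}
    (h : ∀ a b c d, G.Adj a b → G.Adj c d → a ≠ c → a ≠ d → b ≠ c → b ≠ d →
      s a c + s b c + s a d + s b d + M a b c + M a b d + M c d a + M c d b = 0)
    {a b : V} (hab : G.Adj a b) {c d : V} (q : G.Walk c d)
    (ha : a ∉ q.support) (hb : b ∉ q.support) :
    s a c + s b c + s a d + s b d + M a b c + M a b d + wsum M q a + wsum M q b = 0 := by
  induction q with
  | nil =>
    simp only [wsum]
    linear_combination (s a _ + s b _ + M a b _) * two_eq_zero_zmod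
  | @cons u v w huv p ih =>
    simp only [SimpleGraph.Walk.support_cons, List.mem_cons, not_or] at ha hb
    have hv : v ∈ p.support := p.start_mem_support
    have h1 := h a b u v hab huv ha.1 (fun e => ha.2 (e ▸ hv)) hb.1 (fun e => hb.2 (e ▸ hv))
    have h2 := ih ha.2 hb.2
    simp only [wsum]
    linear_combination h1 + h2 - (s a v + s b v + M a b v) * two_eq_zero_zmod

lemma cert_walk_walk {V : Type*} {G : SimpleGraph V} {s : V → V → ZMod 2}
    {M : V → V → V → ZMod 2}
    (h : ∀ a b c d, G.Adj a b → G.Adj c d → a ≠ c → a ≠ d → b ≠ c → b ≠ d →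
      s a c + s b c + s a d + s b d + M a b c + M a b d + M c d a + M c d b = 0)
    {a b : V} (p : G.Walk a b) {c d : V} (q : G.Walk c d)
    (hd : ∀ x ∈ p.support, x ∉ q.support) :
    s a c + s b c + s a d + s b d + wsum M p c + wsum M p d + wsum M q a + wsum M q b = 0 := by
  induction p with
  | nil =>
    simp only [wsum]
    linear_combination (s _ c + s _ d + wsum M q _) * two_eq_zero_zmod
  | @cons u v w huv p ih =>
    simp only [SimpleGraph.Walk.support_cons, List.mem_cons] at hd
    have hv : v ∈ p.support := p.start_mem_support
    have h1 := cert_edge_walk h huv q (hd u (Or.inl rfl)) (hd v (Or.inr hv))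
    have h2 := ih (fun x hx => hd x (Or.inr hx))
    simp only [wsum]
    linear_combination h1 + h2 - (s v c + s v d + wsum M q v) * two_eq_zero_zmod

lemma exists_walk_in {V : Type*} {G : SimpleGraph V} {S : Set V} (hS : (G.induce S).Connected)
    {x y : V} (hx : x ∈ S) (hy : y ∈ S) : ∃ p : G.Walk x y, ∀ z ∈ p.support, z ∈ S := by
  obtain ⟨p⟩ := hS.preconnected ⟨x, hx⟩ ⟨y, hy⟩
  refine ⟨p.map (SimpleGraph.Embedding.induce S).toHom, ?_⟩
  intro z hz
  have hz' := (SimpleGraph.Walk.support_map (SimpleGraph.Embedding.induce S).toHom p) ▸ hz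
  obtain ⟨w, _, rfl⟩ := List.mem_map.1 hz'
  exact w.2

lemma Cert.of_minor {W V : Type*} {H : SimpleGraph W} {G : SimpleGraph V} (hG : Cert G)
    (hm : H.IsMinorOf G) : Cert H := by
  classical
  obtain ⟨s, M, hs, h⟩ := hG
  obtain ⟨f, hc, hdis, hadj⟩ := hm
  have hne : ∀ w, ∃ x, x ∈ f w := fun w => by
    obtain ⟨x⟩ := (hc w).nonempty
    exact ⟨x.1, x.2⟩
  choose r hr using hne
  have hrne : ∀ i j, i ≠ j → ∀ x ∈ f i, ∀ y ∈ f j, x ≠ y := fun i j hij x hx y hy e =>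
    Set.disjoint_left.1 (hdis hij) hx (e ▸ hy)
  have hw : ∀ i j, H.Adj i j → ∃ p : G.Walk (r i) (r j), ∀ z ∈ p.support, z ∈ f i ∨ z ∈ f j := by
    intro i j hij
    obtain ⟨x, hx, y, hy, hxy⟩ := hadj hij
    obtain ⟨p, hp⟩ := exists_walk_in (hc i) (hr i) hx
    obtain ⟨q, hq⟩ := exists_walk_in (hc j) hy (hr j)
    refine ⟨p.append (SimpleGraph.Walk.cons hxy q), ?_⟩
    intro z hz
    rw [SimpleGraph.Walk.mem_support_append_iff, SimpleGraph.Walk.support_cons,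
      List.mem_cons] at hz
    rcases hz with hz | rfl | hz
    · exact Or.inl (hp z hz)
    · exact Or.inl hx
    · exact Or.inr (hq z hz)
  choose P hP using hw
  refine ⟨fun i j => s (r i) (r j),
    fun i j k => if hij : H.Adj i j then wsum M (P i j hij) (r k) else 0, ?_, ?_⟩
  · intro x y hxy
    exact hs _ _ (hrne x y hxy _ (hr x) _ (hr y))
  · intro a b c d hab hcd hac had hbc hbd
    simp only [hab, hcd, dif_pos]
    refine cert_walk_walk h _ _ ?_
    intro x hx hx'
    rcases hP _ _ hab x hx with h1 | h1 <;> rcases hP _ _ hcd x hx' with h2 | h2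
    · exact hrne _ _ hac _ h1 _ h2 rfl
    · exact hrne _ _ had _ h1 _ h2 rfl
    · exact hrne _ _ hbc _ h1 _ h2 rfl
    · exact hrne _ _ hbd _ h1 _ h2 rfl

lemma not_cert_K5 : ¬ Cert (completeGraph (Fin 5)) := by
  rintro ⟨s, M, hs, h⟩
  have e : ∀ a b c d : Fin 5, a ≠ b → c ≠ d → a ≠ c → a ≠ d → b ≠ c → b ≠ d → 
      s a c + s b c + s a d + s b d + M a b c + M a b d + M c d a + M c d b = 0 :=
    fun a b c d h1 h2 h3 h4 h5 h6 => h a b c d h1 h2 h3 h4 h5 h6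
  have t := fun a b (h : a ≠ b) => hs a b h
  have t21 := hs 1 2 (by decide)
  have t31 := hs 1 3 (by decide)
  have t32 := hs 2 3 (by decide)
  have t41 := hs 1 4 (by decide)
  have t42 := hs 2 4 (by decide)
  have t43 := hs 3 4 (by decide)
  have e1 := e 0 1 2 3 (by decide) (by decide) (by decide) (by decide) (by decide) (by decide)
  have e2 := e 0 2 1 3 (by decide) (by decide) (by decide) (by decide) (by decide) (by decide)
  have e3 := e 0 3 1 2 (by decide) (by decide) (by decide) (by decide) (by decide) (by decide)
  have e4 := e 0 1 2 4 (by decide) (by decide) (by decide) (by decide) (by decide) (by decide)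
  have e5 := e 0 2 1 4 (by decide) (by decide) (by decide) (by decide) (by decide) (by decide)
  have e6 := e 0 4 1 2 (by decide) (by decide) (by decide) (by decide) (by decide) (by decide)
  have e7 := e 0 1 3 4 (by decide) (by decide) (by decide) (by decide) (by decide) (by decide)
  have e8 := e 0 3 1 4 (by decide) (by decide) (by decide) (by decide) (by decide) (by decide)
  have e9 := e 0 4 1 3 (by decide) (by decide) (by decide) (by decide) (by decide) (by decide)
  have e10 := e 0 2 3 4 (by decide) (by decide) (by decide) (by decide) (by decide) (by decide)
  have e11 := e 0 3 2 4 (by decide) (by decide) (by decide) (by decide) (by decide) (by decide)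
  have e12 := e 0 4 2 3 (by decide) (by decide) (by decide) (by decide) (by decide) (by decide)
  have e13 := e 1 2 3 4 (by decide) (by decide) (by decide) (by decide) (by decide) (by decide)
  have e14 := e 1 3 2 4 (by decide) (by decide) (by decide) (by decide) (by decide) (by decide)
  have e15 := e 1 4 2 3 (by decide) (by decide) (by decide) (by decide) (by decide) (by decide)
  simp only [t21, t31, t32, t41, t42, t43] at e1 e2 e3 e4 e5 e6 e7 e8 e9 e10 e11 e12 e13 e14 e15
  have key : (1 : ZMod 2) = 0 := by
    have h2 := two_eq_zero_zmod
    have := congrArg₂ (· + ·) (congrArg₂ (· + ·) (congrArg₂ (· + ·) e1 e2)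
      (congrArg₂ (· + ·) e3 e4)) (congrArg₂ (· + ·) (congrArg₂ (· + ·) e5 e6)
      (congrArg₂ (· + ·) e7 e8))
    have := congrArg₂ (· + ·) this (congrArg₂ (· + ·) (congrArg₂ (· + ·) (congrArg₂ (· + ·) e9 e10)
      (congrArg₂ (· + ·) e11 e12)) (congrArg₂ (· + ·) (congrArg₂ (· + ·) e13 e14) e15))
    ring_nf at this
    have h4 : (4 : ZMod 2) = 0 := by decide
    have h6 : (6 : ZMod 2) = 0 := by decide
    have h15 : (15 : ZMod 2) = 1 := by decide
    simp [h2, h6, h15] at this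
  exact absurd key (by decide)

lemma not_cert_K33 : ¬ Cert (completeBipartiteGraph (Fin 3) (Fin 3)) := by
  rintro ⟨s, M, hs, h⟩
  have e : ∀ a c b d : Fin 3, a ≠ c → b ≠ d →
      s (.inl a) (.inl c) + s (.inr b) (.inl c) + s (.inl a) (.inr d) + s (.inr b) (.inr d)
      + M (.inl a) (.inr b) (.inl c) + M (.inl a) (.inr b) (.inr d)
      + M (.inl c) (.inr d) (.inl a) + M (.inl c) (.inr d) (.inr b) = 0 :=
    fun a c b d h1 h2 => h (.inl a) (.inr b) (.inl c) (.inr d) (by simp) (by simp)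
      (by simpa using h1) (by simp) (by simp) (by simpa using h2)
  have t : ∀ a b, s (.inr b) (.inl a) = 1 + s (.inl a) (.inr b) := fun a b => hs _ _ (by simp)
  have t10 := hs (.inr 0) (.inr 1) (by simp)
  have t20 := hs (.inr 0) (.inr 2) (by simp)
  have t21 := hs (.inr 1) (.inr 2) (by simp)
  have e1 := e 0 1 0 1 (by decide) (by decide)
  have e2 := e 0 1 0 2 (by decide) (by decide)
  have e3 := e 0 1 1 0 (by decide) (by decide)
  have e4 := e 0 1 1 2 (by decide) (by decide)
  have e5 := e 0 1 2 0 (by decide) (by decide)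
  have e6 := e 0 1 2 1 (by decide) (by decide)
  have e7 := e 0 2 0 1 (by decide) (by decide)
  have e8 := e 0 2 0 2 (by decide) (by decide)
  have e9 := e 0 2 1 0 (by decide) (by decide)
  have e10 := e 0 2 1 2 (by decide) (by decide)
  have e11 := e 0 2 2 0 (by decide) (by decide)
  have e12 := e 0 2 2 1 (by decide) (by decide)
  have e13 := e 1 2 0 1 (by decide) (by decide)
  have e14 := e 1 2 0 2 (by decide) (by decide)
  have e15 := e 1 2 1 0 (by decide) (by decide)
  have e16 := e 1 2 1 2 (by decide) (by decide)
  have e17 := e 1 2 2 0 (by decide) (by decide)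
  have e18 := e 1 2 2 1 (by decide) (by decide)
  simp only [t, t10, t20, t21] at e1 e2 e3 e4 e5 e6 e7 e8 e9 e10 e11 e12 e13 e14 e15 e16 e17 e18
  have key : (1 : ZMod 2) = 0 := by
    have h2 := two_eq_zero_zmod
    have := congrArg₂ (· + ·) (congrArg₂ (· + ·) (congrArg₂ (· + ·) e1 e2)
      (congrArg₂ (· + ·) e3 e4)) (congrArg₂ (· + ·) (congrArg₂ (· + ·) e5 e6)
      (congrArg₂ (· + ·) e7 e8))
    have := congrArg₂ (· + ·) this (congrArg₂ (· + ·) (congrArg₂ (· + ·) (congrArg₂ (· + ·) e9 e10)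
      (congrArg₂ (· + ·) e11 e12)) (congrArg₂ (· + ·) (congrArg₂ (· + ·) e13 e14)
      (congrArg₂ (· + ·) e15 (congrArg₂ (· + ·) e16 (congrArg₂ (· + ·) e17 e18)))))
    ring_nf at this
    have h4 : (4 : ZMod 2) = 0 := by decide
    have h6 : (6 : ZMod 2) = 0 := by decide
    have h27 : (27 : ZMod 2) = 1 := by decide
    simp [h2, h4, h6, h27] at this
  exact absurd key (by decide)

lemma Cert.isPlanar {V : Type*} {G : SimpleGraph V} (hG : Cert G) : G.IsPlanar :=
  ⟨fun h => not_cert_K5 (hG.of_minor h), fun h => not_cert_K33 (hG.of_minor h)⟩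

/-! ### Two-page book embeddings -/

/-- The graph on `Fin N` whose edges are the arcs of the two pages. -/
def bookGraph (N : ℕ) (E : Bool → ℕ → ℕ → Prop) (hlt : ∀ p a b, E p a b → a < b) :
    SimpleGraph (Fin N) where
  Adj i j := ∃ p, E p i j ∨ E p j i
  symm := ⟨fun i j ⟨p, h⟩ => ⟨p, h.symm⟩⟩
  loopless := ⟨fun i ⟨p, h⟩ => by
    rcases h with h | h <;> exact absurd (hlt _ _ _ h) (lt_irrefl _)⟩

/-- `[x < y]` modulo 2. -/
def sgn (x y : ℕ) : ZMod 2 := if x < y then 1 else 0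

lemma sgn_swap (x y : ℕ) (hxy : x ≠ y) : sgn y x = 1 + sgn x y := by
  unfold sgn
  rcases lt_or_gt_of_ne hxy with h | h
  · rw [if_neg (by omega), if_pos h]; decide
  · rw [if_pos (by omega), if_neg (by omega)]; decide

open Classical in
/-- The edge-vertex part of the certificate of a book embedding. -/
noncomputable def bookM (E : Bool → ℕ → ℕ → Prop) (a b v : ℕ) : ZMod 2 :=
  if E true a b ∨ E true b a then sgn a v + sgn b v else 0

lemma book_cert_aux {E : Bool → ℕ → ℕ → Prop} (hlt : ∀ p a b, E p a b → a < b)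
    (hnc : ∀ p a b c d, E p a b → E p c d → a < c → c < b → b < d → False)
    (a b c d : ℕ) (hac : a ≠ c) (had : a ≠ d) (hbc : b ≠ c) (hbd : b ≠ d)
    (hab : ∃ p, E p a b ∨ E p b a) (hcd : ∃ p, E p c d ∨ E p d c) :
    sgn a c + sgn b c + sgn a d + sgn b d + bookM E a b c + bookM E a b d
      + bookM E c d a + bookM E c d b = 0 := by
  obtain ⟨p, hp⟩ := hab
  obtain ⟨q, hq⟩ := hcd
  -- same page: no interleaving
  have key : ∀ r, (E r a b ∨ E r b a) → (E r c d ∨ E r d c) →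
      sgn a c + sgn b c + sgn a d + sgn b d = 0 := by
    intro r h1 h2
    have hnc' : ∀ a b c d, E r a b → E r c d → ¬ (a < c ∧ c < b ∧ b < d) :=
      fun a b c d h1 h2 h => hnc r a b c d h1 h2 h.1 h.2.1 h.2.2
    unfold sgn
    rcases h1 with h1 | h1 <;> rcases h2 with h2 | h2 <;>
      have l1 := hlt _ _ _ h1 <;> have l2 := hlt _ _ _ h2 <;>
      have n1 := hnc' _ _ _ _ h1 h2 <;> have n2 := hnc' _ _ _ _ h2 h1 <;>
      split_ifs <;> first | decide | (exfalso; omega)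
  have h2 := two_eq_zero_zmod
  unfold bookM
  rw [sgn_swap a c hac, sgn_swap a d had, sgn_swap b c hbc, sgn_swap b d hbd]
  by_cases h1 : E true a b ∨ E true b a <;> by_cases h3 : E true c d ∨ E true d c
  · have := key true h1 h3
    simp only [h1, h3, if_true]
    linear_combination 3 * this + 2 * h2
  · simp only [h1, h3, if_true, if_false]
    linear_combination (sgn a c + sgn b c + sgn a d + sgn b d) * h2
  · simp only [h1, h3, if_true, if_false]
    linear_combination (2 + sgn a c + sgn b c + sgn a d + sgn b d) * h2
  · have hp' : E false a b ∨ E false b a := by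
      cases p
      · exact hp
      · exact absurd hp h1
    have hq' : E false c d ∨ E false d c := by
      cases q
      · exact hq
      · exact absurd hq h3
    have := key false hp' hq'
    simp only [h1, h3, if_false]
    linear_combination this

lemma book_cert {N : ℕ} {E : Bool → ℕ → ℕ → Prop} (hlt : ∀ p a b, E p a b → a < b)
    (hnc : ∀ p a b c d, E p a b → E p c d → a < c → c < b → b < d → False) :
    Cert (bookGraph N E hlt) := by
  refine ⟨fun x y => sgn x y, fun a b v => bookM E a b v, ?_, ?_⟩
  · intro x y hxy
    exact sgn_swap _ _ (fun e => hxy (Fin.ext e))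
  · intro a b c d hab hcd hac had hbc hbd
    exact book_cert_aux hlt hnc a b c d (fun e => hac (Fin.ext e)) (fun e => had (Fin.ext e))
      (fun e => hbc (Fin.ext e)) (fun e => hbd (Fin.ext e)) hab hcd

lemma book_degN {N : ℕ} {E : Bool → ℕ → ℕ → Prop} (hlt : ∀ p a b, E p a b → a < b)
    (v : Fin N) (S : Finset ℕ) (hS : ∀ x, x ∈ S ↔ x < N ∧ ∃ p, E p v x ∨ E p x v) :
    (bookGraph N E hlt).degN v = S.card := by
  unfold SimpleGraph.degN
  rw [← Set.ncard_image_of_injective _ Fin.val_injective, ← Set.ncard_coe_finset]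
  congr 1
  ext x
  simp only [Set.mem_image, SimpleGraph.mem_neighborSet, Finset.mem_coe, hS]
  constructor
  · rintro ⟨y, hy, rfl⟩
    exact ⟨y.2, hy⟩
  · rintro ⟨hx, h⟩
    exact ⟨⟨x, hx⟩, h, rfl⟩

lemma girth_eq_three {V : Type*} {G : SimpleGraph V} {a b c : V} (hab : G.Adj a b)
    (hbc : G.Adj b c) (hca : G.Adj c a) : G.girth = 3 := by
  have h : (SimpleGraph.Walk.cons hab (.cons hbc (.cons hca .nil))).IsCycle := by
    rw [SimpleGraph.Walk.isCycle_def]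
    have h1 := hab.ne
    have h2 := hbc.ne
    have h3 := hca.ne
    simp [SimpleGraph.Walk.isTrail_def, h1, h2, h3, h1.symm, h3.symm]
  have hle : G.girth ≤ 3 := h.girth_le_length
  have hge : 3 ≤ G.girth := SimpleGraph.three_le_girth (fun hac => hac _ h)
  omega

lemma book_mem {N m : ℕ} (E : Bool → ℕ → ℕ → Prop) (hlt : ∀ p a b, E p a b → a < b)
    (hnc : ∀ p a b c d, E p a b → E p c d → a < c → c < b → b < d → False)
    (hdeg : ∀ v < N, ∃ S : Finset ℕ, (S.card = 5 ∨ S.card = m) ∧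
      ∀ x, x ∈ S ↔ x < N ∧ ∃ p, E p v x ∨ E p x v)
    (h5 : ∃ v < N, ∃ S : Finset ℕ, S.card = 5 ∧ ∀ x, x ∈ S ↔ x < N ∧ ∃ p, E p v x ∨ E p x v)
    (hmm : ∃ v < N, ∃ S : Finset ℕ, S.card = m ∧ ∀ x, x ∈ S ↔ x < N ∧ ∃ p, E p v x ∨ E p x v)
    (htri : ∃ p q r a b c, c < N ∧ E p a b ∧ E q b c ∧ E r a c) :
    N ∈ bicageOrders 5 m 3 := by
  refine ⟨Fin N, inferInstance, bookGraph N E hlt, (book_cert hlt hnc).isPlanar, ⟨?_, ?_, ?_, ?_⟩,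
    Fintype.card_fin N⟩
  · obtain ⟨p, q, r, a, b, c, hc, h1, h2, h3⟩ := htri
    have l1 := hlt _ _ _ h1
    have l2 := hlt _ _ _ h2
    refine girth_eq_three (a := ⟨a, by omega⟩) (b := ⟨b, by omega⟩) (c := ⟨c, hc⟩) ?_ ?_ ?_
    · exact ⟨p, Or.inl h1⟩
    · exact ⟨q, Or.inl h2⟩
    · exact ⟨r, Or.inr h3⟩
  · intro v
    obtain ⟨S, hc, hS⟩ := hdeg v v.2
    rw [book_degN hlt v S hS]
    exact hc
  · obtain ⟨v, hv, S, hc, hS⟩ := h5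
    exact ⟨⟨v, hv⟩, by rw [book_degN hlt ⟨v, hv⟩ S hS, hc]⟩
  · obtain ⟨v, hv, S, hc, hS⟩ := hmm
    exact ⟨⟨v, hv⟩, by rw [book_degN hlt ⟨v, hv⟩ S hS, hc]⟩

/-! ### The gyroelongated bipyramid on `2m+2` vertices -/

lemma card_five {a b c d e : ℕ} (h : a ≠ b ∧ a ≠ c ∧ a ≠ d ∧ a ≠ e ∧ b ≠ c ∧ b ≠ d ∧ b ≠ e ∧
    c ≠ d ∧ c ≠ e ∧ d ≠ e) : ({a, b, c, d, e} : Finset ℕ).card = 5 := by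
  obtain ⟨h1, h2, h3, h4, h5, h6, h7, h8, h9, h10⟩ := h
  simp [*]

/-- Arcs of the two-page embedding of the gyroelongated bipyramid. -/
def E1 (m : ℕ) (p : Bool) (a b : ℕ) : Prop :=
  (p = true ∧ ((b = a + 1 ∧ b ≤ 2 * m + 1) ∨ (a % 2 = 0 ∧ b = a + 2 ∧ b + 4 ≤ 2 * m) ∨
    (a % 2 = 0 ∧ a + 4 ≤ 2 * m ∧ b = 2 * m + 1) ∨ (a + 4 = 2 * m ∧ b = 2 * m) ∨
    (a + 3 = 2 * m ∧ b = 2 * m) ∨ (a + 3 = 2 * m ∧ b + 1 = 2 * m))) ∨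
  (p = false ∧ ((a % 2 = 1 ∧ b = a + 2 ∧ b + 3 ≤ 2 * m) ∨
    (a % 2 = 1 ∧ a + 5 ≤ 2 * m ∧ b + 2 = 2 * m) ∨ (a = 0 ∧ b + 1 = 2 * m) ∨
    (a = 1 ∧ b + 1 = 2 * m) ∨ (a = 0 ∧ b = 2 * m)))

lemma E1_nc (m : ℕ) (p : Bool) (a b c d : ℕ) (h1 : E1 m p a b) (h2 : E1 m p c d)
    (hac : a < c) (hcb : c < b) (hbd : b < d) : False := by
  unfold E1 at h1 h2
  cases p
  · simp only [Bool.false_eq_true, false_and, true_and, false_or] at h1 h2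
    rcases h1 with h1 | h1 | h1 | h1 | h1 <;> rcases h2 with h2 | h2 | h2 | h2 | h2 <;> omega
  · simp only [Bool.true_eq_false, false_and, true_and, or_false] at h1 h2
    rcases h1 with h1 | h1 | h1 | h1 | h1 | h1 <;> rcases h2 with h2 | h2 | h2 | h2 | h2 | h2 <;>
      omega

/-- Adjacency in the gyroelongated bipyramid. -/
def A1 (m v x : ℕ) : Prop := ∃ p, E1 m p v x ∨ E1 m p x v

lemma A1.symm {m v x : ℕ} (h : A1 m v x) : A1 m x v := by
  obtain ⟨p, h⟩ := h
  exact ⟨p, h.symm⟩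

lemma A1_1 {m a b : ℕ} (h : b = a + 1 ∧ b ≤ 2 * m + 1) : A1 m a b :=
  ⟨true, Or.inl (Or.inl ⟨rfl, Or.inl h⟩)⟩

lemma A1_2 {m a b : ℕ} (h : a % 2 = 0 ∧ b = a + 2 ∧ b + 4 ≤ 2 * m) : A1 m a b :=
  ⟨true, Or.inl (Or.inl ⟨rfl, Or.inr (Or.inl h)⟩)⟩

lemma A1_3 {m a b : ℕ} (h : a % 2 = 0 ∧ a + 4 ≤ 2 * m ∧ b = 2 * m + 1) : A1 m a b :=
  ⟨true, Or.inl (Or.inl ⟨rfl, Or.inr (Or.inr (Or.inl h))⟩)⟩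

lemma A1_4 {m a b : ℕ} (h : a + 4 = 2 * m ∧ b = 2 * m) : A1 m a b :=
  ⟨true, Or.inl (Or.inl ⟨rfl, Or.inr (Or.inr (Or.inr (Or.inl h)))⟩)⟩

lemma A1_5 {m a b : ℕ} (h : a + 3 = 2 * m ∧ b = 2 * m) : A1 m a b :=
  ⟨true, Or.inl (Or.inl ⟨rfl, Or.inr (Or.inr (Or.inr (Or.inr (Or.inl h))))⟩)⟩

lemma A1_6 {m a b : ℕ} (h : a + 3 = 2 * m ∧ b + 1 = 2 * m) : A1 m a b :=
  ⟨true, Or.inl (Or.inl ⟨rfl, Or.inr (Or.inr (Or.inr (Or.inr (Or.inr h))))⟩)⟩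

lemma A1_7 {m a b : ℕ} (h : a % 2 = 1 ∧ b = a + 2 ∧ b + 3 ≤ 2 * m) : A1 m a b :=
  ⟨false, Or.inl (Or.inr ⟨rfl, Or.inl h⟩)⟩

lemma A1_8 {m a b : ℕ} (h : a % 2 = 1 ∧ a + 5 ≤ 2 * m ∧ b + 2 = 2 * m) : A1 m a b :=
  ⟨false, Or.inl (Or.inr ⟨rfl, Or.inr (Or.inl h)⟩)⟩

lemma A1_9 {m a b : ℕ} (h : a = 0 ∧ b + 1 = 2 * m) : A1 m a b :=
  ⟨false, Or.inl (Or.inr ⟨rfl, Or.inr (Or.inr (Or.inl h))⟩)⟩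

lemma A1_10 {m a b : ℕ} (h : a = 1 ∧ b + 1 = 2 * m) : A1 m a b :=
  ⟨false, Or.inl (Or.inr ⟨rfl, Or.inr (Or.inr (Or.inr (Or.inl h)))⟩)⟩

lemma A1_11 {m a b : ℕ} (h : a = 0 ∧ b = 2 * m) : A1 m a b :=
  ⟨false, Or.inl (Or.inr ⟨rfl, Or.inr (Or.inr (Or.inr (Or.inr h)))⟩)⟩

lemma A1_cases {m a b : ℕ} (h : A1 m a b) :
    (((b = a + 1 ∧ b ≤ 2 * m + 1) ∨
    (a % 2 = 0 ∧ b = a + 2 ∧ b + 4 ≤ 2 * m) ∨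
    (a % 2 = 0 ∧ a + 4 ≤ 2 * m ∧ b = 2 * m + 1) ∨
    (a + 4 = 2 * m ∧ b = 2 * m) ∨
    (a + 3 = 2 * m ∧ b = 2 * m) ∨
    (a + 3 = 2 * m ∧ b + 1 = 2 * m)) ∨
    ((a % 2 = 1 ∧ b = a + 2 ∧ b + 3 ≤ 2 * m) ∨
    (a % 2 = 1 ∧ a + 5 ≤ 2 * m ∧ b + 2 = 2 * m) ∨
    (a = 0 ∧ b + 1 = 2 * m) ∨
    (a = 1 ∧ b + 1 = 2 * m) ∨
    (a = 0 ∧ b = 2 * m))) ∨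
    (((a = b + 1 ∧ a ≤ 2 * m + 1) ∨
    (b % 2 = 0 ∧ a = b + 2 ∧ a + 4 ≤ 2 * m) ∨
    (b % 2 = 0 ∧ b + 4 ≤ 2 * m ∧ a = 2 * m + 1) ∨
    (b + 4 = 2 * m ∧ a = 2 * m) ∨
    (b + 3 = 2 * m ∧ a = 2 * m) ∨
    (b + 3 = 2 * m ∧ a + 1 = 2 * m)) ∨
    ((b % 2 = 1 ∧ a = b + 2 ∧ a + 3 ≤ 2 * m) ∨
    (b % 2 = 1 ∧ b + 5 ≤ 2 * m ∧ a + 2 = 2 * m) ∨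
    (b = 0 ∧ a + 1 = 2 * m) ∨
    (b = 1 ∧ a + 1 = 2 * m) ∨
    (b = 0 ∧ a = 2 * m))) := by
  obtain ⟨p, h | h⟩ := h
  · exact Or.inl (h.imp And.right And.right)
  · exact Or.inr (h.imp And.right And.right)

set_option maxHeartbeats 2000000 in
lemma E1_five (m : ℕ) (hm : 6 ≤ m) (v : ℕ) (hv : v < 2 * m + 2) (h1 : v + 2 ≠ 2 * m)
    (h2 : v ≠ 2 * m + 1) : ∃ S : Finset ℕ, S.card = 5 ∧
      ∀ x, x ∈ S ↔ x < 2 * m + 2 ∧ A1 m v x := by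
  have key : ∀ a b c d e : ℕ, (a ≠ b ∧ a ≠ c ∧ a ≠ d ∧ a ≠ e ∧ b ≠ c ∧ b ≠ d ∧ b ≠ e ∧
      c ≠ d ∧ c ≠ e ∧ d ≠ e) →
      (a < 2 * m + 2 ∧ b < 2 * m + 2 ∧ c < 2 * m + 2 ∧ d < 2 * m + 2 ∧ e < 2 * m + 2) → 
      (∀ x, A1 m v x → (x = a ∨ x = b ∨ x = c ∨ x = d ∨ x = e)) →
      (∀ x, (x = a ∨ x = b ∨ x = c ∨ x = d ∨ x = e) → A1 m v x) →
      ∃ S : Finset ℕ, S.card = 5 ∧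
      ∀ x, x ∈ S ↔ x < 2 * m + 2 ∧ A1 m v x := by
    intro a b c d e hne hlt hx hy
    refine ⟨{a, b, c, d, e}, card_five hne, fun x => ?_⟩
    simp only [Finset.mem_insert, Finset.mem_singleton]
    exact ⟨fun h => ⟨by omega, hy x h⟩, fun h => hx x h.2⟩
  rcases (by omega : v = 0 ∨ v = 1 ∨ (2 ≤ v ∧ v + 6 ≤ 2 * m ∧ v % 2 = 0) ∨ v + 4 = 2 * m ∨
    (3 ≤ v ∧ v + 5 ≤ 2 * m ∧ v % 2 = 1) ∨ v + 3 = 2 * m ∨ v + 1 = 2 * m ∨ v = 2 * m) with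
    h | h | h | h | h | h | h | h
  on_goal 1 => refine key 1 2 (2 * m + 1) (2 * m - 1) (2 * m) (by omega) (by omega) ?_ ?_
  on_goal 3 => refine key 0 2 3 (2 * m - 1) (2 * m - 2) (by omega) (by omega) ?_ ?_
  on_goal 5 => refine key (v - 2) (v - 1) (v + 1) (v + 2) (2 * m + 1) (by omega) (by omega) ?_ ?_
  on_goal 7 => refine key (2 * m - 5) (2 * m - 3) (2 * m - 6) (2 * m) (2 * m + 1) (by omega) (by omega) ?_ ?_
  on_goal 9 => refine key (v - 2) (v - 1) (v + 1) (v + 2) (2 * m - 2) (by omega) (by omega) ?_ ?_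
  on_goal 11 => refine key (2 * m - 4) (2 * m - 2) (2 * m - 5) (2 * m - 1) (2 * m) (by omega) (by omega) ?_ ?_
  on_goal 13 => refine key (2 * m - 2) (2 * m) 0 1 (2 * m - 3) (by omega) (by omega) ?_ ?_
  on_goal 15 => refine key (2 * m - 1) (2 * m + 1) (2 * m - 4) (2 * m - 3) 0 (by omega) (by omega) ?_ ?_
  all_goals
    intro x hx
  all_goals try rcases A1_cases hx with
          ((h' | h' | h' | h' | h' | h') | (h' | h' | h' | h' | h')) |
          ((h' | h' | h' | h' | h' | h') | (h' | h' | h' | h' | h')) <;> omega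
  all_goals
    rcases hx with hx | hx | hx | hx | hx <;>
    first
      | exact A1_1 (by omega)
      | exact (A1_1 (by omega)).symm
      | exact A1_2 (by omega)
      | exact (A1_2 (by omega)).symm
      | exact A1_3 (by omega)
      | exact (A1_3 (by omega)).symm
      | exact A1_4 (by omega)
      | exact (A1_4 (by omega)).symm
      | exact A1_5 (by omega)
      | exact (A1_5 (by omega)).symm
      | exact A1_6 (by omega)
      | exact (A1_6 (by omega)).symm
      | exact A1_7 (by omega)
      | exact (A1_7 (by omega)).symm
      | exact A1_8 (by omega)
      | exact (A1_8 (by omega)).symm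
      | exact A1_9 (by omega)
      | exact (A1_9 (by omega)).symm
      | exact A1_10 (by omega)
      | exact (A1_10 (by omega)).symm
      | exact A1_11 (by omega)
      | exact (A1_11 (by omega)).symm

set_option maxHeartbeats 1000000 in
lemma E1_m (m : ℕ) (hm : 6 ≤ m) (v : ℕ) (hv : v + 2 = 2 * m ∨ v = 2 * m + 1) :
    ∃ S : Finset ℕ, S.card = m ∧
      ∀ x, x ∈ S ↔ x < 2 * m + 2 ∧ A1 m v x := by
  rcases hv with hv | hv
  · refine ⟨(Finset.range m).image (fun i => 2 * i + 1), ?_, fun x => ?_⟩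
    · rw [Finset.card_image_of_injective _ (fun a b h => by
        have h' : 2 * a + 1 = 2 * b + 1 := h
        omega), Finset.card_range]
    · simp only [Finset.mem_image, Finset.mem_range]
      constructor
      · rintro ⟨i, hi, rfl⟩
        refine ⟨by omega, ?_⟩
        rcases (by omega : i + 2 < m ∨ i + 2 = m ∨ i + 1 = m) with h | h | h
        · exact (A1_8 (by omega)).symm
        · exact (A1_1 (by omega)).symm
        · exact A1_1 (by omega)
      · rintro ⟨_, hx⟩
        refine ⟨x / 2, ?_⟩
        rcases A1_cases hx with
          ((h' | h' | h' | h' | h' | h') | (h' | h' | h' | h' | h')) |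
          ((h' | h' | h' | h' | h' | h') | (h' | h' | h' | h' | h')) <;> omega
  · refine ⟨(Finset.range m).image (fun i => if i + 1 = m then 2 * m else 2 * i), ?_, fun x => ?_⟩
    · rw [Finset.card_image_of_injOn, Finset.card_range]
      intro a ha b hb h
      simp only [Finset.coe_range, Set.mem_Iio] at ha hb
      simp only at h
      split_ifs at h <;> omega
    · simp only [Finset.mem_image, Finset.mem_range]
      constructor
      · rintro ⟨i, hi, rfl⟩
        split_ifs with h
        · exact ⟨by omega, (A1_1 (by omega)).symm⟩
        · exact ⟨by omega, (A1_3 (by omega)).symm⟩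
      · rintro ⟨_, hx⟩
        have hx' : x = 2 * m ∨ (x % 2 = 0 ∧ x + 4 ≤ 2 * m) := by
          rcases A1_cases hx with
          ((h' | h' | h' | h' | h' | h') | (h' | h' | h' | h' | h')) |
          ((h' | h' | h' | h' | h' | h') | (h' | h' | h' | h' | h')) <;> omega
        by_cases hx : x = 2 * m
        · exact ⟨m - 1, by omega, by rw [if_pos (by omega)]; omega⟩
        · exact ⟨x / 2, by omega, by rw [if_neg (by omega)]; omega⟩

lemma part_one (m : ℕ) (hm : 6 ≤ m) : (2 * m + 2) ∈ bicageOrders 5 m 3 := by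
  refine book_mem (E1 m) ?_ (E1_nc m) ?_ ?_ ?_ ?_
  · intro p a b h
    unfold E1 at h
    rcases h with ⟨_, h⟩ | ⟨_, h⟩ <;> omega
  · intro v hv
    by_cases h : v + 2 = 2 * m ∨ v = 2 * m + 1
    · obtain ⟨S, hS, h'⟩ := E1_m m hm v h
      exact ⟨S, Or.inr hS, h'⟩
    · obtain ⟨S, hS, h'⟩ := E1_five m hm v hv (by omega) (by omega)
      exact ⟨S, Or.inl hS, h'⟩
  · exact ⟨0, by omega, E1_five m hm 0 (by omega) (by omega) (by omega)⟩
  · exact ⟨2 * m + 1, by omega, E1_m m hm _ (Or.inr rfl)⟩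
  · refine ⟨true, true, true, 0, 1, 2, by omega, ?_, ?_, ?_⟩ <;>
      (unfold E1; left; refine ⟨rfl, ?_⟩; omega)

/-! ### The graph on `m+15` vertices -/

/-- Arcs (with page number) of the end gadget, not incident with the hub `0`. -/
def LA : List (ℕ × ℕ × ℕ) :=
  [(1, 2, 0), (1, 3, 1), (1, 5, 1), (1, 11, 0), (2, 3, 0), (2, 9, 0), (2, 10, 0), (2, 11, 0),
   (3, 4, 0), (3, 5, 1), (3, 9, 0), (4, 5, 0), (4, 6, 0), (4, 8, 0), (4, 9, 0), (5, 6, 0),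
   (6, 7, 0), (6, 8, 0), (7, 8, 0), (7, 10, 1), (7, 12, 1), (8, 9, 0), (8, 10, 1), (9, 10, 0),
   (10, 11, 0), (11, 12, 0), (11, 13, 0)]

/-- Gadget neighbours of the hub, with page number. -/
def SP : List (ℕ × ℕ) := [(1, 0), (5, 1), (6, 1), (7, 1)]

lemma LA_range : ∀ a b q, (a, b, q) ∈ LA → 1 ≤ a ∧ a < b ∧ a ≤ 11 ∧ b ≤ 13 ∧ q < 2 ∧
    (b = 13 → a = 11 ∧ q = 0) := by
  have : ∀ e ∈ LA, 1 ≤ e.1 ∧ e.1 < e.2.1 ∧ e.1 ≤ 11 ∧ e.2.1 ≤ 13 ∧ e.2.2 < 2 ∧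
    (e.2.1 = 13 → e.1 = 11 ∧ e.2.2 = 0) := by decide
  exact fun a b q h => this _ h

lemma SP_range : ∀ x q, (x, q) ∈ SP → 1 ≤ x ∧ x ≤ 7 ∧ q < 2 := by
  have : ∀ e ∈ SP, 1 ≤ e.1 ∧ e.1 ≤ 7 ∧ e.2 < 2 := by decide
  exact fun a q h => this _ h

set_option maxRecDepth 100000 in
lemma LA_nc (a b c d q : ℕ) (h1 : (a, b, q) ∈ LA) (h2 : (c, d, q) ∈ LA)
    (hac : a < c) (hcb : c < b) (hbd : b < d) : False := by
  have : ∀ e ∈ LA, ∀ f ∈ LA, ¬ (e.2.2 = f.2.2 ∧ e.1 < f.1 ∧ f.1 < e.2.1 ∧ e.2.1 < f.2.1) := by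
    decide
  exact this _ h1 _ h2 ⟨rfl, hac, hcb, hbd⟩

lemma SP_nc (x c d q : ℕ) (h1 : (x, q) ∈ SP) (h2 : (c, d, q) ∈ LA)
    (hcb : c < x) (hbd : x < d) : False := by
  have : ∀ e ∈ SP, ∀ f ∈ LA, ¬ (e.2 = f.2.2 ∧ f.1 < e.1 ∧ e.1 < f.2.1) := by
    decide
  exact this _ h1 _ h2 ⟨rfl, hcb, hbd⟩

/-- Arcs of the two-page embedding: two gadgets, a strip, and the hub `0`. -/
def F2 (N q a b : ℕ) : Prop :=
  (a, b, q) ∈ LA ∨ (a < b ∧ b < N ∧ (N - b, N - a, (q + N) % 2) ∈ LA) ∨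
  (12 ≤ a ∧ b + 12 ≤ N ∧ b = a + 1 ∧ q = 0) ∨
  (12 ≤ a ∧ b + 12 ≤ N ∧ b = a + 2 ∧ q = (a + 1) % 2) ∨
  (a = 0 ∧ 12 ≤ b ∧ b + 12 ≤ N ∧ q = (b + 1) % 2) ∨
  (a = 0 ∧ (b, q) ∈ SP) ∨ (a = 0 ∧ (0 < b ∧ b < N) ∧ (N - b, (q + N) % 2) ∈ SP)

lemma F2_lt {N q a b : ℕ} (h : F2 N q a b) : a < b := by
  rcases h with h | h | h | h | h | h | h
  · have := LA_range _ _ _ h; omega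
  · omega
  · omega
  · omega
  · omega
  · have := SP_range _ _ h.2; omega
  · have := SP_range _ _ h.2.2; omega

lemma F2_nc {N : ℕ} (hN : 28 ≤ N) {q a b c d : ℕ} (hq : q < 2) (h1 : F2 N q a b)
    (h2 : F2 N q c d) (hac : a < c) (hcb : c < b) (hbd : b < d) : False := by
  rcases h2 with h2 | h2 | h2 | h2 | h2 | h2 | h2
  · have r2 := LA_range _ _ _ h2
    rcases h1 with h1 | h1 | h1 | h1 | h1 | h1 | h1
    · exact LA_nc _ _ _ _ _ h1 h2 hac hcb hbd
    · have := LA_range _ _ _ h1.2.2; omega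
    · omega
    · omega
    · omega
    · exact SP_nc _ _ _ _ h1.2 h2 hcb hbd
    · have := SP_range _ _ h1.2.2; omega
  · have r2 := LA_range _ _ _ h2.2.2
    rcases h1 with h1 | h1 | h1 | h1 | h1 | h1 | h1
    · have := LA_range _ _ _ h1; omega
    · exact LA_nc _ _ _ _ _ h2.2.2 h1.2.2 (by omega) (by omega) (by omega)
    · omega
    · omega
    · omega
    · have := SP_range _ _ h1.2; omega
    · exact SP_nc _ _ _ _ h1.2.2 h2.2.2 (by omega) (by omega)
  · omega
  · rcases h1 with h1 | h1 | h1 | h1 | h1 | h1 | h1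
    · have := LA_range _ _ _ h1; omega
    · have := LA_range _ _ _ h1.2.2; omega
    · omega
    · omega
    · omega
    · have := SP_range _ _ h1.2; omega
    · have := SP_range _ _ h1.2.2; omega
  · omega
  · omega
  · omega

/-- Adjacency. -/
def A2 (N v x : ℕ) : Prop := ∃ q, q < 2 ∧ (F2 N q v x ∨ F2 N q x v)

lemma A2.symm {N v x : ℕ} (h : A2 N v x) : A2 N x v := by
  obtain ⟨q, h1, h⟩ := h
  exact ⟨q, h1, h.symm⟩

/-- The reflection exchanging both ends. -/
def rho (N x : ℕ) : ℕ := if x = 0 then 0 else N - x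

lemma rho_rho {N x : ℕ} (h : x < N) : rho N (rho N x) = x := by
  unfold rho; split_ifs <;> omega

lemma F2_mirror {N : ℕ} {q a b : ℕ} (hq : q < 2) (hb : b < N) (ha : 1 ≤ a)
    (h : F2 N q a b) : ∃ q' < 2, F2 N q' (N - b) (N - a) := by
  have e1 : ((q + N) % 2 + N) % 2 = q := by omega
  rcases h with h | h | h | h | h | h | h
  · have := LA_range _ _ _ h
    have e2 : N - (N - a) = a := by omega
    have e3 : N - (N - b) = b := by omega
    refine ⟨(q + N) % 2, by omega, Or.inr (Or.inl ⟨by omega, by omega, ?_⟩)⟩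
    rw [e1, e2, e3]
    exact h
  · exact ⟨(q + N) % 2, by omega, Or.inl h.2.2⟩
  · exact ⟨0, by omega, Or.inr (Or.inr (Or.inl (by omega)))⟩
  · exact ⟨(N - b + 1) % 2, by omega, Or.inr (Or.inr (Or.inr (Or.inl (by omega))))⟩
  · omega
  · omega
  · omega

lemma F2_mirror0 {N : ℕ} (hN : 28 ≤ N) {q b : ℕ} (hq : q < 2) (hb : b < N)
    (h : F2 N q 0 b) : ∃ q' < 2, F2 N q' 0 (N - b) := by
  have e1 : ((q + N) % 2 + N) % 2 = q := by omega
  have e3 : N - (N - b) = b := by omega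
  rcases h with h | h | h | h | h | h | h
  · have := LA_range _ _ _ h
    omega
  · have := LA_range _ _ _ h.2.2
    omega
  · omega
  · omega
  · exact ⟨(N - b + 1) % 2, by omega, Or.inr (Or.inr (Or.inr (Or.inr (Or.inl (by omega)))))⟩
  · have := SP_range _ _ h.2
    refine ⟨(q + N) % 2, by omega, Or.inr (Or.inr (Or.inr (Or.inr (Or.inr (Or.inr
      ⟨rfl, by omega, ?_⟩)))))⟩
    rw [e1, e3]
    exact h.2
  · exact ⟨(q + N) % 2, by omega, Or.inr (Or.inr (Or.inr (Or.inr (Or.inr (Or.inl ⟨rfl, h.2.2⟩)))))⟩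

lemma A2_mirror {N : ℕ} (hN : 28 ≤ N) {v x : ℕ} (hv : v < N) (hx : x < N) (h : A2 N v x) :
    A2 N (rho N v) (rho N x) := by
  have key : ∀ q a b, q < 2 → a < N → b < N → F2 N q a b → A2 N (rho N a) (rho N b) := by
    intro q a b hq ha hb h
    have hlt := F2_lt h
    unfold rho
    rw [if_neg (by omega : b ≠ 0)]
    split_ifs with h0
    · subst h0
      obtain ⟨q', hq', h'⟩ := F2_mirror0 hN hq hb h
      exact ⟨q', hq', Or.inl h'⟩
    · obtain ⟨q', hq', h'⟩ := F2_mirror hq hb (by omega) h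
      exact ⟨q', hq', Or.inr h'⟩
  obtain ⟨q, hq, h | h⟩ := h
  · exact key q v x hq hv hx h
  · exact (key q x v hq hx hv h).symm

/-- Arcs near the left end. -/
def Finf (q a b : ℕ) : Prop :=
  (a, b, q) ∈ LA ∨ (12 ≤ a ∧ b = a + 1 ∧ q = 0) ∨ (12 ≤ a ∧ b = a + 2 ∧ q = (a + 1) % 2) ∨
  (a = 0 ∧ 12 ≤ b ∧ q = (b + 1) % 2) ∨ (a = 0 ∧ (b, q) ∈ SP)

instance (q a b : ℕ) : Decidable (Finf q a b) := by unfold Finf; infer_instance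

lemma Finf_F2 {N : ℕ} (hN : 28 ≤ N) {q a b : ℕ} (hb : b < 16) : Finf q a b → F2 N q a b := by
  rintro (h | h | h | h | h)
  · exact Or.inl h
  · exact Or.inr (Or.inr (Or.inl (by omega)))
  · exact Or.inr (Or.inr (Or.inr (Or.inl (by omega))))
  · exact Or.inr (Or.inr (Or.inr (Or.inr (Or.inl (by omega)))))
  · exact Or.inr (Or.inr (Or.inr (Or.inr (Or.inr (Or.inl h)))))

lemma F2_Finf {N : ℕ} (hN : 28 ≤ N) {q a b : ℕ} (h : F2 N q a b)
    (hab : (1 ≤ a ∧ a ≤ 13) ∨ (1 ≤ b ∧ b ≤ 13)) : Finf q a b ∧ b < 16 := by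
  rcases h with h | h | h | h | h | h | h
  · have := LA_range _ _ _ h
    exact ⟨Or.inl h, by omega⟩
  · have := LA_range _ _ _ h.2.2
    omega
  · exact ⟨Or.inr (Or.inl (by omega)), by omega⟩
  · exact ⟨Or.inr (Or.inr (Or.inl (by omega))), by omega⟩
  · exact ⟨Or.inr (Or.inr (Or.inr (Or.inl (by omega)))), by omega⟩
  · have := SP_range _ _ h.2
    exact ⟨Or.inr (Or.inr (Or.inr (Or.inr h))), by omega⟩
  · have := SP_range _ _ h.2.2
    omega

/-- Neighbours of a vertex near the left end. -/
def nbL (v : ℕ) : Finset ℕ :=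
  (Finset.range 16).filter (fun x => Finf 0 v x ∨ Finf 0 x v ∨ Finf 1 v x ∨ Finf 1 x v)

set_option maxRecDepth 100000 in
lemma nbL_card : ∀ v ∈ Finset.Icc 1 13, (nbL v).card = 5 := by decide

lemma mem_nbL {N : ℕ} (hN : 28 ≤ N) {v : ℕ} (h1 : 1 ≤ v) (h2 : v ≤ 13) (x : ℕ) :
    x ∈ nbL v ↔ x < N ∧ A2 N v x := by
  simp only [nbL, Finset.mem_filter, Finset.mem_range]
  constructor
  · rintro ⟨hx, h⟩
    refine ⟨by omega, ?_⟩
    rcases h with h | h | h | h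
    · exact ⟨0, by omega, Or.inl (Finf_F2 hN hx h)⟩
    · exact ⟨0, by omega, Or.inr (Finf_F2 hN (by omega) h)⟩
    · exact ⟨1, by omega, Or.inl (Finf_F2 hN hx h)⟩
    · exact ⟨1, by omega, Or.inr (Finf_F2 hN (by omega) h)⟩
  · rintro ⟨_, q, hq, h⟩
    have hq' : q = 0 ∨ q = 1 := by omega
    rcases h with h | h
    · obtain ⟨h3, h4⟩ := F2_Finf hN h (Or.inl ⟨h1, h2⟩)
      refine ⟨h4, ?_⟩
      rcases hq' with rfl | rfl
      · exact Or.inl h3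
      · exact Or.inr (Or.inr (Or.inl h3))
    · have hlt := F2_lt h
      obtain ⟨h3, h4⟩ := F2_Finf hN h (Or.inr ⟨h1, h2⟩)
      refine ⟨by omega, ?_⟩
      rcases hq' with rfl | rfl
      · exact Or.inr (Or.inl h3)
      · exact Or.inr (Or.inr (Or.inr h3))

lemma A2_mid {N : ℕ} {v : ℕ} (h1 : 14 ≤ v) (h2 : v + 14 ≤ N) (x : ℕ) :
    x ∈ ({0, v - 2, v - 1, v + 1, v + 2} : Finset ℕ) ↔ x < N ∧ A2 N v x := by
  simp only [Finset.mem_insert, Finset.mem_singleton]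
  constructor
  · intro h
    refine ⟨by omega, ?_⟩
    rcases h with h | h | h | h | h
    · exact ⟨(v + 1) % 2, by omega, Or.inr (Or.inr (Or.inr (Or.inr (Or.inr (Or.inl (by omega))))))⟩
    · exact ⟨(x + 1) % 2, by omega, Or.inr (Or.inr (Or.inr (Or.inr (Or.inl (by omega)))))⟩
    · exact ⟨0, by omega, Or.inr (Or.inr (Or.inr (Or.inl (by omega))))⟩
    · exact ⟨0, by omega, Or.inl (Or.inr (Or.inr (Or.inl (by omega))))⟩
    · exact ⟨(v + 1) % 2, by omega, Or.inl (Or.inr (Or.inr (Or.inr (Or.inl (by omega)))))⟩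
  · rintro ⟨_, q, hq, h | h⟩
    · rcases h with h | h | h | h | h | h | h
      · have := LA_range _ _ _ h; omega
      · have := LA_range _ _ _ h.2.2; omega
      · omega
      · omega
      · omega
      · omega
      · omega
    · rcases h with h | h | h | h | h | h | h
      · have := LA_range _ _ _ h; omega
      · have := LA_range _ _ _ h.2.2; omega
      · omega
      · omega
      · omega
      · omega
      · omega

lemma A2_hub {N : ℕ} (hN : 28 ≤ N) : ∃ S : Finset ℕ, S.card + 15 = N ∧
    ∀ x, x ∈ S ↔ x < N ∧ A2 N 0 x := by
  refine ⟨insert 1 (insert 5 (insert 6 (insert 7 (insert (N - 1) (insert (N - 5)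
    (insert (N - 6) (insert (N - 7) (Finset.Icc 12 (N - 12))))))))), ?_, fun x => ?_⟩
  · repeat rw [Finset.card_insert_of_notMem (by
      simp only [Finset.mem_insert, Finset.mem_Icc]; omega)]
    rw [Nat.card_Icc]
    omega
  · simp only [Finset.mem_insert, Finset.mem_Icc]
    have hsp : ∀ y, (y = 1 ∨ y = 5 ∨ y = 6 ∨ y = 7) ↔ ∃ q < 2, (y, q) ∈ SP := by
      intro y
      constructor
      · rintro (rfl | rfl | rfl | rfl)
        · exact ⟨0, by omega, by decide⟩
        · exact ⟨1, by omega, by decide⟩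
        · exact ⟨1, by omega, by decide⟩
        · exact ⟨1, by omega, by decide⟩
      · rintro ⟨q, _, h⟩
        have : ∀ e ∈ SP, e.1 = 1 ∨ e.1 = 5 ∨ e.1 = 6 ∨ e.1 = 7 := by decide
        exact this _ h
    constructor
    · intro h
      refine ⟨by omega, ?_⟩
      rcases (by omega : (x = 1 ∨ x = 5 ∨ x = 6 ∨ x = 7) ∨
        (x < N ∧ (N - x = 1 ∨ N - x = 5 ∨ N - x = 6 ∨ N - x = 7)) ∨ (12 ≤ x ∧ x + 12 ≤ N))
        with h | ⟨hx, h⟩ | h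
      · obtain ⟨q, hq, h⟩ := (hsp x).1 h
        exact ⟨q, hq, Or.inl (Or.inr (Or.inr (Or.inr (Or.inr (Or.inr (Or.inl ⟨rfl, h⟩))))))⟩
      · obtain ⟨q, hq, h⟩ := (hsp _).1 h
        have e1 : ((q + N) % 2 + N) % 2 = q := by omega
        refine ⟨(q + N) % 2, by omega, Or.inl (Or.inr (Or.inr (Or.inr (Or.inr (Or.inr (Or.inr
          ⟨rfl, ⟨by omega, hx⟩, ?_⟩))))))⟩
        rw [e1]
        exact h
      · exact ⟨(x + 1) % 2, by omega,
          Or.inl (Or.inr (Or.inr (Or.inr (Or.inr (Or.inl (by omega))))))⟩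
    · rintro ⟨hx, q, hq, h | h⟩
      · rcases h with h | h | h | h | h | h | h
        · have := LA_range _ _ _ h; omega
        · have := LA_range _ _ _ h.2.2; omega
        · omega
        · omega
        · omega
        · have := (hsp x).2 ⟨q, hq, h.2⟩; omega
        · have := (hsp _).2 ⟨(q + N) % 2, by omega, h.2.2⟩; omega
      · have := F2_lt h
        omega

lemma A2_five {N : ℕ} (hN : 28 ≤ N) {v : ℕ} (h1 : 1 ≤ v) (h2 : v < N) :
    ∃ S : Finset ℕ, S.card = 5 ∧ ∀ x, x ∈ S ↔ x < N ∧ A2 N v x := by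
  rcases (by omega : v ≤ 13 ∨ (14 ≤ v ∧ v + 14 ≤ N) ∨ N ≤ v + 13) with h | h | h
  · exact ⟨nbL v, nbL_card v (Finset.mem_Icc.2 ⟨h1, h⟩), mem_nbL hN h1 h⟩
  · exact ⟨_, card_five (by omega), A2_mid h.1 h.2⟩
  · have hm := mem_nbL hN (v := N - v) (by omega) (by omega)
    have hv : rho N v = N - v := by unfold rho; rw [if_neg (by omega)]
    refine ⟨(nbL (N - v)).image (rho N), ?_, fun x => ?_⟩
    · rw [Finset.card_image_of_injOn, nbL_card _ (Finset.mem_Icc.2 ⟨by omega, by omega⟩)]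
      intro a ha b hb hab
      rw [← rho_rho ((hm a).1 ha).1, ← rho_rho ((hm b).1 hb).1, hab]
    · rw [Finset.mem_image]
      constructor
      · rintro ⟨y, hy, rfl⟩
        obtain ⟨hy1, hy2⟩ := (hm y).1 hy
        have := A2_mirror hN (by omega) hy1 hy2
        rw [← hv, rho_rho h2] at this
        refine ⟨?_, this⟩
        unfold rho; split_ifs <;> omega
      · rintro ⟨hx, h⟩
        refine ⟨rho N x, ?_, rho_rho hx⟩
        rw [hm]
        refine ⟨by unfold rho; split_ifs <;> omega, ?_⟩
        rw [← hv]
        exact A2_mirror hN h2 hx h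

/-- Pages as booleans. -/
def E2 (N : ℕ) (p : Bool) (a b : ℕ) : Prop := F2 N p.toNat a b

lemma A2_iff (N v x : ℕ) : A2 N v x ↔ ∃ p, E2 N p v x ∨ E2 N p x v := by
  constructor
  · rintro ⟨q, hq, h⟩
    rcases (by omega : q = 0 ∨ q = 1) with rfl | rfl
    · exact ⟨false, h⟩
    · exact ⟨true, h⟩
  · rintro ⟨p, h⟩
    exact ⟨p.toNat, Bool.toNat_lt p, h⟩

lemma part_three (m : ℕ) (hm : 13 ≤ m) : (m + 15) ∈ bicageOrders 5 m 3 := by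
  have hN : 28 ≤ m + 15 := by omega
  obtain ⟨S0, hS0, h0⟩ := A2_hub hN
  have h0c : S0.card = m := by omega
  refine book_mem (E2 (m + 15)) (fun p a b h => F2_lt h) ?_ ?_ ?_ ?_ ?_
  · intro p a b c d h1 h2
    exact F2_nc hN (Bool.toNat_lt p) h1 h2
  · intro v hv
    simp only [← A2_iff]
    rcases Nat.eq_zero_or_pos v with rfl | h
    · exact ⟨S0, Or.inr h0c, h0⟩
    · obtain ⟨S, hS, h'⟩ := A2_five hN h hv
      exact ⟨S, Or.inl hS, h'⟩
  · simp only [← A2_iff]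
    exact ⟨1, by omega, A2_five hN (by omega) (by omega)⟩
  · simp only [← A2_iff]
    exact ⟨0, by omega, S0, h0c, h0⟩
  · refine ⟨false, false, false, 2, 3, 9, by omega, Or.inl ?_, Or.inl ?_, Or.inl ?_⟩ <;> decide

/-! ### Mader's bound: graphs with at least `3n - 5` edges have a `K₅` minor -/

section Mader

variable {V : Type}

/-- `G` has a `K₅` minor. -/
def HasK5 (G : SimpleGraph V) : Prop := (completeGraph (Fin 5)).IsMinorOf G

lemma HasK5.mono {G H : SimpleGraph V} (hle : H ≤ G) (h : HasK5 H) : HasK5 G := by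
  obtain ⟨f, h1, h2, h3⟩ := h
  refine ⟨f, fun w => (h1 w).mono ?_, h2, ?_⟩
  · intro a b hab
    exact hle hab
  · intro a b hab
    obtain ⟨x, hx, y, hy, hxy⟩ := h3 hab
    exact ⟨x, hx, y, hy, hle hxy⟩

/-- The contraction of `v` into `u`; the vertex `v` becomes isolated. -/
def contr (G : SimpleGraph V) (u v : V) : SimpleGraph V where
  Adj x y := x ≠ y ∧ x ≠ v ∧ y ≠ v ∧ (G.Adj x y ∨ (x = u ∧ G.Adj v y) ∨ (y = u ∧ G.Adj v x))
  symm := ⟨by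
    rintro x y ⟨h1, h2, h3, h4⟩
    refine ⟨h1.symm, h3, h2, ?_⟩
    rcases h4 with h | h | h
    · exact Or.inl h.symm
    · exact Or.inr (Or.inr h)
    · exact Or.inr (Or.inl h)⟩
  loopless := ⟨fun x h => h.1 rfl⟩

lemma reachable_lift {A B : Type*} {G : SimpleGraph A} {H : SimpleGraph B} (φ : A → B)
    (h : ∀ a b, G.Adj a b → H.Reachable (φ a) (φ b)) {a b : A} (hab : G.Reachable a b) :
    H.Reachable (φ a) (φ b) := by
  obtain ⟨p⟩ := hab
  induction p with
  | nil => exact SimpleGraph.Reachable.refl _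
  | cons hadj _ ih => exact (h _ _ hadj).trans ih

lemma contr_lift {G : SimpleGraph V} {u v : V} (huv : G.Adj u v) (h : HasK5 (contr G u v)) :
    HasK5 G := by
  classical
  obtain ⟨f, h1, h2, h3⟩ := h
  have hv : ∀ w, v ∉ f w := by
    intro w hvw
    obtain ⟨w', hw'⟩ : ∃ w' : Fin 5, w ≠ w' := by
      exact (exists_ne w).imp fun _ h => h.symm
    obtain ⟨x, hx, y, hy, hxy⟩ := h3 (show (completeGraph (Fin 5)).Adj w w' from hw')
    obtain ⟨p⟩ := (h1 w).preconnected ⟨v, hvw⟩ ⟨x, hx⟩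
    cases p with
    | nil => exact hxy.2.1 rfl
    | cons hadj _ => exact hadj.2.1 rfl
  let g : Fin 5 → Set V := fun w => if u ∈ f w then insert v (f w) else f w
  have hsub : ∀ w, f w ⊆ g w := by
    intro w x hx
    by_cases hu : u ∈ f w
    · simp [g, hu, hx]
    · simp [g, hu, hx]
  have hvg : ∀ w, u ∈ f w → v ∈ g w := by
    intro w hu
    simp [g, hu]
  have hgm : ∀ w x, x ∈ g w → x ∈ f w ∨ (x = v ∧ u ∈ f w) := by
    intro w x hx
    by_cases hu : u ∈ f w
    · simp [g, hu] at hx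
      tauto
    · simp [g, hu] at hx
      exact Or.inl hx
  refine ⟨g, ?_, ?_, ?_⟩
  · intro w
    have hedge : ∀ a b : f w, ((contr G u v).induce (f w)).Adj a b →
        (G.induce (g w)).Reachable ⟨a, hsub w a.2⟩ ⟨b, hsub w b.2⟩ := by
      rintro ⟨a, ha⟩ ⟨b, hb⟩ ⟨-, -, -, hab⟩
      simp only [Function.Embedding.subtype_apply] at hab
      rcases hab with hab | ⟨rfl, hab⟩ | ⟨rfl, hab⟩
      · exact SimpleGraph.Adj.reachable (show (G.induce (g w)).Adj _ _ from hab)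
      · have e1 : (G.induce (g w)).Adj ⟨a, hsub w ha⟩ ⟨v, hvg w ha⟩ := huv
        have e2 : (G.induce (g w)).Adj ⟨v, hvg w ha⟩ ⟨b, hsub w hb⟩ := hab
        exact e1.reachable.trans e2.reachable
      · have e1 : (G.induce (g w)).Adj ⟨b, hsub w hb⟩ ⟨v, hvg w hb⟩ := huv
        have e2 : (G.induce (g w)).Adj ⟨v, hvg w hb⟩ ⟨a, hsub w ha⟩ := hab
        exact (e1.reachable.trans e2.reachable).symm
    obtain ⟨⟨r, hr⟩⟩ := (h1 w).nonempty
    rw [SimpleGraph.connected_iff_exists_forall_reachable]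
    have key : ∀ x (hx : x ∈ f w), (G.induce (g w)).Reachable ⟨r, hsub w hr⟩ ⟨x, hsub w hx⟩ := by
      intro x hx
      exact reachable_lift (fun a : f w => (⟨a, hsub w a.2⟩ : g w)) hedge
        ((h1 w).preconnected ⟨r, hr⟩ ⟨x, hx⟩)
    refine ⟨⟨r, hsub w hr⟩, ?_⟩
    rintro ⟨x, hx⟩
    rcases hgm w x hx with hx' | ⟨rfl, hu⟩
    · exact key x hx'
    · have e1 : (G.induce (g w)).Adj ⟨u, hsub w hu⟩ ⟨x, hx⟩ := huv
      exact (key u hu).trans e1.reachable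
  · intro w₁ w₂ hne
    have hd : Disjoint (f w₁) (f w₂) := h2 hne
    change Disjoint (g w₁) (g w₂)
    rw [Set.disjoint_left] at hd ⊢
    intro x hx1 hx2
    rcases hgm _ _ hx1 with a | ⟨a, a'⟩ <;> rcases hgm _ _ hx2 with b | ⟨b, b'⟩
    · exact hd a b
    · exact hv _ (b ▸ a)
    · exact hv _ (a ▸ b)
    · exact hd a' b'
  · intro w₁ w₂ hw
    obtain ⟨x, hx, y, hy, -, -, -, hxy⟩ := h3 hw
    rcases hxy with hxy | ⟨rfl, hxy⟩ | ⟨rfl, hxy⟩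
    · exact ⟨x, hsub _ hx, y, hsub _ hy, hxy⟩
    · exact ⟨v, hvg _ hx, y, hsub _ hy, hxy⟩
    · exact ⟨x, hsub _ hx, v, hvg _ hy, hxy.symm⟩

lemma contr_card [Fintype V] {G : SimpleGraph V} {u v : V} (huv : G.Adj u v) :
    ∀ [DecidableEq V] [DecidableRel G.Adj] [DecidableRel (contr G u v).Adj],
    G.edgeFinset.card ≤ (contr G u v).edgeFinset.card + 1
      + (G.neighborFinset u ∩ G.neighborFinset v).card := by
  intro _ _ _
  have hd : Disjoint (G.edgeFinset \ G.incidenceFinset v)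
      ((G.neighborFinset v \ insert u (G.neighborFinset u)).image (fun y => s(u, y))) := by
    rw [Finset.disjoint_left]
    intro e he he'
    simp only [Finset.mem_image, Finset.mem_sdiff, Finset.mem_insert,
      SimpleGraph.mem_neighborFinset, not_or] at he'
    obtain ⟨y, ⟨_, _, h⟩, rfl⟩ := he'
    simp only [Finset.mem_sdiff, SimpleGraph.mem_edgeFinset, SimpleGraph.mem_edgeSet] at he
    exact h he.1
  have hs : (G.edgeFinset \ G.incidenceFinset v) ∪
      ((G.neighborFinset v \ insert u (G.neighborFinset u)).image (fun y => s(u, y)))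
      ⊆ (contr G u v).edgeFinset := by
    intro e he
    rw [Finset.mem_union] at he
    rw [SimpleGraph.mem_edgeFinset]
    rcases he with he | he
    · induction e using Sym2.ind with
      | _ x y =>
        simp only [Finset.mem_sdiff, SimpleGraph.mem_edgeFinset, SimpleGraph.mem_edgeSet,
          SimpleGraph.mem_incidenceFinset, SimpleGraph.mk'_mem_incidenceSet_iff] at he
        obtain ⟨h1, h2⟩ := he
        rw [SimpleGraph.mem_edgeSet]
        refine ⟨h1.ne, ?_, ?_, Or.inl h1⟩
        · rintro rfl
          exact h2 ⟨h1, Or.inl rfl⟩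
        · rintro rfl
          exact h2 ⟨h1, Or.inr rfl⟩
    · simp only [Finset.mem_image, Finset.mem_sdiff, Finset.mem_insert,
        SimpleGraph.mem_neighborFinset, not_or] at he
      obtain ⟨y, ⟨h0, h1, h2⟩, rfl⟩ := he
      rw [SimpleGraph.mem_edgeSet]
      exact ⟨fun h => h1 h.symm, huv.ne, h0.ne', Or.inr (Or.inl ⟨rfl, h0⟩)⟩
  have hc := Finset.card_le_card hs
  rw [Finset.card_union_of_disjoint hd, Finset.card_image_of_injective] at hc
  swap
  · intro a b hab
    have hab' : s(u, a) = s(u, b) := hab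
    rwa [Sym2.congr_right] at hab'
  have e1 : G.edgeFinset.card - (G.incidenceFinset v).card ≤
      (G.edgeFinset \ G.incidenceFinset v).card := Finset.le_card_sdiff _ _
  rw [SimpleGraph.card_incidenceFinset_eq_degree] at e1
  have e2 : G.degree v ≤ (G.neighborFinset v \ insert u (G.neighborFinset u)).card + 1
      + (G.neighborFinset u ∩ G.neighborFinset v).card := by
    rw [← SimpleGraph.card_neighborFinset_eq_degree]
    have : G.neighborFinset v ⊆ (G.neighborFinset v \ insert u (G.neighborFinset u)) ∪ {u} ∪
        (G.neighborFinset u ∩ G.neighborFinset v) := by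
      intro x hx
      simp only [Finset.mem_union, Finset.mem_sdiff, Finset.mem_insert, Finset.mem_singleton,
        Finset.mem_inter]
      tauto
    refine (Finset.card_le_card this).trans ?_
    refine (Finset.card_union_le _ _).trans ?_
    gcongr
    refine (Finset.card_union_le _ _).trans ?_
    simp
  omega

lemma conn_single (G : SimpleGraph V) (a : V) : (G.induce ({a} : Set V)).Connected := by
  rw [SimpleGraph.connected_iff_exists_forall_reachable]
  refine ⟨⟨a, rfl⟩, ?_⟩
  rintro ⟨x, hx⟩
  obtain rfl : x = a := hx
  exact SimpleGraph.Reachable.refl _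

lemma conn_pair {G : SimpleGraph V} {a b : V} (h : G.Adj a b) :
    (G.induce ({a, b} : Set V)).Connected := by
  rw [SimpleGraph.connected_iff_exists_forall_reachable]
  refine ⟨⟨a, Or.inl rfl⟩, ?_⟩
  rintro ⟨x, hx⟩
  rcases hx with rfl | hx
  · exact SimpleGraph.Reachable.refl _
  · obtain rfl : x = b := hx
    exact SimpleGraph.Adj.reachable (show (G.induce _).Adj _ _ from h)

/-- Build a `K₅` minor from branch sets `A`, `{b}`, `{c}`, `{d}`, `{e}`. -/
lemma hasK5_of {G : SimpleGraph V} (A : Set V) (hA : (G.induce A).Connected) (b c d e : V)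
    (hb : ∃ x ∈ A, G.Adj x b) (hc : ∃ x ∈ A, G.Adj x c) (hd : ∃ x ∈ A, G.Adj x d)
    (he : ∃ x ∈ A, G.Adj x e) (nb : b ∉ A) (nc : c ∉ A) (nd : d ∉ A) (ne : e ∉ A)
    (hbc : G.Adj b c) (hbd : G.Adj b d) (hbe : G.Adj b e) (hcd : G.Adj c d) (hce : G.Adj c e)
    (hde : G.Adj d e) : HasK5 G := by
  have key : ∀ i j : Fin 5, i < j →
      Disjoint ((![A, {b}, {c}, {d}, {e}] : Fin 5 → Set V) i) (![A, {b}, {c}, {d}, {e}] j) ∧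
      ∃ x ∈ (![A, {b}, {c}, {d}, {e}] : Fin 5 → Set V) i,
        ∃ y ∈ (![A, {b}, {c}, {d}, {e}] : Fin 5 → Set V) j, G.Adj x y := by
    intro i j hij
    fin_cases i <;> fin_cases j <;> first
      | exact absurd hij (by decide)
      | simp [nb, nc, nd, ne, hbc, hbd, hbe, hcd, hce, hde, hb, hc, hd, he, hbc.ne, hbd.ne,
          hbe.ne, hcd.ne, hce.ne, hde.ne]
  refine ⟨![A, {b}, {c}, {d}, {e}], ?_, ?_, ?_⟩
  · intro w
    fin_cases w
    · exact hA
    · exact conn_single G b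
    · exact conn_single G c
    · exact conn_single G d
    · exact conn_single G e
  · intro i j hij
    rcases lt_or_gt_of_ne hij with h | h
    · exact (key i j h).1
    · exact (key j i h).1.symm
  · intro i j hij
    rcases lt_or_gt_of_ne (show i ≠ j from hij) with h | h
    · exact (key i j h).2
    · obtain ⟨x, hx, y, hy, hxy⟩ := (key j i h).2
      exact ⟨y, hy, x, hx, hxy.symm⟩

lemma hasK5_clique {G : SimpleGraph V} {v a b c d : V} (ha : G.Adj v a) (hb : G.Adj v b)
    (hc : G.Adj v c) (hd : G.Adj v d) (hab : G.Adj a b) (hac : G.Adj a c) (had : G.Adj a d)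
    (hbc : G.Adj b c) (hbd : G.Adj b d) (hcd : G.Adj c d) : HasK5 G :=
  hasK5_of {v} (conn_single G v) a b c d ⟨v, rfl, ha⟩ ⟨v, rfl, hb⟩ ⟨v, rfl, hc⟩ ⟨v, rfl, hd⟩
    ha.ne' hb.ne' hc.ne' hd.ne' hab hac had hbc hbd hcd

/-- `ab` and `cd` are the two non-edges. -/
lemma hasK5_two {G : SimpleGraph V} {v a b c d e : V} (hva : G.Adj v a) (hvb : G.Adj v b)
    (hvd : G.Adj v d) (hve : G.Adj v e) (nab : a ≠ b) (ncd : c ≠ d) (nvc : v ≠ c)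
    (hac : G.Adj a c) (had : G.Adj a d) (hae : G.Adj a e)
    (hbc : G.Adj b c) (hbd : G.Adj b d) (hbe : G.Adj b e)
    (hce : G.Adj c e) (hde : G.Adj d e) : HasK5 G := by
  refine hasK5_of {a, c} (conn_pair hac) b d e v ⟨c, by simp, hbc.symm⟩ ⟨a, by simp, had⟩
    ⟨a, by simp, hae⟩ ⟨a, by simp, hva.symm⟩ ?_ ?_ ?_ ?_ hbd hbe hvb.symm hde hvd.symm hve.symm
  · simp [nab.symm, hbc.ne]
  · simp [ncd.symm, had.ne']
  · simp [hae.ne', hce.ne']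
  · simp [hva.ne, nvc]

lemma hasK5_local [Fintype V] {G : SimpleGraph V} [DecidableEq V] [DecidableRel G.Adj] {v : V}
    (h0 : G.degree v ≠ 0) (h5 : G.degree v ≤ 5)
    (ht : ∀ u, G.Adj u v → 3 ≤ (G.neighborFinset u ∩ G.neighborFinset v).card) : HasK5 G := by
  set N := G.neighborFinset v with hN
  have hmem : ∀ x, x ∈ N ↔ G.Adj v x := fun x => by simp [hN]
  have hcard : N.card = G.degree v := G.card_neighborFinset_eq_degree v
  have hsub : ∀ x, G.neighborFinset x ∩ N ⊆ N.erase x := by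
    intro x y hy
    simp only [Finset.mem_inter, SimpleGraph.mem_neighborFinset] at hy
    exact Finset.mem_erase.2 ⟨hy.1.ne', hy.2⟩
  have h4 : 4 ≤ N.card := by
    obtain ⟨x, hx⟩ : N.Nonempty := Finset.card_pos.1 (by omega)
    have h1 := ht x ((hmem x).1 hx).symm
    have h2 := Finset.card_le_card (hsub x)
    rw [Finset.card_erase_of_mem hx] at h2
    omega
  -- each vertex of `N` has few non-neighbours
  have hnon : ∀ x ∈ N, ∀ T ⊆ N.erase x, (∀ y ∈ T, ¬ G.Adj x y) → T.card + 4 ≤ N.card := by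
    intro x hx T hT hnT
    have h1 := ht x ((hmem x).1 hx).symm
    have h2 : G.neighborFinset x ∩ N ⊆ N.erase x \ T := by
      intro y hy
      refine Finset.mem_sdiff.2 ⟨hsub x hy, fun hyT => hnT y hyT ?_⟩
      simpa using (Finset.mem_inter.1 hy).1
    have h3 := Finset.card_le_card h2
    rw [Finset.card_sdiff_of_subset hT, Finset.card_erase_of_mem hx] at h3
    have h6 := Finset.card_le_card hT
    rw [Finset.card_erase_of_mem hx] at h6
    omega
  by_cases hall : ∀ x ∈ N, ∀ y ∈ N, x ≠ y → G.Adj x y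
  · obtain ⟨T, hT, hT4⟩ := Finset.exists_subset_card_eq h4
    obtain ⟨a, b, c, d, hab, hac, had, hbc, hbd, hcd, rfl⟩ := Finset.card_eq_four.1 hT4
    have ha : a ∈ N := hT (by simp)
    have hb : b ∈ N := hT (by simp)
    have hc : c ∈ N := hT (by simp)
    have hd : d ∈ N := hT (by simp)
    exact hasK5_clique ((hmem _).1 ha) ((hmem _).1 hb) ((hmem _).1 hc) ((hmem _).1 hd)
      (hall _ ha _ hb hab) (hall _ ha _ hc hac) (hall _ ha _ hd had) (hall _ hb _ hc hbc)
      (hall _ hb _ hd hbd) (hall _ hc _ hd hcd)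
  · push Not at hall
    obtain ⟨a, ha, b, hb, nab, hab⟩ := hall
    have hN5 : N.card = 5 := by
      have := hnon a ha {b} (by simp [nab.symm, hb]) (by simpa using hab)
      simp at this
      omega
    have htwo : ∀ x ∈ N, ∀ y ∈ N, ∀ z ∈ N, x ≠ y → x ≠ z → y ≠ z → ¬ G.Adj x y →
        G.Adj x z := by
      intro x hx y hy z hz hxy hxz hyz hn
      by_contra hc
      have := hnon x hx {y, z} (by
        intro t ht
        simp only [Finset.mem_insert, Finset.mem_singleton] at ht
        rcases ht with rfl | rfl
        · exact Finset.mem_erase.2 ⟨hxy.symm, hy⟩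
        · exact Finset.mem_erase.2 ⟨hxz.symm, hz⟩) (by
        intro t ht
        simp only [Finset.mem_insert, Finset.mem_singleton] at ht
        rcases ht with rfl | rfl
        · exact hn
        · exact hc)
      rw [Finset.card_pair hyz] at this
      omega
    have hR : ((N.erase a).erase b).card = 3 := by
      rw [Finset.card_erase_of_mem (Finset.mem_erase.2 ⟨nab.symm, hb⟩),
        Finset.card_erase_of_mem ha, hN5]
    obtain ⟨c, d, e, hcd, hce, hde, hR'⟩ := Finset.card_eq_three.1 hR
    have hm : ∀ x ∈ ({c, d, e} : Finset V), x ≠ b ∧ x ≠ a ∧ x ∈ N := by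
      intro x hx
      rw [← hR'] at hx
      simpa using hx
    obtain ⟨ncb, nca, hc⟩ := hm c (by simp)
    obtain ⟨ndb, nda, hd⟩ := hm d (by simp)
    obtain ⟨neb, nea, he⟩ := hm e (by simp)
    have hba : ¬ G.Adj b a := fun h => hab h.symm
    have ac := htwo a ha b hb c hc nab nca.symm ncb.symm hab
    have ad := htwo a ha b hb d hd nab nda.symm ndb.symm hab
    have ae := htwo a ha b hb e he nab nea.symm neb.symm hab
    have bc := htwo b hb a ha c hc nab.symm ncb.symm nca.symm hba
    have bd := htwo b hb a ha d hd nab.symm ndb.symm nda.symm hba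
    have be := htwo b hb a ha e he nab.symm neb.symm nea.symm hba
    have va := (hmem _).1 ha
    have vb := (hmem _).1 hb
    have vc := (hmem _).1 hc
    have vd := (hmem _).1 hd
    have ve := (hmem _).1 he
    by_cases cd : G.Adj c d
    · by_cases ce : G.Adj c e
      · by_cases de : G.Adj d e
        · exact hasK5_clique va vc vd ve ac ad ae cd ce de
        · have dc := htwo d hd e he c hc hde hcd.symm hce.symm de
          have ec := htwo e he d hd c hc hde.symm hce.symm hcd.symm (fun h => de h.symm)
          exact hasK5_two va vb ve vc nab hde vd.ne ad ae ac bd be bc dc ec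
      · have cd' := htwo c hc e he d hd hce hcd hde.symm ce
        have ed := htwo e he c hc d hd hce.symm hde.symm hcd (fun h => ce h.symm)
        exact hasK5_two va vb ve vd nab hce vc.ne ac ae ad bc be bd cd' ed
    · have ce := htwo c hc d hd e he hcd hce hde cd
      have de := htwo d hd c hc e he hcd.symm hde hce (fun h => cd h.symm)
      exact hasK5_two va vb vd ve nab hcd vc.ne ac ad ae bc bd be ce de

open Classical in
lemma mader [Fintype V] (n : ℕ) : ∀ (S : Finset V) (G : SimpleGraph V), S.card = n → 3 ≤ n →
    (∀ x y, G.Adj x y → x ∈ S) → 3 * n ≤ G.edgeFinset.card + 5 → HasK5 G := by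
  induction n with
  | zero => intro S G _ h; omega
  | succ n ih =>
    intro S G₀ hS hn hsup₀ hE₀
    -- pass to a subgraph with exactly `3n - 5` edges
    obtain ⟨F, hF, hFc⟩ := Finset.exists_subset_card_eq
      (show 3 * (n + 1) - 5 ≤ G₀.edgeFinset.card by omega)
    have hFe : ∀ e ∈ F, e ∈ G₀.edgeSet := fun e he => SimpleGraph.mem_edgeFinset.1 (hF he)
    obtain ⟨G, hGF⟩ : ∃ G : SimpleGraph V, G.edgeSet = F := by
      refine ⟨SimpleGraph.fromEdgeSet (F : Set (Sym2 V)), ?_⟩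
      rw [SimpleGraph.edgeSet_fromEdgeSet, sdiff_eq_left, Set.disjoint_left]
      intro e he hd
      exact G₀.not_isDiag_of_mem_edgeSet (hFe e he) hd
    have hle : G ≤ G₀ := by
      rw [← SimpleGraph.edgeSet_subset_edgeSet, hGF]
      exact hFe
    refine HasK5.mono hle ?_
    have hsup : ∀ x y, G.Adj x y → x ∈ S := fun x y h => hsup₀ x y (hle h)
    have hE : G.edgeFinset.card = 3 * (n + 1) - 5 := by
      rw [← hFc]
      congr 1
      ext e
      rw [SimpleGraph.mem_edgeFinset, hGF, Finset.mem_coe]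
    have hdeg0 : ∀ x, x ∉ S → G.degree x = 0 := by
      intro x hx
      rw [← SimpleGraph.card_neighborFinset_eq_degree, Finset.card_eq_zero,
        Finset.eq_empty_iff_forall_notMem]
      intro y hy
      exact hx (hsup x y (by simpa using hy))
    have hsum : ∑ x ∈ S, G.degree x = 2 * G.edgeFinset.card := by
      rw [← SimpleGraph.sum_degrees_eq_twice_card_edges]
      exact Finset.sum_subset (Finset.subset_univ _) (fun x _ hx => hdeg0 x hx)
    rcases Nat.lt_or_ge n 3 with hlt | hn3
    · -- three vertices
      have hb : ∑ x ∈ S, G.degree x ≤ ∑ x ∈ S, 2 := by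
        refine Finset.sum_le_sum fun x hx => ?_
        rw [← SimpleGraph.card_neighborFinset_eq_degree]
        have : G.neighborFinset x ⊆ S.erase x := by
          intro y hy
          rw [SimpleGraph.mem_neighborFinset] at hy
          exact Finset.mem_erase.2 ⟨hy.ne', hsup y x hy.symm⟩
        have := Finset.card_le_card this
        rw [Finset.card_erase_of_mem hx] at this
        omega
      simp only [Finset.sum_const, smul_eq_mul] at hb
      omega
    obtain ⟨v, hvS, hv5⟩ : ∃ v ∈ S, G.degree v ≤ 5 := by
      by_contra! hcon
      have hb : ∑ x ∈ S, 6 ≤ ∑ x ∈ S, G.degree x := Finset.sum_le_sum fun x hx => hcon x hx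
      simp only [Finset.sum_const, smul_eq_mul] at hb
      omega
    by_cases hv0 : G.degree v = 0
    · refine ih (S.erase v) G (by rw [Finset.card_erase_of_mem hvS]; omega) hn3 ?_ (by omega)
      intro x y hxy
      refine Finset.mem_erase.2 ⟨?_, hsup x y hxy⟩
      rintro rfl
      have : 0 < G.degree x := (G.degree_pos_iff_exists_adj x).2 ⟨y, hxy⟩
      omega
    by_cases ht : ∀ u, G.Adj u v → 3 ≤ (G.neighborFinset u ∩ G.neighborFinset v).card
    · exact hasK5_local hv0 hv5 ht
    push Not at ht
    obtain ⟨u, huv, hlt⟩ := ht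
    have hc := contr_card huv
    refine contr_lift huv (ih (S.erase v) _ (by rw [Finset.card_erase_of_mem hvS]; omega) hn3 ?_ (by
      omega))
    rintro x y ⟨-, hxv, -, hxy⟩
    refine Finset.mem_erase.2 ⟨hxv, ?_⟩
    rcases hxy with h | ⟨rfl, -⟩ | ⟨-, h⟩
    · exact hsup x y h
    · exact hsup _ _ huv
    · exact hsup _ _ h.symm

end Mader

lemma part_two (m : ℕ) (hm : 6 ≤ m) : ∀ n ∈ bicageOrders 5 m 3, m + 7 ≤ n := by
  classical
  rintro n ⟨V, _, G, hpl, ⟨-, hdeg, -, ⟨w, hw⟩⟩, rfl⟩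
  have hdN : ∀ v, G.degN v = G.degree v := by
    intro v
    rw [SimpleGraph.degN, Set.ncard_eq_toFinset_card', ← SimpleGraph.card_neighborFinset_eq_degree,
      SimpleGraph.neighborFinset]
  simp only [hdN] at hdeg hw
  have hlt := G.degree_lt_card_verts w
  by_contra! hcon
  refine hpl.1 (mader (Fintype.card V) Finset.univ G rfl (by omega) (by simp) ?_)
  have hsum := G.sum_degrees_eq_twice_card_edges
  rw [← Finset.add_sum_erase _ _ (Finset.mem_univ w)] at hsum
  have hb : ∑ x ∈ Finset.univ.erase w, 5 ≤ ∑ x ∈ Finset.univ.erase w, G.degree x :=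
    Finset.sum_le_sum fun x _ => by rcases hdeg x with h | h <;> omega
  rw [Finset.sum_const, Finset.card_erase_of_mem (Finset.mem_univ w), smul_eq_mul,
    Finset.card_univ] at hb
  omega


/-- For `m ≥ 6` there is a finite planar `({5,m};3)`-graph on `2m+2`
vertices, and every such graph has at least `m+7` vertices, so
`m+7 ≤ n_p({5,m};3) ≤ 2m+2`; moreover for `m ≥ 13` there is a finite planar
`({5,m};3)`-graph on `m+15` vertices, so in that range `n_p({5,m};3) ≤ m+15`. -/
theorem planar_five_m_three_bounds (m : ℕ) (hm : 6 ≤ m) :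
    (2 * m + 2) ∈ bicageOrders 5 m 3 ∧
    (∀ n ∈ bicageOrders 5 m 3, m + 7 ≤ n) ∧
    (13 ≤ m → (m + 15) ∈ bicageOrders 5 m 3) := by
  exact ⟨part_one m hm, part_two m hm, part_three m⟩
end

section
/- For every integer m ≥ 14, there exists a finite planar ({3,m};4)-graph on m + 4⌈(m+1)/5⌉ + 3 vertices; hence n_p({3,m};4) ≤ m + 4⌈(m+1)/5⌉ + 3. -/
open SimpleGraph

namespace BookEmb

/-- Sum over the darts of a walk of `φ a b c`. -/
def wsum {V : Type*} {G : SimpleGraph V} (φ : V → V → V → ZMod 2) :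
    ∀ {u v : V}, G.Walk u v → V → ZMod 2
  | _, _, SimpleGraph.Walk.nil, _ => 0
  | u, _, SimpleGraph.Walk.cons (v := v) _ p, c => φ u v c + wsum φ p c

/-- A mod 2 planarity certificate (vanishing of the van Kampen obstruction). -/
structure Cert {V : Type*} (G : SimpleGraph V) (φ : V → V → V → ZMod 2)
    (A : V → V → ZMod 2) : Prop where
  flip : ∀ a c, a ≠ c → A c a = 1 + A a c
  main : ∀ a b c d, G.Adj a b → G.Adj c d → a ≠ c → a ≠ d → b ≠ c → b ≠ d →
    φ a b c + φ a b d + φ c d a + φ c d b = A a c + A b c + A a d + A b d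

theorem two_zero : (2 : ZMod 2) = 0 := by decide

theorem add_self2 (x : ZMod 2) : x + x = 0 := by
  linear_combination x * two_zero

theorem wsum_dart {V : Type*} {G : SimpleGraph V} {φ : V → V → V → ZMod 2}
    {A : V → V → ZMod 2} (C : Cert G φ A) {a b : V} (hab : G.Adj a b) :
    ∀ {x y : V} (Q : G.Walk x y), (a ∉ Q.support) → (b ∉ Q.support) →
      φ a b x + φ a b y + wsum φ Q a + wsum φ Q b = A a x + A b x + A a y + A b y := by
  intro x y Q
  induction Q with
  | nil =>
    rename_i u
    intro _ _
    simp only [wsum]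
    linear_combination (φ a b u - A a u - A b u) * two_zero
  | cons h p ih =>
    rename_i u v w
    intro ha hb
    simp only [SimpleGraph.Walk.support_cons, List.mem_cons, not_or] at ha hb
    have h1 := ih ha.2 hb.2
    have hav : a ≠ v := fun e => ha.2 (e ▸ p.start_mem_support)
    have hbv : b ≠ v := fun e => hb.2 (e ▸ p.start_mem_support)
    have h2 := C.main a b u v hab h ha.1 hav hb.1 hbv
    simp only [wsum]
    linear_combination h1 + h2 + (A a v + A b v - φ a b v) * two_zero

theorem wsum_walk {V : Type*} {G : SimpleGraph V} {φ : V → V → V → ZMod 2}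
    {A : V → V → ZMod 2} (C : Cert G φ A) {x y : V} (Q : G.Walk x y) :
    ∀ {u v : V} (P : G.Walk u v), (∀ z ∈ P.support, z ∉ Q.support) →
      wsum φ P x + wsum φ P y + wsum φ Q u + wsum φ Q v = A u x + A v x + A u y + A v y := by
  intro u v P
  induction P with
  | nil =>
    rename_i u
    intro _
    simp only [wsum]
    linear_combination (wsum φ Q u - A u x - A u y) * two_zero
  | cons h p ih =>
    rename_i u v w
    intro hd
    have h1 := ih (fun z hz => hd z (by simp [hz]))
    have h2 := wsum_dart C h Q (hd u (by simp)) (hd v (by simp))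
    simp only [wsum]
    linear_combination h1 + h2 + (A v x + A v y - wsum φ Q v) * two_zero

theorem exists_walk_in {V : Type*} {G : SimpleGraph V} {S : Set V}
    (h : (G.induce S).Connected) {a b : V} (ha : a ∈ S) (hb : b ∈ S) :
    ∃ P : G.Walk a b, ∀ z ∈ P.support, z ∈ S := by
  obtain ⟨p⟩ := h.preconnected ⟨a, ha⟩ ⟨b, hb⟩
  have key : ∀ (x y : S) (p : (G.induce S).Walk x y),
      ∃ P : G.Walk x.1 y.1, ∀ z ∈ P.support, z ∈ S := by
    intro x y p
    induction p with
    | nil =>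
      rename_i u
      refine ⟨SimpleGraph.Walk.nil, ?_⟩
      intro z hz
      simp only [SimpleGraph.Walk.support_nil, List.mem_singleton] at hz
      exact hz ▸ u.2
    | cons h q ih =>
      rename_i u v w
      obtain ⟨P, hP⟩ := ih
      have h' : G.Adj u.1 v.1 := h
      refine ⟨SimpleGraph.Walk.cons h' P, ?_⟩
      intro z hz
      rw [SimpleGraph.Walk.support_cons, List.mem_cons] at hz
      rcases hz with rfl | hz
      · exact u.2
      · exact hP z hz
  exact key _ _ p

/-- A minor model gives chain-level data satisfying the crossing equations. -/
theorem minor_eqs {W V : Type*} {H : SimpleGraph W} {G : SimpleGraph V}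
    {φ : V → V → V → ZMod 2} {A : V → V → ZMod 2} (C : Cert G φ A) (hm : H.IsMinorOf G) :
    ∃ (F : W → W → W → ZMod 2) (B : W → W → ZMod 2),
      (∀ a c, a ≠ c → B c a = 1 + B a c) ∧
      ∀ i j k l, H.Adj i j → H.Adj k l → i ≠ k → i ≠ l → j ≠ k → j ≠ l →
        F i j k + F i j l + F k l i + F k l j = B i k + B j k + B i l + B j l := by
  classical
  obtain ⟨f, hc, hd, he⟩ := hm
  have hne : ∀ w, ∃ v, v ∈ f w := fun w => by
    obtain ⟨⟨v, hv⟩⟩ := (hc w).nonempty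
    exact ⟨v, hv⟩
  choose p hp using hne
  have hdis : ∀ i k z, i ≠ k → z ∈ f i → z ∉ f k := fun i k z hik h1 h2 =>
    Set.disjoint_left.1 (hd hik) h1 h2
  have hw : ∀ i j, H.Adj i j → ∃ P : G.Walk (p i) (p j), ∀ z ∈ P.support, z ∈ f i ∨ z ∈ f j := by
    intro i j hij
    obtain ⟨a, ha, b, hb, hab⟩ := he hij
    obtain ⟨P, hP⟩ := exists_walk_in (hc i) (hp i) ha
    obtain ⟨Q, hQ⟩ := exists_walk_in (hc j) hb (hp j)
    refine ⟨P.append (SimpleGraph.Walk.cons hab Q), ?_⟩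
    intro z hz
    rw [SimpleGraph.Walk.mem_support_append_iff] at hz
    rcases hz with hz | hz
    · exact Or.inl (hP z hz)
    · rw [SimpleGraph.Walk.support_cons, List.mem_cons] at hz
      rcases hz with rfl | hz
      · exact Or.inl ha
      · exact Or.inr (hQ z hz)
  choose P hP using hw
  refine ⟨fun i j k => if h : H.Adj i j then wsum φ (P i j h) (p k) else 0,
    fun i j => A (p i) (p j), ?_, ?_⟩
  · intro a c hac
    exact C.flip _ _ (fun e => hdis a c _ hac (hp a) (e ▸ hp c))
  · intro i j k l hij hkl h1 h2 h3 h4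
    simp only [hij, hkl, dif_pos]
    apply wsum_walk C
    intro z hz hz'
    rcases hP _ _ hij z hz with h | h <;> rcases hP _ _ hkl z hz' with h' | h'
    · exact hdis _ _ _ h1 h h'
    · exact hdis _ _ _ h2 h h'
    · exact hdis _ _ _ h3 h h'
    · exact hdis _ _ _ h4 h h'

theorem zmod2_absurd (x : ZMod 2) (h : 2 * x = 1) : False := by
  revert x; decide

theorem no_K5 {V : Type*} {G : SimpleGraph V} {φ : V → V → V → ZMod 2} {A : V → V → ZMod 2}
    (C : Cert G φ A) : ¬ (completeGraph (Fin 5)).IsMinorOf G := by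
  intro hm
  obtain ⟨F, B, hB, hF⟩ := minor_eqs C hm
  have E : ∀ i j k l : Fin 5, i ≠ j → k ≠ l → i ≠ k → i ≠ l → j ≠ k → j ≠ l →
        F i j k + F i j l + F k l i + F k l j = B i k + B j k + B i l + B j l :=
    fun i j k l h1 h2 => hF i j k l h1 h2
  have b : ∀ a c : Fin 5, a < c → B c a = 1 + B a c := fun a c h => hB a c h.ne
  have e1 := E 0 1 2 3 (by decide) (by decide) (by decide) (by decide) (by decide) (by decide)
  have e2 := E 0 2 1 3 (by decide) (by decide) (by decide) (by decide) (by decide) (by decide)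
  have e3 := E 0 3 1 2 (by decide) (by decide) (by decide) (by decide) (by decide) (by decide)
  have e4 := E 0 1 2 4 (by decide) (by decide) (by decide) (by decide) (by decide) (by decide)
  have e5 := E 0 2 1 4 (by decide) (by decide) (by decide) (by decide) (by decide) (by decide)
  have e6 := E 0 4 1 2 (by decide) (by decide) (by decide) (by decide) (by decide) (by decide)
  have e7 := E 0 1 3 4 (by decide) (by decide) (by decide) (by decide) (by decide) (by decide)
  have e8 := E 0 3 1 4 (by decide) (by decide) (by decide) (by decide) (by decide) (by decide)
  have e9 := E 0 4 1 3 (by decide) (by decide) (by decide) (by decide) (by decide) (by decide)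
  have e10 := E 0 2 3 4 (by decide) (by decide) (by decide) (by decide) (by decide) (by decide)
  have e11 := E 0 3 2 4 (by decide) (by decide) (by decide) (by decide) (by decide) (by decide)
  have e12 := E 0 4 2 3 (by decide) (by decide) (by decide) (by decide) (by decide) (by decide)
  have e13 := E 1 2 3 4 (by decide) (by decide) (by decide) (by decide) (by decide) (by decide)
  have e14 := E 1 3 2 4 (by decide) (by decide) (by decide) (by decide) (by decide) (by decide)
  have e15 := E 1 4 2 3 (by decide) (by decide) (by decide) (by decide) (by decide) (by decide)
  have b21 := b 1 2 (by decide)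
  have b31 := b 1 3 (by decide)
  have b41 := b 1 4 (by decide)
  have b32 := b 2 3 (by decide)
  have b42 := b 2 4 (by decide)
  have b43 := b 3 4 (by decide)
  have key : (0 : ZMod 2) = 1 := by
    have := congrArg₂ (· + ·) e1 (congrArg₂ (· + ·) e2 (congrArg₂ (· + ·) e3
      (congrArg₂ (· + ·) e4 (congrArg₂ (· + ·) e5 (congrArg₂ (· + ·) e6
      (congrArg₂ (· + ·) e7 (congrArg₂ (· + ·) e8 (congrArg₂ (· + ·) e9
      (congrArg₂ (· + ·) e10 (congrArg₂ (· + ·) e11 (congrArg₂ (· + ·) e12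
      (congrArg₂ (· + ·) e13 (congrArg₂ (· + ·) e14 e15)))))))))))))
    simp only [b21, b31, b41, b32, b42, b43] at this
    ring_nf at this
    reduce_mod_char at this
    exact absurd this (by decide)
  exact absurd key (by decide)

theorem no_K33 {V : Type*} {G : SimpleGraph V} {φ : V → V → V → ZMod 2} {A : V → V → ZMod 2}
    (C : Cert G φ A) : ¬ (completeBipartiteGraph (Fin 3) (Fin 3)).IsMinorOf G := by
  intro hm
  obtain ⟨F, B, hB, hF⟩ := minor_eqs C hm
  let a : Fin 3 → Fin 3 ⊕ Fin 3 := Sum.inl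
  let b : Fin 3 → Fin 3 ⊕ Fin 3 := Sum.inr
  have E : ∀ i k j l : Fin 3, i ≠ k → j ≠ l →
      F (a i) (b j) (a k) + F (a i) (b j) (b l) + F (a k) (b l) (a i) + F (a k) (b l) (b j)
        = B (a i) (a k) + B (b j) (a k) + B (a i) (b l) + B (b j) (b l) := by
    intro i k j l hik hjl
    exact hF (a i) (b j) (a k) (b l) (by simp [a, b]) (by simp [a, b]) (by simpa [a] using hik)
      (by simp [a, b]) (by simp [a, b]) (by simpa [b] using hjl)
  have c10 := hB (b 0) (b 1) (by simp [b])
  have c20 := hB (b 0) (b 2) (by simp [b])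
  have c21 := hB (b 1) (b 2) (by simp [b])
  have S : ∀ i k : Fin 3, i ≠ k → _ := fun i k h =>
    congrArg₂ (· + ·) (E i k 0 1 h (by decide)) (congrArg₂ (· + ·) (E i k 1 0 h (by decide))
      (congrArg₂ (· + ·) (E i k 0 2 h (by decide)) (congrArg₂ (· + ·) (E i k 2 0 h (by decide))
      (congrArg₂ (· + ·) (E i k 1 2 h (by decide)) (E i k 2 1 h (by decide))))))
  have s := congrArg₂ (· + ·) (S 0 1 (by decide)) (congrArg₂ (· + ·) (S 0 2 (by decide))
    (S 1 2 (by decide)))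
  simp only [c10, c20, c21] at s
  clear_value a b
  ring_nf at s
  reduce_mod_char at s
  exact absurd s (by decide)

end BookEmb

namespace BookEmb

/-- An edge `(a, b, p)`: endpoints `a < b` on the spine and page `p`. -/
abbrev Edge := ℕ × ℕ × Bool

/-- Neighbours of `i` in an edge list. -/
def nb (L : List Edge) (i : ℕ) : List ℕ :=
  L.filterMap fun e => if e.1 = i then some e.2.1 else if e.2.1 = i then some e.1 else none

theorem mem_nb {L : List Edge} {i x : ℕ} :
    x ∈ nb L i ↔ ∃ e ∈ L, (e.1 = i ∧ e.2.1 = x) ∨ (e.1 ≠ i ∧ e.2.1 = i ∧ e.1 = x) := by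
  simp only [nb, List.mem_filterMap]
  refine exists_congr fun e => and_congr_right fun _ => ?_
  split_ifs with h1 h2 <;> simp [*]

theorem nb_append (L M : List Edge) (i : ℕ) : nb (L ++ M) i = nb L i ++ nb M i := by
  simp [nb, List.filterMap_append]

/-- A two-page book embedding with spine `0, …, N-1`. -/
structure Good (L : List Edge) (N M δ : ℕ) : Prop where
  two : 2 ≤ N
  lt : ∀ e ∈ L, e.1 < e.2.1
  bd : ∀ e ∈ L, e.2.1 < N
  nodup : ∀ i < N, (nb L i).Nodup
  deg0 : (nb L 0).length = M
  deg : ∀ i < N - 1, 0 < i → (nb L i).length = 3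
  degl : (nb L (N - 1)).length = δ
  nc : ∀ e ∈ L, ∀ f ∈ L, e.2.2 = f.2.2 → ¬ (e.1 < f.1 ∧ f.1 < e.2.1 ∧ e.2.1 < f.2.1)
  pgu : ∀ e ∈ L, ∀ f ∈ L, e.1 = f.1 → e.2.1 = f.2.1 → e.2.2 = f.2.2
  tri : ∀ e ∈ L, ∀ f ∈ L, ∀ g ∈ L, e.2.1 = f.1 → g.1 = e.1 → g.2.1 ≠ f.2.1
  four : ∃ e ∈ L, ∃ f ∈ L, ∃ g ∈ L, ∃ h ∈ L, e.2.1 = f.1 ∧ f.2.1 = g.1 ∧ g.2.1 = h.2.1 ∧ h.1 = e.1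

/-- The graph on `Fin N` of an edge list. -/
def toGraph (L : List Edge) (N : ℕ) (hlt : ∀ e ∈ L, e.1 < e.2.1) : SimpleGraph (Fin N) where
  Adj a b := ∃ e ∈ L, (e.1 = a ∧ e.2.1 = b) ∨ (e.1 = b ∧ e.2.1 = a)
  symm := ⟨fun _ _ ⟨e, he, h⟩ => ⟨e, he, h.symm⟩⟩
  loopless := ⟨fun _ ⟨e, he, h⟩ => by have := hlt e he; omega⟩

/-- The indicator of `a < c` in `ZMod 2`. -/
def ind (a c : ℕ) : ZMod 2 := if a < c then 1 else 0

theorem ind_flip {a c : ℕ} (h : a ≠ c) : ind c a = 1 + ind a c := by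
  unfold ind
  rcases lt_or_gt_of_ne h with h | h
  · rw [if_neg (by omega), if_pos h]; decide
  · rw [if_pos h, if_neg (by omega)]; decide

theorem cross_eq {a b c d : ℕ} (hab : a < b) (hcd : c < d) (h1 : a ≠ c) (h2 : a ≠ d)
    (h3 : b ≠ c) (h4 : b ≠ d) {x y : ZMod 2}
    (hx : x = y → ¬ (a < c ∧ c < b ∧ b < d))
    (hy : x = y → ¬ (c < a ∧ a < d ∧ d < b)) :
    x * (ind a c + ind b c) + x * (ind a d + ind b d) +
      y * (ind c a + ind d a) + y * (ind c b + ind d b)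
      = ind a c + ind b c + ind a d + ind b d := by
  rw [ind_flip h1, ind_flip h2, ind_flip h3, ind_flip h4]
  have hxy : x = y ∨ x = 1 + y :=
    (by decide : ∀ x y : ZMod 2, x = y ∨ x = 1 + y) x y
  rcases hxy with e | e
  · have k1 := hx e
    have k2 := hy e
    have : ind a c + ind b c + ind a d + ind b d = 0 := by
      unfold ind
      split_ifs <;> first | (exfalso; omega) | decide
    subst e
    linear_combination (2 * x - 1) * this + (2 * x) * two_zero
  · subst e
    linear_combination (y * (ind a c + ind b c + ind a d + ind b d) + 2 * y) * two_zero

theorem toGraph_planar {L : List Edge} {N M δ : ℕ} (H : Good L N M δ) :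
    (toGraph L N H.lt).IsPlanar := by
  classical
  let pg : ℕ → ℕ → ZMod 2 := fun a b => if (a, b, true) ∈ L ∨ (b, a, true) ∈ L then 1 else 0
  have pgs : ∀ a b, pg a b = pg b a := fun a b => by simp only [pg, or_comm]
  have hpg : ∀ e ∈ L, pg e.1 e.2.1 = if e.2.2 = true then 1 else 0 := by
    rintro ⟨a, b, p⟩ he
    simp only [pg]
    have hb := H.lt _ he
    cases p
    · have n1 : (a, b, true) ∉ L := by
        intro h
        exact Bool.false_ne_true (H.pgu _ he _ h rfl rfl)
      have n2 : (b, a, true) ∉ L := by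
        intro h
        have := H.lt _ h
        simp only at this hb
        omega
      simp [n1, n2]
    · simp [he]
  have C : Cert (toGraph L N H.lt)
      (fun a b c => pg a b * (ind a c + ind b c)) (fun a c => ind a c) := by
    refine ⟨fun a c h => ind_flip (fun e => h (Fin.ext e)), ?_⟩
    have base : ∀ e ∈ L, ∀ f ∈ L, e.1 ≠ f.1 → e.1 ≠ f.2.1 → e.2.1 ≠ f.1 → e.2.1 ≠ f.2.1 →
        pg e.1 e.2.1 * (ind e.1 f.1 + ind e.2.1 f.1) + pg e.1 e.2.1 * (ind e.1 f.2.1 + ind e.2.1 f.2.1) +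
        pg f.1 f.2.1 * (ind f.1 e.1 + ind f.2.1 e.1) + pg f.1 f.2.1 * (ind f.1 e.2.1 + ind f.2.1 e.2.1)
        = ind e.1 f.1 + ind e.2.1 f.1 + ind e.1 f.2.1 + ind e.2.1 f.2.1 := by
      intro e he f hf h1 h2 h3 h4
      have hp : pg e.1 e.2.1 = pg f.1 f.2.1 → e.2.2 = f.2.2 := by
        rw [hpg e he, hpg f hf]
        cases e.2.2 <;> cases f.2.2 <;> simp
      exact cross_eq (H.lt e he) (H.lt f hf) h1 h2 h3 h4
        (fun h => H.nc e he f hf (hp h)) (fun h => H.nc f hf e he (hp h).symm)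
    rintro ⟨a, ha⟩ ⟨b, hb⟩ ⟨c, hc⟩ ⟨d, hd⟩ ⟨e, he, h⟩ ⟨f, hf, h'⟩ h1 h2 h3 h4
    simp only [ne_eq, Fin.mk.injEq] at h1 h2 h3 h4 h h'
    have B := base e he f hf
    have n1 := fun x y => @ind_flip x y
    rcases h with ⟨rfl, rfl⟩ | ⟨rfl, rfl⟩ <;> rcases h' with ⟨rfl, rfl⟩ | ⟨rfl, rfl⟩
    · linear_combination B h1 h2 h3 h4
    · have := B h2 h1 h4 h3
      rw [pgs f.2.1 f.1]
      linear_combination this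
    · have := B h3 h4 h1 h2
      rw [pgs e.2.1 e.1]
      linear_combination this
    · have := B h4 h3 h2 h1
      rw [pgs e.2.1 e.1, pgs f.2.1 f.1]
      linear_combination this
  exact ⟨no_K5 C, no_K33 C⟩

theorem toGraph_deg {L : List Edge} {N M δ : ℕ} (H : Good L N M δ) (i : Fin N) :
    (toGraph L N H.lt).degN i = (nb L i).length := by
  unfold SimpleGraph.degN
  have : ((↑) : Fin N → ℕ) '' ((toGraph L N H.lt).neighborSet i) = ((nb L i).toFinset : Set ℕ) := by
    ext x
    simp only [Set.mem_image, List.coe_toFinset, Set.mem_ofPred_eq, mem_nb,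
      SimpleGraph.mem_neighborSet, toGraph]
    constructor
    · rintro ⟨y, ⟨e, he, h⟩, rfl⟩
      refine ⟨e, he, ?_⟩
      have := H.lt e he
      omega
    · rintro ⟨e, he, h⟩
      have h1 := H.lt e he
      have h2 := H.bd e he
      have hx : x < N := by omega
      exact ⟨⟨x, hx⟩, ⟨e, he, by simp only; omega⟩, rfl⟩
  rw [← Set.ncard_image_of_injective _ Fin.val_injective, this, Set.ncard_coe_finset,
    List.toFinset_card_of_nodup (H.nodup i i.2)]

theorem toGraph_girth {L : List Edge} {N M δ : ℕ} (H : Good L N M δ) :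
    (toGraph L N H.lt).girth = 4 := by
  have hadj : ∀ e, ∀ he : e ∈ L, (toGraph L N H.lt).Adj ⟨e.1, (H.lt e he).trans (H.bd e he)⟩
      ⟨e.2.1, H.bd e he⟩ := fun e he => ⟨e, he, Or.inl ⟨rfl, rfl⟩⟩
  have hup : (toGraph L N H.lt).egirth ≤ 4 := by
    obtain ⟨e, he, f, hf, g, hg, h, hh, h1, h2, h3, h4⟩ := H.four
    have le := H.lt e he
    have lf := H.lt f hf
    have lg := H.lt g hg
    have lh := H.lt h hh
    have be := H.bd e he
    have bf := H.bd f hf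
    have bg := H.bd g hg
    have a1 : (toGraph L N H.lt).Adj ⟨e.1, by omega⟩ ⟨e.2.1, be⟩ := ⟨e, he, Or.inl ⟨rfl, rfl⟩⟩
    have a2 : (toGraph L N H.lt).Adj ⟨e.2.1, be⟩ ⟨f.2.1, bf⟩ := ⟨f, hf, Or.inl ⟨h1.symm, rfl⟩⟩
    have a3 : (toGraph L N H.lt).Adj ⟨f.2.1, bf⟩ ⟨g.2.1, bg⟩ := ⟨g, hg, Or.inl ⟨h2.symm, rfl⟩⟩
    have a4 : (toGraph L N H.lt).Adj ⟨g.2.1, bg⟩ ⟨e.1, by omega⟩ :=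
      ⟨h, hh, Or.inr ⟨h4, h3.symm⟩⟩
    let w := SimpleGraph.Walk.cons a1 (SimpleGraph.Walk.cons a2 (SimpleGraph.Walk.cons a3
      (SimpleGraph.Walk.cons a4 SimpleGraph.Walk.nil)))
    have hw : w.IsCycle := by
      rw [SimpleGraph.Walk.isCycle_def]
      refine ⟨?_, by simp [w], ?_⟩
      · rw [SimpleGraph.Walk.isTrail_def]
        simp only [w, SimpleGraph.Walk.edges_cons, SimpleGraph.Walk.edges_nil, List.nodup_cons,
          List.mem_cons, Sym2.eq_iff, Fin.mk.injEq, List.not_mem_nil, List.nodup_nil,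
          or_false, not_false_eq_true, and_true]
        omega
      · simp only [w, SimpleGraph.Walk.support_cons, SimpleGraph.Walk.support_nil, List.tail_cons,
          List.nodup_cons, List.mem_cons, Fin.mk.injEq, List.not_mem_nil, List.nodup_nil,
          or_false, not_false_eq_true, and_true]
        omega
    exact SimpleGraph.egirth_le_length hw
  have hlo : 4 ≤ (toGraph L N H.lt).egirth := by
    rw [SimpleGraph.le_egirth]
    intro a w hw
    have h3 := hw.three_le_length
    by_contra hlt
    have h4 : w.length = 3 := by
      have : w.length < 4 := by
        have := not_le.1 hlt
        exact_mod_cast this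
      omega
    have t1 := w.adj_getVert_succ (i := 0) (by omega)
    have t2 := w.adj_getVert_succ (i := 1) (by omega)
    have t3 := w.adj_getVert_succ (i := 2) (by omega)
    have e0 : w.getVert 0 = a := w.getVert_zero
    have e3 : w.getVert 3 = a := by rw [← h4]; exact w.getVert_length
    simp only [Nat.reduceAdd, e0, e3] at t1 t2 t3
    obtain ⟨e, he, h1⟩ := t1
    obtain ⟨f, hf, h2⟩ := t2
    obtain ⟨g, hg, h3⟩ := t3
    have le := H.lt e he
    have lf := H.lt f hf
    have lg := H.lt g hg
    rcases h1 with h1 | h1 <;> rcases h2 with h2 | h2 <;> rcases h3 with h3 | h3 <;>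
    first
      | omega
      | exact H.tri e he f hf g hg (by omega) (by omega) (by omega)
      | exact H.tri e he g hg f hf (by omega) (by omega) (by omega)
      | exact H.tri f hf e he g hg (by omega) (by omega) (by omega)
      | exact H.tri f hf g hg e he (by omega) (by omega) (by omega)
      | exact H.tri g hg e he f hf (by omega) (by omega) (by omega)
      | exact H.tri g hg f hf e he (by omega) (by omega) (by omega)
  have : (toGraph L N H.lt).egirth = 4 := le_antisymm hup hlo
  rw [SimpleGraph.girth, this]
  rfl

theorem good_mem {L : List Edge} {N M : ℕ} (H : Good L N M 3) : N ∈ bicageOrders 3 M 4 := by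
  have h2 := H.two
  refine ⟨Fin N, inferInstance, toGraph L N H.lt, toGraph_planar H, ⟨toGraph_girth H, ?_, ?_, ?_⟩,
    Fintype.card_fin N⟩
  · intro i
    rw [toGraph_deg H]
    rcases Nat.eq_zero_or_pos (i : ℕ) with h | h
    · right; rw [h]; exact H.deg0
    · left
      by_cases hi : (i : ℕ) < N - 1
      · exact H.deg i hi h
      · have : (i : ℕ) = N - 1 := by omega
        rw [this]; exact H.degl
  · exact ⟨⟨N - 1, by omega⟩, by rw [toGraph_deg H]; exact H.degl⟩
  · exact ⟨⟨0, by omega⟩, by rw [toGraph_deg H]; exact H.deg0⟩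

end BookEmb

namespace BookEmb

/-- Placement of a gadget: `0` is the hub, `1` the last old vertex, `2, 3, …` are new. -/
def sh (N i : ℕ) : ℕ := if i = 0 then 0 else N - 2 + i

/-- Placement of an edge of a gadget. -/
def she (N : ℕ) (e : Edge) : Edge := (sh N e.1, sh N e.2.1, e.2.2)

theorem sh_lt {N : ℕ} (hN : 2 ≤ N) {i j : ℕ} : sh N i < sh N j ↔ i < j := by
  unfold sh; split_ifs <;> omega

theorem sh_inj {N : ℕ} (hN : 2 ≤ N) {i j : ℕ} : sh N i = sh N j ↔ i = j := by
  unfold sh; split_ifs <;> omega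

theorem nb_map {N : ℕ} (hN : 2 ≤ N) (g : List Edge) (j : ℕ) :
    nb (g.map (she N)) (sh N j) = (nb g j).map (sh N) := by
  unfold nb
  rw [List.filterMap_map, List.map_filterMap]
  congr 1
  funext e
  simp only [Function.comp, she, sh_inj hN]
  split_ifs <;> rfl

theorem nb_map_empty {N : ℕ} (hN : 2 ≤ N) (g : List Edge) {i : ℕ} (h0 : 0 < i) (h1 : i < N - 1) :
    nb (g.map (she N)) i = [] := by
  rw [List.eq_nil_iff_forall_not_mem]
  intro x hx
  rw [mem_nb] at hx
  obtain ⟨e', he', h⟩ := hx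
  obtain ⟨e, he, rfl⟩ := List.mem_map.1 he'
  simp only [she, sh] at h
  split_ifs at h <;> omega

theorem nb_old_empty {L : List Edge} {N i : ℕ} (hlt : ∀ e ∈ L, e.1 < e.2.1)
    (hbd : ∀ e ∈ L, e.2.1 < N) (hi : N ≤ i) : nb L i = [] := by
  rw [List.eq_nil_iff_forall_not_mem]
  intro x hx
  rw [mem_nb] at hx
  obtain ⟨e, he, h⟩ := hx
  have := hlt e he
  have := hbd e he
  omega

/-- The (decidable) conditions on a gadget with `s` new vertices. -/
structure Gad (g : List Edge) (s d t δ : ℕ) : Prop where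
  pos : 1 ≤ s
  lt : ∀ e ∈ g, e.1 < e.2.1
  two : ∀ e ∈ g, 2 ≤ e.2.1
  bd : ∀ e ∈ g, e.2.1 < s + 2
  nodup : ∀ i < s + 2, (nb g i).Nodup
  deg0 : (nb g 0).length = d
  deg1 : (nb g 1).length = t
  deg : ∀ i < s + 1, 2 ≤ i → (nb g i).length = 3
  degl : (nb g (s + 1)).length = δ
  nc : ∀ e ∈ g, ∀ f ∈ g, e.2.2 = f.2.2 → ¬ (e.1 < f.1 ∧ f.1 < e.2.1 ∧ e.2.1 < f.2.1)
  pgu : ∀ e ∈ g, ∀ f ∈ g, e.1 = f.1 → e.2.1 = f.2.1 → e.2.2 = f.2.2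
  tri : ∀ e ∈ g, ∀ f ∈ g, ∀ h ∈ g, e.2.1 = f.1 → h.1 = e.1 → h.2.1 ≠ f.2.1

theorem Good.step {L : List Edge} {N M δ : ℕ} (H : Good L N M δ)
    (hn : ∀ e ∈ L, e.1 = 0 → e.2.1 ≠ N - 1) {g : List Edge} {s d t δ' : ℕ}
    (K : Gad g s d t δ') (ht : δ + t = 3) : Good (L ++ g.map (she N)) (N + s) (M + d) δ' := by
  have hN := H.two
  have hs := K.pos
  have hmem : ∀ {e}, e ∈ L ++ g.map (she N) → e ∈ L ∨ ∃ e' ∈ g, she N e' = e := by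
    intro e he
    rcases List.mem_append.1 he with h | h
    · exact Or.inl h
    · exact Or.inr (List.mem_map.1 h)
  have hnew : ∀ e' ∈ g, N ≤ (she N e').2.1 := by
    intro e he
    have := K.two e he
    simp only [she, sh]
    rw [if_neg (by omega)]; omega
  have hnew1 : ∀ e' ∈ g, (she N e').1 = 0 ∨ N - 1 ≤ (she N e').1 := by
    intro e he
    simp only [she, sh]
    split_ifs <;> omega
  have s1 : sh N 1 = N - 1 := by simp only [sh]; rw [if_neg (by omega)]; omega
  have s0 : sh N 0 = 0 := by simp [sh]
  have si : ∀ i, N ≤ i → sh N (i - N + 2) = i := by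
    intro i hi; simp only [sh]; rw [if_neg (by omega)]; omega
  have hmapnd : ∀ j < s + 2, ((nb g j).map (sh N)).Nodup := fun j hj =>
    (K.nodup j hj).map (fun a b h => (sh_inj hN).1 h)
  have hdisj : ∀ i j, j < 2 → List.Disjoint (nb L i) ((nb g j).map (sh N)) := by
    intro i j hj x hx hx'
    rw [mem_nb] at hx
    obtain ⟨e, he, h⟩ := hx
    have l1 := H.lt e he
    have l2 := H.bd e he
    obtain ⟨y, hy, rfl⟩ := List.mem_map.1 hx'
    rw [mem_nb] at hy
    obtain ⟨f, hf, h'⟩ := hy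
    have l3 := K.lt f hf
    have l4 := K.two f hf
    have : 2 ≤ y := by omega
    have l5 : N ≤ sh N y := by simp only [sh]; rw [if_neg (by omega)]; omega
    omega
  refine ⟨by omega, ?_, ?_, ?_, ?_, ?_, ?_, ?_, ?_, ?_, ?_⟩
  · intro e he
    rcases hmem he with h | ⟨e', h, rfl⟩
    · exact H.lt e h
    · exact (sh_lt hN).2 (K.lt e' h)
  · intro e he
    rcases hmem he with h | ⟨e', h, rfl⟩
    · have := H.bd e h; omega
    · have := K.bd e' h
      simp only [she, sh]; split_ifs <;> omega
  · intro i hi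
    rw [nb_append]
    rcases Nat.lt_or_ge i N with h | h
    · rcases Nat.eq_zero_or_pos i with h0 | h0
      · subst h0
        rw [← s0, nb_map hN, s0]
        exact (H.nodup 0 h).append (hmapnd 0 (by omega)) (hdisj _ _ (by omega))
      · by_cases h1 : i < N - 1
        · rw [nb_map_empty hN g h0 h1, List.append_nil]; exact H.nodup i h
        · have : i = N - 1 := by omega
          subst this
          rw [← s1, nb_map hN, s1]
          exact (H.nodup _ h).append (hmapnd 1 (by omega)) (hdisj _ _ (by omega))
    · rw [nb_old_empty H.lt H.bd h, List.nil_append, ← si i h, nb_map hN]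
      exact hmapnd _ (by omega)
  · rw [nb_append, List.length_append, H.deg0, ← s0, nb_map hN, List.length_map, K.deg0]
  · intro i hi h0
    rw [nb_append]
    rcases Nat.lt_or_ge i N with h | h
    · by_cases h1 : i < N - 1
      · rw [nb_map_empty hN g h0 h1, List.append_nil]; exact H.deg i h1 h0
      · have : i = N - 1 := by omega
        subst this
        rw [List.length_append, H.degl, ← s1, nb_map hN, List.length_map, K.deg1, ht]
    · rw [nb_old_empty H.lt H.bd h, List.nil_append, ← si i h, nb_map hN, List.length_map]
      exact K.deg _ (by omega) (by omega)
  · rw [nb_append, nb_old_empty H.lt H.bd (by omega), List.nil_append,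
      ← si (N + s - 1) (by omega), nb_map hN, List.length_map,
      show N + s - 1 - N + 2 = s + 1 by omega]
    exact K.degl
  · intro e he f hf hp hc
    rcases hmem he with h | ⟨e', h, rfl⟩ <;> rcases hmem hf with h' | ⟨f', h', rfl⟩
    · exact H.nc e h f h' hp hc
    · have := hnew1 f' h'
      have := H.bd e h
      omega
    · have := hnew e' h
      have := H.bd f h'
      omega
    · exact K.nc e' h f' h' hp ⟨(sh_lt hN).1 hc.1, (sh_lt hN).1 hc.2.1, (sh_lt hN).1 hc.2.2⟩
  · intro e he f hf h1 h2
    rcases hmem he with h | ⟨e', h, rfl⟩ <;> rcases hmem hf with h' | ⟨f', h', rfl⟩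
    · exact H.pgu e h f h' h1 h2
    · have := hnew f' h'
      have := H.bd e h
      omega
    · have := hnew e' h
      have := H.bd f h'
      omega
    · exact K.pgu e' h f' h' ((sh_inj hN).1 h1) ((sh_inj hN).1 h2)
  · intro e he f hf k hk h1 h2 h3
    rcases hmem he with h | ⟨e', h, rfl⟩ <;> rcases hmem hf with h' | ⟨f', h', rfl⟩ <;>
      rcases hmem hk with h'' | ⟨k', h'', rfl⟩
    · exact H.tri e h f h' k h'' h1 h2 h3
    · have := hnew k' h''
      have := H.bd f h'
      omega
    · have := hnew f' h'
      have := H.bd k h''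
      omega
    · have a1 := hnew1 f' h'
      have a2 := hnew1 k' h''
      have a3 := H.bd e h
      have a4 := H.lt e h
      exact hn e h (by omega) (by omega)
    · have := hnew e' h
      have := H.bd f h'
      have := H.lt f h'
      omega
    · have := hnew e' h
      have := H.bd f h'
      have := H.lt f h'
      omega
    · have := hnew f' h'
      have := H.bd k h''
      omega
    · exact K.tri e' h f' h' k' h'' ((sh_inj hN).1 h1) ((sh_inj hN).1 h2) ((sh_inj hN).1 h3)
  · obtain ⟨e, he, f, hf, k, hk, h, hh, r⟩ := H.four
    exact ⟨e, List.mem_append_left _ he, f, List.mem_append_left _ hf, k,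
      List.mem_append_left _ hk, h, List.mem_append_left _ hh, r⟩

theorem nonadj_step {L : List Edge} {N M δ : ℕ} (H : Good L N M δ) {g : List Edge} {s : ℕ}
    (hs : 1 ≤ s) (hg : ∀ e ∈ g, e.1 = 0 → e.2.1 ≠ s + 1) :
    ∀ e ∈ L ++ g.map (she N), e.1 = 0 → e.2.1 ≠ N + s - 1 := by
  intro e he h0 h1
  have hN := H.two
  rcases List.mem_append.1 he with h | h
  · have := H.bd e h; omega
  · obtain ⟨e', h', rfl⟩ := List.mem_map.1 h
    have := hg e' h'
    simp only [she, sh] at h0 h1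
    split_ifs at h0 h1 <;> omega

/-- Left end piece; the last vertex (9) is open. -/
def leafL : List Edge :=
  [(1,2,true),(2,3,true),(3,4,true),(4,5,true),(2,5,false),(5,7,false),(4,6,true),(6,7,true),
   (7,8,true),(8,9,true),(1,9,false),(0,1,true),(0,3,true),(0,6,true),(0,8,true)]

/-- Right end piece. -/
def leafR : List Edge :=
  [(1,2,true),(2,3,true),(3,4,true),(4,5,true),(5,6,true),(6,8,true),(7,8,true),(5,7,false),
   (7,10,false),(8,9,true),(9,10,true),(10,11,true),(3,11,false),
   (0,2,true),(0,4,true),(0,6,true),(0,9,true),(0,11,true)]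

/-- The repeated block: 9 new vertices, 5 of them adjacent to the hub. -/
def blockAB : List Edge :=
  [(1,2,true),(2,4,true),(3,4,true),(4,5,true),(5,6,true),(3,6,false),(6,8,true),(7,8,true),
   (8,9,true),(9,10,true),(7,10,false),(0,2,true),(0,3,false),(0,5,true),(0,7,false),(0,9,true)]

/-- Block with 8 new vertices, 4 of them adjacent to the hub. -/
def blockBB : List Edge :=
  [(1,3,true),(2,3,true),(3,4,true),(4,5,true),(2,5,false),(5,7,true),(6,7,true),
   (7,8,true),(8,9,true),(6,9,false),(0,2,false),(0,4,true),(0,6,false),(0,8,true)]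

/-- A cube through the hub. -/
def cube : List Edge :=
  [(1,2,true),(2,3,true),(3,4,true),(4,5,true),(4,6,true),(6,7,true),(1,7,false),(2,5,false),
   (5,7,false),(0,1,true),(0,3,true),(0,6,true)]

/-- Shift the non-hub labels of a piece by one (so that label `1` is unused). -/
def up (g : List Edge) : List Edge :=
  g.map fun e => (if e.1 = 0 then 0 else e.1 + 1, e.2.1 + 1, e.2.2)

/-- An open state: the last vertex has degree 2 and is not adjacent to the hub. -/
def Open (N M : ℕ) : Prop :=
  ∃ L, Good L N M 2 ∧ ∀ e ∈ L, e.1 = 0 → e.2.1 ≠ N - 1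

/-- A closed state whose last vertex is not adjacent to the hub. -/
def Closed (N M : ℕ) : Prop :=
  ∃ L, Good L N M 3 ∧ ∀ e ∈ L, e.1 = 0 → e.2.1 ≠ N - 1

set_option maxRecDepth 100000

theorem gad_AB : Gad blockAB 9 5 1 2 := by
  constructor <;> decide
theorem gad_BB : Gad blockBB 8 4 1 2 := by
  constructor <;> decide
theorem gad_R : Gad leafR 10 5 1 3 := by
  constructor <;> decide
theorem gad_L : Gad (up leafL) 9 4 0 2 := by
  constructor <;> decide
theorem gad_cube : Gad (up cube) 7 3 0 3 := by
  constructor <;> decide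

theorem open_L : Open 10 4 := by
  refine ⟨leafL, ?_, by decide⟩
  refine ⟨by decide, by decide, by decide, by decide, by decide, by decide, by decide, by decide,
    by decide, by decide, ?_⟩
  exact ⟨(2,3,true), by decide, (3,4,true), by decide, (4,5,true), by decide, (2,5,false),
    by decide, by decide⟩

theorem closed_cube : Closed 8 3 := by
  refine ⟨cube, ?_, by decide⟩
  refine ⟨by decide, by decide, by decide, by decide, by decide, by decide, by decide, by decide,
    by decide, by decide, ?_⟩
  exact ⟨(2,3,true), by decide, (3,4,true), by decide, (4,5,true), by decide, (2,5,false),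
    by decide, by decide⟩

theorem Closed.cube {N M : ℕ} (h : Closed N M) : Closed (N + 7) (M + 3) := by
  obtain ⟨L, H, hn⟩ := h
  exact ⟨_, H.step hn gad_cube rfl, nonadj_step H (by decide) (by decide)⟩

theorem Closed.leaf {N M : ℕ} (h : Closed N M) : Open (N + 9) (M + 4) := by
  obtain ⟨L, H, hn⟩ := h
  exact ⟨_, H.step hn gad_L rfl, nonadj_step H (by decide) (by decide)⟩

theorem Open.AB {N M : ℕ} (h : Open N M) : Open (N + 9) (M + 5) := by
  obtain ⟨L, H, hn⟩ := h
  exact ⟨_, H.step hn gad_AB rfl, nonadj_step H (by decide) (by decide)⟩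

theorem Open.BB {N M : ℕ} (h : Open N M) : Open (N + 8) (M + 4) := by
  obtain ⟨L, H, hn⟩ := h
  exact ⟨_, H.step hn gad_BB rfl, nonadj_step H (by decide) (by decide)⟩

theorem Open.ABs {N M : ℕ} (h : Open N M) (q : ℕ) : Open (N + 9 * q) (M + 5 * q) := by
  induction q with
  | zero => simpa using h
  | succ q ih => exact ih.AB

theorem Open.final {N M : ℕ} (h : Open N M) (q : ℕ) {n m : ℕ} (hn : n = N + 9 * q + 10)
    (hm : m = M + 5 * q + 5) : n ∈ bicageOrders 3 m 4 := by
  obtain ⟨L, H, hna⟩ := h.ABs q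
  subst hn hm
  exact good_mem (H.step hna gad_R rfl)

theorem exists_order (m : ℕ) (hm : 14 ≤ m) :
    (m + 4 * ((m + 1 + 4) / 5) + 3) ∈ bicageOrders 3 m 4 := by
  obtain ⟨k, j, hj, rfl⟩ : ∃ k j, j < 5 ∧ m = 5 * k + j := ⟨m / 5, m % 5, by omega, by omega⟩
  have hj' : j = 0 ∨ j = 1 ∨ j = 2 ∨ j = 3 ∨ j = 4 := by omega
  rcases hj' with rfl | rfl | rfl | rfl | rfl
  · exact closed_cube.cube.leaf.final (k - 3) (by omega) (by omega)
  · exact closed_cube.leaf.BB.final (k - 3) (by omega) (by omega)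
  · exact closed_cube.leaf.final (k - 2) (by omega) (by omega)
  · exact open_L.BB.final (k - 2) (by omega) (by omega)
  · exact open_L.final (k - 1) (by omega) (by omega)

end BookEmb

/-- For `m ≥ 14` there is a finite planar `({3,m};4)`-graph on
`m + 4⌈(m+1)/5⌉ + 3` vertices (here `⌈(m+1)/5⌉ = (m+5)/5` in natural division);
hence `n_p({3,m};4) ≤ m + 4⌈(m+1)/5⌉ + 3`. -/
theorem planar_three_m_four_upper_bound (m : ℕ) (hm : 14 ≤ m) :
    (m + 4 * ((m + 1 + 4) / 5) + 3) ∈ bicageOrders 3 m 4 ∧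
      ∀ n, IsLeast (bicageOrders 3 m 4) n → n ≤ m + 4 * ((m + 1 + 4) / 5) + 3 := by
  exact ⟨BookEmb.exists_order m hm, fun n hn => hn.2 (BookEmb.exists_order m hm)⟩
end

section
/- For all integers m ≥ 3 and g ≥ 5, n_p({2,m};g) = (m(g−2)+4)/2 if g is even, and n_p({2,m};g) = (m(g−1)+2)/2 if g is odd. Moreover, the only planar ({2,m};g)-cages (up to isomorphism) are the graph O_{m,g}, and additionally, when m is even and g is odd, the graph F_{m,g}. -/
open SimpleGraph

/-- The graph `O_{m,g}`: two vertices `u = inl 0` and `v = inl 1` joined by `m`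
internally disjoint paths, of which `m−1` have length `⌈g/2⌉` (internal vertices
`inr (inl (i,j))`) and one has length `⌊g/2⌋` (internal vertices `inr (inr j)`). -/
def Ograph (m g : ℕ) :
    SimpleGraph (Fin 2 ⊕ (Fin (m - 1) × Fin ((g + 1) / 2 - 1) ⊕ Fin (g / 2 - 1))) :=
  SimpleGraph.fromRel (fun x y =>
    match x, y with
    | Sum.inl u, Sum.inr (Sum.inl (_, j)) =>
        (u.val = 0 ∧ j.val = 0) ∨ (u.val = 1 ∧ j.val = (g + 1) / 2 - 2)
    | Sum.inl u, Sum.inr (Sum.inr j) =>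
        (u.val = 0 ∧ j.val = 0) ∨ (u.val = 1 ∧ j.val = g / 2 - 2)
    | Sum.inr (Sum.inl (i, j)), Sum.inr (Sum.inl (i', j')) => i = i' ∧ j'.val = j.val + 1
    | Sum.inr (Sum.inr j), Sum.inr (Sum.inr j') => j'.val = j.val + 1
    | _, _ => False)

/-- The graph `F_{m,g}` (for even `m`): `m/2` cycles of length `g` all sharing the
single common vertex `inl ()`. -/
def Fgraph (m g : ℕ) : SimpleGraph (Unit ⊕ Fin (m / 2) × Fin (g - 1)) :=
  SimpleGraph.fromRel (fun x y =>
    match x, y with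
    | Sum.inl _, Sum.inr (_, j) => j.val = 0 ∨ j.val = g - 2
    | Sum.inr (c, j), Sum.inr (c', j') => c = c' ∧ j'.val = j.val + 1
    | _, _ => False)

namespace Cage

/-- The walk following a sequence of consecutive adjacent vertices. -/
def seqWalk {V : Type*} {G : SimpleGraph V} (y : ℕ → V) (h : ∀ k, G.Adj (y k) (y (k+1))) :
    (n : ℕ) → G.Walk (y 0) (y n)
  | 0 => Walk.nil
  | n+1 => (seqWalk y h n).concat (h n)

lemma seqWalk_length {V : Type*} {G : SimpleGraph V} (y : ℕ → V)
    (h : ∀ k, G.Adj (y k) (y (k+1))) (n : ℕ) : (seqWalk y h n).length = n := by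
  induction n with
  | zero => rfl
  | succ n ih => simp [seqWalk, ih]

lemma seqWalk_support {V : Type*} {G : SimpleGraph V} (y : ℕ → V)
    (h : ∀ k, G.Adj (y k) (y (k+1))) (n : ℕ) :
    (seqWalk y h n).support = (List.range (n+1)).map y := by
  induction n with
  | zero => rfl
  | succ n ih => rw [List.range_succ]; simp [seqWalk, ih, Walk.support_concat]

lemma seqWalk_edges {V : Type*} {G : SimpleGraph V} (y : ℕ → V)
    (h : ∀ k, G.Adj (y k) (y (k+1))) (n : ℕ) :
    (seqWalk y h n).edges = (List.range n).map (fun k => s(y k, y (k+1))) := by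
  induction n with
  | zero => rfl
  | succ n ih => rw [List.range_succ]; simp [seqWalk, ih, Walk.edges_concat]

lemma core {V : Type*} {G : SimpleGraph V} {g : ℕ}
    (hc : ∀ v (c : G.Walk v v), c.IsCycle → g ≤ c.length)
    (y : ℕ → V) (h : ∀ k, G.Adj (y k) (y (k+1))) (d : ℕ) (hd : 2 ≤ d)
    (inj : ∀ i j, i < j → j ≤ d → y i ≠ y j) (hadj : G.Adj (y d) (y 0)) : g ≤ d + 1 := by
  have inj' : ∀ i j, i ≤ d → j ≤ d → y i = y j → i = j := by
    intro i j hi hj hij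
    rcases lt_trichotomy i j with h1 | h1 | h1
    · exact absurd hij (inj _ _ h1 hj)
    · exact h1
    · exact absurd hij.symm (inj _ _ h1 hi)
  have hp : (seqWalk y h d).IsPath := by
    rw [Walk.isPath_def, seqWalk_support]
    apply List.Nodup.map_on _ List.nodup_range
    intro i hi j hj hij
    rw [List.mem_range] at hi hj
    exact inj' _ _ (by omega) (by omega) hij
  have := hc _ (Walk.cons hadj (seqWalk y h d)) (by
    rw [Walk.cons_isCycle_iff]
    refine ⟨hp, ?_⟩
    rw [seqWalk_edges]
    simp only [List.mem_map, List.mem_range, not_exists, not_and]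
    intro k hk he
    rw [Sym2.eq_iff] at he
    rcases he with ⟨h1, h2⟩ | ⟨h1, h2⟩
    · exact inj _ _ hk le_rfl h1
    · have a1 := inj' _ _ (by omega) (by omega) h1
      have a2 := inj' _ _ (by omega) (by omega) h2
      omega)
  simpa [seqWalk_length] using this

lemma gapA {V : Type*} {G : SimpleGraph V} {g : ℕ}
    (hc : ∀ v (c : G.Walk v v), c.IsCycle → g ≤ c.length)
    (z : ℤ → V) (h : ∀ k, G.Adj (z k) (z (k+1))) (nb : ∀ k, z (k+2) ≠ z k) :
    ∀ (d : ℕ), 1 ≤ d → d < g → ∀ i, z i ≠ z (i + d) := by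
  intro d
  induction d using Nat.strong_induction_on with
  | _ d ih =>
    intro h1 hd i he
    rcases (by omega : d = 1 ∨ d = 2 ∨ 3 ≤ d) with rfl | rfl | h3
    · exact (h i).ne he
    · exact nb i he.symm
    · have := core hc (fun k : ℕ => z (i + k)) (fun k => by
        have := h (i + k); push_cast; rwa [← add_assoc]) (d - 1) (by omega) (by
          intro a b hab hb
          have := ih (b - a) (by omega) (by omega) (by omega) (i + a)
          convert this using 2
          omega) (by
          have := h (i + (d - 1 : ℕ))
          simp only [Nat.cast_zero, add_zero]
          rw [he]
          convert this using 2
          omega)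
      omega

lemma gapB {V : Type*} {G : SimpleGraph V} {g : ℕ}
    (hc : ∀ v (c : G.Walk v v), c.IsCycle → g ≤ c.length)
    (z : ℤ → V) (h : ∀ k, G.Adj (z k) (z (k+1))) (nb : ∀ k, z (k+2) ≠ z k)
    (d : ℕ) (h1 : 2 ≤ d) (i : ℤ) (had : G.Adj (z i) (z (i + d))) : g ≤ d + 1 := by
  by_contra hlt
  have := core hc (fun k : ℕ => z (i + k)) (fun k => by
        have := h (i + k); push_cast; rwa [← add_assoc]) d (by omega) (by
          intro a b hab hb
          have := gapA hc z h nb (b - a) (by omega) (by omega) (i + a)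
          convert this using 2
          omega) (by
          simpa using had.symm)
  omega

/-- `m` infinite non-backtracking walks starting at `u` with different first steps. -/
structure IsSpider {V : Type*} (G : SimpleGraph V) (u : V) {m : ℕ} (W : Fin m → ℕ → V) : Prop where
  zero : ∀ i, W i 0 = u
  inj : ∀ i j, W i 1 = W j 1 → i = j
  adj : ∀ i k, G.Adj (W i k) (W i (k+1))
  nb : ∀ i k, W i (k+2) ≠ W i k

lemma exists_spider {V : Type*} [Finite V] {G : SimpleGraph V} {m : ℕ}
    (h2 : ∀ v, 2 ≤ G.degN v) (u : V) (hu : G.degN u = m) :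
    ∃ W : Fin m → ℕ → V, IsSpider G u W := by
  have hn : ∀ p c, ∃ x, G.Adj c x ∧ x ≠ p := by
    intro p c
    by_contra hcon
    push Not at hcon
    have : G.neighborSet c ⊆ {p} := fun x hx => hcon x hx
    have := Set.ncard_le_ncard this
    have h3 := h2 c
    unfold SimpleGraph.degN at h3
    rw [Set.ncard_singleton] at this
    omega
  choose nxt hn1 hn2 using hn
  have e : Fin m ≃ G.neighborSet u := by
    refine (Finite.equivFinOfCardEq ?_).symm
    rw [← hu]; rfl
  let wl : Fin m → ℕ → V × V := fun i k =>
    Nat.rec (u, (e i : V)) (fun _ p => (p.2, nxt p.1 p.2)) k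
  have hs : ∀ i k, wl i (k+1) = ((wl i k).2, nxt (wl i k).1 (wl i k).2) := fun i k => rfl
  have hadj : ∀ i k, G.Adj (wl i k).1 (wl i k).2 := by
    intro i k
    induction k with
    | zero => exact (e i).2
    | succ k ih => rw [hs]; exact hn1 _ _
  refine ⟨fun i k => (wl i k).1, fun i => rfl, ?_, ?_, ?_⟩
  · intro i j hij
    exact e.injective (Subtype.ext hij)
  · intro i k
    have := hadj i k
    simpa [hs] using this
  · intro i k
    simp only [hs]
    exact hn2 _ _

/-- The two-way infinite walk through two legs. -/
def zz {V : Type*} {m : ℕ} (W : Fin m → ℕ → V) (i j : Fin m) (t : ℤ) : V :=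
  if 0 ≤ t then W j t.toNat else W i (-t).toNat

lemma zz_pos {V : Type*} {m : ℕ} (W : Fin m → ℕ → V) (i j : Fin m) (t : ℕ) :
    zz W i j t = W j t := by simp [zz]

section spider
variable {V : Type*} {G : SimpleGraph V} {u : V} {m g : ℕ} {W : Fin m → ℕ → V}

lemma zz_neg (hs : IsSpider G u W) (i j : Fin m) (t : ℕ) :
    zz W i j (-t) = W i t := by
  unfold zz
  split_ifs with h
  · have : t = 0 := by omega
    subst this; simp [hs.zero]
  · simp

lemma zz_adj (hs : IsSpider G u W) (i j : Fin m) (t : ℤ) :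
    G.Adj (zz W i j t) (zz W i j (t+1)) := by
  rcases le_or_gt 0 t with h | h
  · lift t to ℕ using h
    have := zz_pos W i j (t+1)
    push_cast at this
    rw [this, zz_pos]; exact hs.adj _ _
  · obtain ⟨n, hn⟩ : ∃ n : ℕ, t = -((n+1 : ℕ) : ℤ) := ⟨(-t-1).toNat, by omega⟩
    have e : t + 1 = -(n : ℤ) := by omega
    rw [e, hn, zz_neg hs, zz_neg hs]; exact (hs.adj _ _).symm

lemma zz_nb (hs : IsSpider G u W) {i j : Fin m} (hij : i ≠ j) (t : ℤ) :
    zz W i j (t+2) ≠ zz W i j t := by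
  rcases le_or_gt 0 t with h | h
  · lift t to ℕ using h
    have := zz_pos W i j (t+2)
    push_cast at this
    rw [this, zz_pos]; exact hs.nb _ _
  · rcases (by omega : t = -1 ∨ t ≤ -2) with rfl | h2
    · have h1 := zz_neg hs i j 1
      have h2 := zz_pos W i j 1
      norm_num at h1 h2 ⊢
      rw [h1, h2]
      exact fun h => hij (hs.inj _ _ h).symm
    · obtain ⟨n, hn⟩ : ∃ n : ℕ, t = -((n+2 : ℕ) : ℤ) := ⟨(-t-2).toNat, by omega⟩
      have e : t + 2 = -(n : ℤ) := by omega
      rw [e, hn, zz_neg hs, zz_neg hs]; exact (hs.nb _ _).symm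

lemma exists_other (hm : 3 ≤ m) (i : Fin m) : ∃ j, j ≠ i := by
  have : Nontrivial (Fin m) := Fin.nontrivial_iff_two_le.2 (by omega)
  exact exists_ne i

variable (hm : 3 ≤ m) (hc : ∀ v (c : G.Walk v v), c.IsCycle → g ≤ c.length) (hs : IsSpider G u W)
include hm hc hs

lemma S1 (i : Fin m) {j k : ℕ} (hjk : j < k) (he : W i j = W i k) : g ≤ k - j := by
  obtain ⟨i', hi⟩ := exists_other hm i
  by_contra hlt
  have := gapA hc _ (zz_adj hs i' i) (zz_nb hs hi) (k - j) (by omega) (by omega) j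
  apply this
  rw [show (j : ℤ) + (k - j : ℕ) = (k : ℕ) by omega, zz_pos, zz_pos, he]

lemma S3 (i : Fin m) {j k : ℕ} (hjk : j < k) (he : G.Adj (W i j) (W i k)) :
    k = j + 1 ∨ g ≤ k - j + 1 := by
  obtain ⟨i', hi⟩ := exists_other hm i
  by_contra hlt
  have := gapB hc _ (zz_adj hs i' i) (zz_nb hs hi) (k - j) (by omega) j (by
    rw [show (j : ℤ) + (k - j : ℕ) = (k : ℕ) by omega, zz_pos, zz_pos]; exact he)
  omega

omit hm in
lemma S2 {i i' : Fin m} (hi : i ≠ i') {j k : ℕ} (hjk : 1 ≤ j + k) (he : W i j = W i' k) :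
    g ≤ j + k := by
  by_contra hlt
  have := gapA hc _ (zz_adj hs i i') (zz_nb hs hi) (j + k) (by omega) (by omega) (-j)
  apply this
  rw [show -(j : ℤ) + (j + k : ℕ) = (k : ℕ) by omega, zz_pos, zz_neg hs, he]

omit hm in
lemma S4 {i i' : Fin m} (hi : i ≠ i') {j k : ℕ} (hjk : 2 ≤ j + k)
    (he : G.Adj (W i j) (W i' k)) : g ≤ j + k + 1 := by
  exact gapB hc _ (zz_adj hs i i') (zz_nb hs hi) (j + k) (by omega) (-j) (by
    rw [show -(j : ℤ) + (j + k : ℕ) = (k : ℕ) by omega, zz_pos, zz_neg hs]; exact he)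

end spider
end Cage

namespace Cage
section iso
variable {V : Type*} {G : SimpleGraph V} {u : V} {m g : ℕ} {W : Fin m → ℕ → V}

lemma card_O (m g : ℕ) : Fintype.card (Fin 2 ⊕ (Fin (m - 1) × Fin ((g + 1) / 2 - 1) ⊕ Fin (g / 2 - 1)))
    = 2 + ((m - 1) * ((g + 1) / 2 - 1) + (g / 2 - 1)) := by simp

/-- The leg containing (the image of) a vertex of `O_{m,g}`. -/
def leg (a0 : Fin m) (e : Fin (m - 1) → Fin m) :
    Fin 2 ⊕ (Fin (m - 1) × Fin ((g + 1) / 2 - 1) ⊕ Fin (g / 2 - 1)) → Fin m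
  | Sum.inr (Sum.inl (i, _)) => e i
  | _ => a0

/-- The position on its leg of (the image of) a vertex of `O_{m,g}`. -/
def pos : Fin 2 ⊕ (Fin (m - 1) × Fin ((g + 1) / 2 - 1) ⊕ Fin (g / 2 - 1)) → ℕ
  | Sum.inl i => if i = 0 then 0 else g / 2
  | Sum.inr (Sum.inl (_, j)) => j + 1
  | Sum.inr (Sum.inr j) => j + 1

lemma exists_e (a0 : Fin m) : ∃ e : Fin (m - 1) → Fin m, Function.Injective e ∧ ∀ i, e i ≠ a0 := by
  have : Fintype.card {a : Fin m // a ≠ a0} = m - 1 := by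
    simp [Fintype.card_subtype_compl]
  let e := (Fintype.equivFinOfCardEq this).symm
  exact ⟨fun i => e i, fun i j h => e.injective (Subtype.ext h), fun i => (e i).2⟩

variable (hm : 3 ≤ m) (hg : 5 ≤ g)
  (hc : ∀ v (c : G.Walk v v), c.IsCycle → g ≤ c.length) (hs : IsSpider G u W)
include hm hg hc hs

lemma eqSame (i : Fin m) {j k : ℕ} (hj : j < g) (hk : k < g) (he : W i j = W i k) : j = k := by
  rcases lt_trichotomy j k with h | h | h
  · have := S1 hm hc hs i h he; omega
  · exact h
  · have := S1 hm hc hs i h he.symm; omega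

lemma adjSame (i : Fin m) {j k : ℕ} (hj : j ≤ g / 2) (hk : k ≤ g / 2) :
    G.Adj (W i j) (W i k) ↔ (k = j + 1 ∨ j = k + 1) := by
  constructor
  · intro he
    rcases lt_trichotomy j k with h | h | h
    · have := S3 hm hc hs i h he; omega
    · subst h; exact absurd he (G.irrefl)
    · have := S3 hm hc hs i h he.symm; omega
  · rintro (rfl | rfl)
    · exact hs.adj _ _
    · exact (hs.adj _ _).symm

lemma f_inj (a0 : Fin m) (e : Fin (m - 1) → Fin m) (he : Function.Injective e)
    (he0 : ∀ i, e i ≠ a0) :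
    Function.Injective (fun x => W (leg (g := g) a0 e x) (pos x)) := by
  intro x y hxy
  simp only at hxy
  have key : ∀ a b j k, W a j = W b k → j + k < g → (a = b ∧ j = k) ∨ (j = 0 ∧ k = 0) := by
    intro a b j k h hjk
    by_cases hab : a = b
    · subst hab
      exact Or.inl ⟨rfl, eqSame hm hg hc hs a (by omega) (by omega) h⟩
    · by_cases h0 : 1 ≤ j + k
      · have := S2 hc hs hab h0 h; omega
      · omega
  have zero2 : ∀ i : Fin 2, i ≠ 0 → i = 1 := by decide
  rcases x with x | ⟨i, j⟩ | j <;> rcases y with y | ⟨i', j'⟩ | j' <;>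
    simp only [leg, pos] at hxy
  · by_cases hx : x = 0 <;> by_cases hy : y = 0 <;> simp only [hx, hy, if_true, if_false] at hxy
    · rw [hx, hy]
    · have := key _ _ _ _ hxy (by omega); omega
    · have := key _ _ _ _ hxy (by omega); omega
    · rw [zero2 x hx, zero2 y hy]
  · have := key _ _ _ _ hxy (by split_ifs <;> omega)
    rcases this with h | h
    · exact absurd h.1.symm (he0 _)
    · omega
  · have := eqSame hm hg hc hs _ (by split_ifs <;> omega) (by omega) hxy
    split_ifs at this <;> omega
  · have := key _ _ _ _ hxy (by split_ifs <;> omega)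
    rcases this with h | h
    · exact absurd h.1 (he0 _)
    · omega
  · have := key _ _ _ _ hxy (by omega)
    rcases this with h | h
    · have h1 := he h.1
      have h2 : j = j' := Fin.ext (by omega)
      rw [h1, h2]
    · omega
  · have := key _ _ _ _ hxy (by omega)
    rcases this with h | h
    · exact absurd h.1 (he0 _)
    · omega
  · have := eqSame hm hg hc hs _ (by omega) (by split_ifs <;> omega) hxy
    split_ifs at this <;> omega
  · have := key _ _ _ _ hxy (by omega)
    rcases this with h | h
    · exact absurd h.1.symm (he0 _)
    · omega
  · have := eqSame hm hg hc hs _ (by omega) (by omega) hxy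
    have h2 : j = j' := Fin.ext (by omega)
    rw [h2]

lemma moore [Fintype V] :
    2 + ((m - 1) * ((g + 1) / 2 - 1) + (g / 2 - 1)) ≤ Fintype.card V := by
  obtain ⟨e, he, he0⟩ := exists_e (⟨0, by omega⟩ : Fin m)
  rw [← card_O]
  exact Fintype.card_le_of_injective _ (f_inj hm hg hc hs _ e he he0)

lemma no_triangle {x y z : V} (h1 : G.Adj x y) (h2 : G.Adj y z) (h3 : G.Adj z x) : False := by
  have := hc x (Walk.cons h1 (Walk.cons h2 (Walk.cons h3 Walk.nil))) (by
    rw [Walk.cons_isCycle_iff]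
    have a1 := h1.ne
    have a2 := h2.ne
    have a3 := h3.ne
    constructor
    · simp [a1, a2, a3, a1.symm, a3.symm]
    · simp [a1, a2, a3, a1.symm, a3.symm])
  simp at this
  omega

lemma O_iso [Fintype V]
    (hcard : Fintype.card V = 2 + ((m - 1) * ((g + 1) / 2 - 1) + (g / 2 - 1)))
    (a0 : Fin m) (hv : ∀ b, b ≠ a0 → G.Adj (W a0 (g / 2)) (W b ((g + 1) / 2 - 1))) :
    Nonempty (G ≃g Ograph m g) := by
  obtain ⟨e, he, he0⟩ := exists_e a0
  have hbij : Function.Bijective (fun x => W (leg (g := g) a0 e x) (pos x)) := by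
    rw [Fintype.bijective_iff_injective_and_card]
    exact ⟨f_inj hm hg hc hs _ e he he0, by rw [card_O, hcard]⟩
  have zero2 : ∀ i : Fin 2, i = 0 ∨ i = 1 := by decide
  -- adjacency facts
  have same : ∀ {i : Fin m} {j k : ℕ} (hj : j ≤ g / 2) (hk : k ≤ g / 2),
    G.Adj (W i j) (W i k) ↔ (k = j + 1 ∨ j = k + 1) :=
    fun {i} {j} {k} hj hk => adjSame hm hg hc hs i hj hk
  have diffv : ∀ i (j : Fin ((g + 1) / 2 - 1)),
      G.Adj (W a0 (g / 2)) (W (e i) (j + 1)) ↔ (j : ℕ) = (g + 1) / 2 - 2 := by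
    intro i j
    constructor
    · intro h
      have := S4 hc hs (he0 i).symm (by omega) h
      omega
    · intro h
      rw [show (j : ℕ) + 1 = (g + 1) / 2 - 1 by omega]
      exact hv _ (he0 i)
  have diff0 : ∀ i (j : Fin ((g + 1) / 2 - 1)),
      G.Adj (W a0 0) (W (e i) (j + 1)) ↔ (j : ℕ) = 0 := by
    intro i j
    rw [hs.zero, ← hs.zero (e i), same (by omega) (by omega)]
    omega
  have diffa : ∀ i (j : Fin ((g + 1) / 2 - 1)) (k : Fin (g / 2 - 1)),
      ¬ G.Adj (W a0 (k + 1)) (W (e i) (j + 1)) := by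
    intro i j k h
    have := S4 hc hs (he0 i).symm (by omega) h
    omega
  have diffe : ∀ i i' (j k : Fin ((g + 1) / 2 - 1)),
      G.Adj (W (e i) (j + 1)) (W (e i') (k + 1)) → i = i' := by
    intro i i' j k h
    by_contra hne
    have := S4 hc hs (fun h => hne (he h)) (by omega) h
    have hj : (j : ℕ) + 1 = (g + 1) / 2 - 1 := by omega
    have hk : (k : ℕ) + 1 = (g + 1) / 2 - 1 := by omega
    rw [hj, hk] at h
    exact no_triangle hm hg hc hs (hv _ (he0 i)) h (hv _ (he0 i')).symm
  refine ⟨(RelIso.mk (Equiv.ofBijective _ hbij) ?_ : Ograph m g ≃g G).symm⟩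
  intro x y
  simp only [Equiv.ofBijective_apply]
  rcases x with x | ⟨i, j⟩ | j <;> rcases y with y | ⟨i', j'⟩ | j'
  · rcases zero2 x with rfl | rfl <;> rcases zero2 y with rfl | rfl <;>
      simp [leg, pos, Ograph, same] <;> omega
  · rcases zero2 x with rfl | rfl
    · simp [leg, pos, Ograph, diff0]
    · simp [leg, pos, Ograph, diffv]
  · rcases zero2 x with rfl | rfl
    · simp only [leg, pos, Ograph, if_true]
      rw [same (by omega) (by omega)]
      simp
    · simp only [leg, pos, Ograph]
      rw [same (by simp) (by omega)]
      simp
      omega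
  · rw [G.adj_comm, (Ograph m g).adj_comm]
    rcases zero2 y with rfl | rfl
    · simp [leg, pos, Ograph, diff0]
    · simp [leg, pos, Ograph, diffv]
  · simp only [leg, pos, Ograph]
    by_cases hii : i = i'
    · subst hii
      rw [same (by omega) (by omega)]
      simp only [SimpleGraph.fromRel_adj, ne_eq, Sum.inr.injEq, Sum.inl.injEq, Prod.mk.injEq,
        true_and, Fin.ext_iff]
      omega
    · have h1 : ¬ G.Adj (W (e i) (j + 1)) (W (e i') (j' + 1)) := fun h => hii (diffe _ _ _ _ h)
      simp [h1, hii, Ne.symm hii]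
  · have := diffa i j j'
    rw [G.adj_comm] at this
    simp [leg, pos, Ograph, this]
  · rw [G.adj_comm, (Ograph m g).adj_comm]
    rcases zero2 y with rfl | rfl
    · simp only [leg, pos, Ograph, if_true]
      rw [same (by omega) (by omega)]
      simp
    · simp only [leg, pos, Ograph]
      rw [same (by simp) (by omega)]
      simp
      omega
  · have := diffa i' j' j
    simp [leg, pos, Ograph, this]
  · simp only [leg, pos, Ograph]
    rw [same (by omega) (by omega)]
    simp only [SimpleGraph.fromRel_adj, ne_eq, Sum.inr.injEq, Sum.inl.injEq, Prod.mk.injEq,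
        true_and, Fin.ext_iff]
    omega

end iso
end Cage

namespace Cage
section uniq
variable {V : Type*} {G : SimpleGraph V} {u : V} {m g : ℕ} {W : Fin m → ℕ → V}

lemma transversal (σ : Fin m → Fin m) (h1 : ∀ a, σ (σ a) = a) (h2 : ∀ a, σ a ≠ a) :
    Even m ∧ ∃ e : Fin (m / 2) → Fin m, Function.Injective e ∧ ∀ i j, e i ≠ σ (e j) := by
  have hcard : 2 * (Finset.univ.filter (fun a => a < σ a)).card = m := by
    have e1 : (Finset.univ.filter (fun a => a < σ a)).card
        = (Finset.univ.filter (fun a => ¬ a < σ a)).card := by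
      refine Finset.card_bij (fun a _ => σ a) ?_ ?_ ?_
      · intro a ha
        simp at ha ⊢
        rw [h1]; exact ha.le
      · intro a _ b _ hab
        rw [← h1 a, hab, h1]
      · intro b hb
        simp at hb
        refine ⟨σ b, ?_, h1 b⟩
        simp [h1]
        exact lt_of_le_of_ne hb (h2 b)
    have e2 := Finset.card_filter_add_card_filter_not (s := (Finset.univ : Finset (Fin m)))
      (fun a => a < σ a)
    simp only [Finset.card_univ, Fintype.card_fin] at e2
    omega
  refine ⟨⟨_, by rw [← two_mul]; exact hcard.symm⟩, ?_⟩
  have hT : Fintype.card {a : Fin m // a < σ a} = m / 2 := by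
    rw [Fintype.card_subtype]; omega
  let e := (Fintype.equivFinOfCardEq hT).symm
  refine ⟨fun i => e i, fun i j h => e.injective (Subtype.ext h), ?_⟩
  intro i j hij
  have a1 := (e i).2
  have a2 := (e j).2
  simp only at hij
  rw [hij, h1] at a1
  exact absurd a1 a2.asymm

variable (hm : 3 ≤ m) (hg : 5 ≤ g)
  (hc : ∀ v (c : G.Walk v v), c.IsCycle → g ≤ c.length) (hs : IsSpider G u W)
include hm hg hc hs

lemma F_iso [Fintype V] (h : ℕ) (hgh : g = 2 * h + 1) (hcard : Fintype.card V = 1 + m * h)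
    (σ : Fin m → Fin m) (hσ : ∀ a b, G.Adj (W a h) (W b h) ↔ b = σ a) :
    Even m ∧ Nonempty (G ≃g Fgraph m g) := by
  have σ2 : ∀ a, σ (σ a) = a := fun a =>
    ((hσ (σ a) a).1 ((hσ a (σ a)).2 rfl).symm).symm
  have σne : ∀ a, σ a ≠ a := by
    intro a ha
    have := (hσ a (σ a)).2 rfl
    rw [ha] at this
    exact G.irrefl this
  obtain ⟨hev, e, he, hee⟩ := transversal σ σ2 σne
  refine ⟨hev, ?_⟩
  have σinj : ∀ a b, σ a = σ b → a = b := fun a b h => by rw [← σ2 a, h, σ2]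
  have keq : ∀ a b j k, 1 ≤ j → j ≤ h → k ≤ h → W a j = W b k → a = b ∧ j = k := by
    intro a b j k h1 hj hk heq
    by_cases hab : a = b
    · subst hab
      exact ⟨rfl, eqSame hm hg hc hs a (by omega) (by omega) heq⟩
    · have := S2 hc hs hab (by omega) heq; omega
  have kadj : ∀ a b j k, 1 ≤ j → j ≤ h → 1 ≤ k → k ≤ h → (G.Adj (W a j) (W b k) ↔
      (a = b ∧ (k = j + 1 ∨ j = k + 1)) ∨ (j = h ∧ k = h ∧ b = σ a)) := by
    intro a b j k h1 hj h1' hk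
    constructor
    · intro had
      by_cases hab : a = b
      · subst hab
        exact Or.inl ⟨rfl, (adjSame hm hg hc hs a (by omega) (by omega)).1 had⟩
      · have := S4 hc hs hab (by omega) had
        have e1 : j = h := by omega
        have e2 : k = h := by omega
        subst e1; subst e2
        exact Or.inr ⟨rfl, rfl, (hσ _ _).1 had⟩
    · rintro (⟨rfl, h'⟩ | ⟨rfl, rfl, h'⟩)
      · exact (adjSame hm hg hc hs a (by omega) (by omega)).2 h'
      · exact (hσ _ _).2 h'
  have kadj0 : ∀ a k, k ≤ h → (G.Adj u (W a k) ↔ k = 1) := by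
    intro a k hk
    rw [← hs.zero a, adjSame hm hg hc hs a (by omega) (by omega)]
    omega
  let lg : Fin (m / 2) → ℕ → Fin m := fun c j => if j < h then e c else σ (e c)
  let ps : ℕ → ℕ := fun j => if j < h then j + 1 else 2 * h - j
  have hps : ∀ j : Fin (g - 1), 1 ≤ ps j ∧ ps j ≤ h := by
    intro j
    simp only [ps]
    split_ifs <;> omega
  let f : Unit ⊕ Fin (m / 2) × Fin (g - 1) → V := fun x => match x with
    | Sum.inl _ => u
    | Sum.inr (c, j) => W (lg c j) (ps j)
  have hlg : ∀ c c' j j', lg c j = lg c' j' ↔ c = c' ∧ (j < h ↔ j' < h) := by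
    intro c c' j j'
    simp only [lg]
    split_ifs with h1 h2 h2
    · simp [h1, h2, he.eq_iff]
    · simp [h1, h2, hee]
    · simp [h1, h2, (hee _ _).symm]
    · simp only [h1, h2, iff_self, and_true]
      exact ⟨fun h => he (σinj _ _ h), fun h => by rw [h]⟩
  have hlg' : ∀ c c' j j', lg c' j' = σ (lg c j) ↔ c = c' ∧ ¬ (j < h ↔ j' < h) := by
    intro c c' j j'
    simp only [lg]
    split_ifs with h1 h2 h2
    · simp [h1, h2, hee]
    · simp [h1, h2, σ2, he.eq_iff, eq_comm]
    · simp only [h1, h2]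
      simp
      exact ⟨fun h => (he (σinj _ _ h)).symm, fun h => by rw [h]⟩
    · simp [h1, h2, σ2, (hee _ _).symm]
  have finj : Function.Injective f := by
    intro x y hxy
    rcases x with x | ⟨c, j⟩ <;> rcases y with y | ⟨c', j'⟩ <;> simp only [f] at hxy
    · rfl
    · rw [← hs.zero (lg c' j')] at hxy
      have := keq _ _ _ _ (hps j').1 (hps j').2 (by omega) hxy.symm
      have := (hps j').1
      omega
    · rw [← hs.zero (lg c j)] at hxy
      have := keq _ _ _ _ (hps j).1 (hps j).2 (by omega) hxy
      have := (hps j).1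
      omega
    · have := keq _ _ _ _ (hps j).1 (hps j).2 (hps j').2 hxy
      rw [hlg] at this
      obtain ⟨⟨rfl, h2⟩, h3⟩ := this
      have : j = j' := by
        apply Fin.ext
        simp only [ps] at h3
        split_ifs at h3 <;> omega
      rw [this]
  have hbij : Function.Bijective f := by
    rw [Fintype.bijective_iff_injective_and_card]
    refine ⟨finj, ?_⟩
    obtain ⟨k, hk⟩ := hev
    have e1 : m / 2 = k := by omega
    have e2 : g - 1 = 2 * h := by omega
    rw [hcard]
    simp only [Fintype.card_sum, Fintype.card_unit, Fintype.card_prod, Fintype.card_fin]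
    rw [e1, e2, hk]; ring
  refine ⟨(RelIso.mk (Equiv.ofBijective _ hbij) ?_ : Fgraph m g ≃g G).symm⟩
  intro x y
  simp only [Equiv.ofBijective_apply]
  have k1 : ∀ c (j : Fin (g - 1)), G.Adj u (W (lg c j) (ps j)) ↔ ((j : ℕ) = 0 ∨ (j : ℕ) = g - 2) := by
    intro c j
    rw [kadj0 _ _ (hps j).2]
    simp only [ps]
    split_ifs <;> omega
  rcases x with x | ⟨c, j⟩ <;> rcases y with y | ⟨c', j'⟩
  · simp [f, Fgraph]
  · simp [f, Fgraph, k1]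
  · rw [G.adj_comm, (Fgraph m g).adj_comm]
    simp [f, Fgraph, k1]
  · simp only [f, Fgraph, SimpleGraph.fromRel_adj, ne_eq, Sum.inr.injEq, Prod.mk.injEq, Fin.ext_iff]
    rw [kadj _ _ _ _ (hps j).1 (hps j).2 (hps j').1 (hps j').2, hlg, hlg']
    simp only [Fin.ext_iff, ps]
    split_ifs <;> omega

lemma uniq [Fintype V] (hdeg : ∀ v, G.degN v = 2 ∨ G.degN v = m)
    (hcard : Fintype.card V = 2 + ((m - 1) * ((g + 1) / 2 - 1) + (g / 2 - 1))) :
    Nonempty (G ≃g Ograph m g) ∨ (Even m ∧ Odd g ∧ Nonempty (G ≃g Fgraph m g)) := by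
  have surj : ∀ a0 : Fin m, ∀ x, ∃ c k, x = W c k ∧
      (k ≤ (g + 1) / 2 - 1 ∨ (c = a0 ∧ k = g / 2)) := by
    intro a0 x
    obtain ⟨e, he, he0⟩ := exists_e a0
    have hbij : Function.Bijective (fun x => W (leg (g := g) a0 e x) (pos x)) := by
      rw [Fintype.bijective_iff_injective_and_card]
      exact ⟨f_inj hm hg hc hs _ e he he0, by rw [card_O, hcard]⟩
    obtain ⟨y, hy⟩ := hbij.2 x
    refine ⟨_, _, hy.symm, ?_⟩
    rcases y with y | ⟨i, j⟩ | j
    · simp only [leg, pos]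
      split_ifs
      · left; omega
      · right; simp
    · left; simp only [pos]; omega
    · left; simp only [pos]; omega
  rcases Nat.even_or_odd' g with ⟨h', hgh | hgh⟩
  · -- even girth
    left
    let a0 : Fin m := ⟨0, by omega⟩
    refine O_iso hm hg hc hs hcard a0 ?_
    intro b hb
    obtain ⟨c, k, hck, hk⟩ := surj a0 (W b (g / 2))
    have hbv : W b (g / 2) = W a0 (g / 2) := by
      rcases hk with hk | ⟨rfl, rfl⟩
      · exfalso
        by_cases hbc : b = c
        · subst hbc
          have := eqSame hm hg hc hs b (by omega) (by omega) hck
          omega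
        · have := S2 hc hs hbc (by omega) hck
          omega
      · exact hck
    rw [← hbv, adjSame hm hg hc hs b (by omega) (by omega)]
    omega
  · -- odd girth
    have hh : (g + 1) / 2 - 1 = h' := by omega
    have hh2 : g / 2 = h' := by omega
    have surj' : ∀ x, ∃ c k, x = W c k ∧ k ≤ h' := by
      intro x
      obtain ⟨c, k, hck, hk⟩ := surj ⟨0, by omega⟩ x
      exact ⟨c, k, hck, by omega⟩
    have adjL : ∀ a b k, k ≤ h' → G.Adj (W a h') (W b k) →
        (W b k = W a (h' - 1)) ∨ (b ≠ a ∧ k = h') := by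
      intro a b k hk had
      by_cases hab : a = b
      · subst hab
        rw [adjSame hm hg hc hs a (by omega) (by omega)] at had
        left
        rw [show k = h' - 1 by omega]
      · right
        have := S4 hc hs hab (by omega) had
        exact ⟨Ne.symm hab, by omega⟩
    by_cases hbig : ∃ a0, G.degN (W a0 h') = m
    · left
      obtain ⟨a0, ha0⟩ := hbig
      refine O_iso hm hg hc hs hcard a0 ?_
      let F : Fin m → V := fun b => if b = a0 then W a0 (h' - 1) else W b h'
      have hsub : G.neighborSet (W a0 h') ⊆ Set.range F := by
        intro x hx
        obtain ⟨c, k, rfl, hk⟩ := surj' x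
        rcases adjL _ _ _ hk hx with h1 | ⟨h1, rfl⟩
        · exact ⟨a0, by simp [F, h1]⟩
        · exact ⟨c, by simp [F, h1]⟩
      have hle : (Set.range F).ncard ≤ m := by
        have := Set.ncard_image_le (f := F) (s := Set.univ)
        rw [Set.image_univ] at this
        simpa [Set.ncard_univ] using this
      have heq := Set.eq_of_subset_of_ncard_le hsub (by unfold degN at ha0; omega)
      intro b hb
      rw [hh, hh2]
      have : F b ∈ G.neighborSet (W a0 h') := by rw [heq]; exact ⟨b, rfl⟩
      simpa [F, hb] using this
    · right
      have hd2 : ∀ a, G.degN (W a h') = 2 := fun a => by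
        rcases hdeg (W a h') with h | h
        · exact h
        · exact absurd ⟨a, h⟩ hbig
      have hnext : ∀ a, ∃ b, b ≠ a ∧ W a (h' + 1) = W b h' := by
        intro a
        obtain ⟨c, k, hck, hk⟩ := surj' (W a (h' + 1))
        have h1 := hs.adj a h'
        rw [hck] at h1
        rcases adjL _ _ _ hk h1 with h2 | ⟨h2, rfl⟩
        · exfalso
          rw [← hck] at h2
          have := eqSame hm hg hc hs a (by omega) (by omega) h2
          omega
        · exact ⟨c, h2, hck⟩
      choose σ hσ1 hσ2 using hnext
      have hN : ∀ a, G.neighborSet (W a h') = {W a (h' - 1), W a (h' + 1)} := by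
        intro a
        have hne : W a (h' - 1) ≠ W a (h' + 1) := fun h => by
          have := eqSame hm hg hc hs a (by omega) (by omega) h
          omega
        refine (Set.eq_of_subset_of_ncard_le ?_ ?_).symm
        · intro x hx
          rcases hx with rfl | rfl
          · have := (hs.adj a (h' - 1)).symm
            rwa [show h' - 1 + 1 = h' by omega] at this
          · exact hs.adj a h'
        · rw [Set.ncard_pair hne]
          exact (hd2 a).le
      have hfin := F_iso hm hg hc hs h' hgh (by
          rw [hcard, hh, hh2]
          obtain ⟨n, rfl⟩ : ∃ n, m = n + 1 := ⟨m - 1, by omega⟩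
          simp only [Nat.add_sub_cancel, add_mul]
          omega) σ (by
          intro a b
          constructor
          · intro had
            have hb : W b h' ∈ G.neighborSet (W a h') := had
            rw [hN] at hb
            by_contra hne
            rcases hb with h1 | h1
            · by_cases hab : b = a
              · subst hab; exact G.irrefl had
              · have := S2 hc hs hab (by omega) h1
                omega
            · rw [hσ2] at h1
              have := S2 hc hs hne (by omega) h1
              omega
          · rintro rfl
            rw [← hσ2]; exact hs.adj _ _)
      exact ⟨hfin.1, ⟨h', hgh⟩, hfin.2⟩

end uniq
end Cage

namespace Cage

lemma not_minor {V W : Type*} [Finite V] (G : SimpleGraph V) (H : SimpleGraph W) (p q : V)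
    (hd : ∀ v, v ≠ p → v ≠ q → G.degN v ≤ 2)
    (hW : ∃ w : Fin 3 → W, Function.Injective w)
    (hn : ∀ w, ∃ n : Fin 3 → W, Function.Injective n ∧ ∀ i, H.Adj w (n i)) :
    ¬ H.IsMinorOf G := by
  classical
  rintro ⟨f, hconn, hdis, hadj⟩
  have hw : ∃ w, p ∉ f w ∧ q ∉ f w := by
    obtain ⟨w, hw⟩ := hW
    by_contra hcon
    push Not at hcon
    have same : ∀ (x : V) i j, x ∈ f (w i) → x ∈ f (w j) → i = j := by
      intro x i j hi hj
      by_contra hne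
      exact Set.disjoint_left.1 (hdis (fun h => hne (hw h))) hi hj
    have h0 := hcon (w 0)
    have h1 := hcon (w 1)
    have h2 := hcon (w 2)
    have p01 := same p 0 1
    have p02 := same p 0 2
    have p12 := same p 1 2
    have q01 := same q 0 1
    have q02 := same q 0 2
    have q12 := same q 1 2
    simp at p01 p02 p12 q01 q02 q12
    tauto
  obtain ⟨w, hpw, hqw⟩ := hw
  obtain ⟨n, hninj, hnadj⟩ := hn w
  choose a ha b hb hab using fun i => hadj (hnadj i)
  have : Fintype V := Fintype.ofFinite V
  have hbS : ∀ i, b i ∉ f w := fun i h =>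
    Set.disjoint_left.1 (hdis (hnadj i).ne) h (hb i)
  have hbinj : Function.Injective b := by
    intro i j hij
    by_contra hne
    have h1 := hb i
    rw [hij] at h1
    exact Set.disjoint_left.1 (hdis (fun h => hne (hninj h))) h1 (hb j)
  have hconnS := hconn w
  have hedge := hconnS.card_vert_le_card_edgeSet_add_one
  have hsum := (G.induce (f w)).sum_degrees_eq_twice_card_edges
  have hv : ∀ v : f w, (G.induce (f w)).degree v
      + (Finset.univ.filter (fun i => a i = v)).card ≤ 2 := by
    intro v
    have h2 := hd v (fun h => hpw (h ▸ v.2)) (fun h => hqw (h ▸ v.2))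
    refine le_trans ?_ h2
    unfold degN
    rw [← SimpleGraph.card_neighborFinset_eq_degree,
      ← Finset.card_image_of_injective _ (Subtype.val_injective),
      ← Finset.card_image_of_injective _ hbinj,
      ← Finset.card_union_of_disjoint]
    · rw [← Set.ncard_coe_finset]
      refine Set.ncard_le_ncard ?_ (Set.toFinite _)
      intro x hx
      simp only [Finset.coe_union, Finset.coe_image, Set.mem_union, Set.mem_image,
        Finset.mem_coe, mem_neighborFinset, Finset.mem_filter, Finset.mem_univ, true_and] at hx
      rcases hx with ⟨y, hy, rfl⟩ | ⟨i, hi, rfl⟩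
      · exact hy
      · rw [← hi]; exact hab i
    · rw [Finset.disjoint_left]
      intro x hx hx'
      simp only [Finset.mem_image] at hx hx'
      obtain ⟨y, _, rfl⟩ := hx
      obtain ⟨i, _, hi⟩ := hx'
      exact hbS i (hi ▸ y.2)
  have h3 : ∑ v : f w, (Finset.univ.filter (fun i => a i = v)).card = 3 := by
    have := Finset.card_eq_sum_card_fiberwise (f := fun i => (⟨a i, ha i⟩ : f w))
      (s := (Finset.univ : Finset (Fin 3))) (t := Finset.univ) (fun _ _ => by simp)
    simp only [Finset.card_univ, Fintype.card_fin] at this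
    refine Eq.trans ?_ this.symm
    apply Finset.sum_congr rfl
    intro v _
    congr 1
    ext i
    simp [Subtype.ext_iff]
  have h4 := Finset.sum_le_sum (fun (v : f w) (_ : v ∈ Finset.univ) => hv v)
  rw [Finset.sum_add_distrib, h3, hsum] at h4
  simp only [Finset.sum_const, Finset.card_univ, smul_eq_mul] at h4
  rw [Nat.card_eq_fintype_card, Nat.card_eq_fintype_card, ← edgeFinset_card] at hedge
  omega

lemma planar_of_deg {V : Type*} [Finite V] (G : SimpleGraph V) (p q : V)
    (hd : ∀ v, v ≠ p → v ≠ q → G.degN v ≤ 2) : G.IsPlanar := by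
  constructor
  · apply not_minor G _ p q hd
    · exact ⟨fun i => ⟨i, by omega⟩, fun i j h => by simpa [Fin.ext_iff] using h⟩
    · intro w
      refine ⟨fun i => w.succAbove ⟨i, by omega⟩, fun i j h => ?_, fun i => ?_⟩
      · have := Fin.succAbove_right_injective h
        simpa [Fin.ext_iff] using this
      · simpa using (Fin.succAbove_ne w _).symm
  · apply not_minor G _ p q hd
    · exact ⟨Sum.inl, Sum.inl_injective⟩
    · rintro (w | w)
      · exact ⟨Sum.inr, Sum.inr_injective, by simp⟩
      · exact ⟨Sum.inl, Sum.inl_injective, by simp⟩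

section O
variable {m g : ℕ}

/-- Length of a leg of `O_{m,g}`. -/
def len (m g : ℕ) : Option (Fin (m - 1)) → ℕ
  | none => g / 2
  | some _ => (g + 1) / 2

/-- The vertex at position `k` on leg `l` of `O_{m,g}`. -/
def pt (m g : ℕ) (l : Option (Fin (m - 1))) (k : ℕ) :
    Fin 2 ⊕ (Fin (m - 1) × Fin ((g + 1) / 2 - 1) ⊕ Fin (g / 2 - 1)) :=
  if h0 : k = 0 then Sum.inl 0 else match l with
  | none => if h : k < g / 2 then Sum.inr (Sum.inr ⟨k - 1, by omega⟩) else Sum.inl 1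
  | some i => if h : k < (g + 1) / 2 then Sum.inr (Sum.inl (i, ⟨k - 1, by omega⟩)) else Sum.inl 1

lemma pt_zero (l : Option (Fin (m - 1))) : pt m g l 0 = Sum.inl 0 := by simp [pt]

lemma pt_len (hg : 5 ≤ g) (l : Option (Fin (m - 1))) : pt m g l (len m g l) = Sum.inl 1 := by
  rcases l with _ | i
  · simp [pt, len]; omega
  · simp [pt, len]; omega

lemma len_ge (hg : 5 ≤ g) (l : Option (Fin (m - 1))) : 2 ≤ len m g l := by
  rcases l with _ | i <;> simp only [len] <;> omega

lemma len_add (l l' : Option (Fin (m - 1))) (h : l ≠ l') : g ≤ len m g l + len m g l' := by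
  rcases l with _ | i <;> rcases l' with _ | i' <;> simp only [len]
  · exact absurd rfl h
  all_goals omega

lemma pt_inj (hg : 5 ≤ g) {l l' : Option (Fin (m - 1))} {k k' : ℕ} (h0 : 0 < k)
    (hk : k < len m g l) (he : pt m g l k = pt m g l' k') : l = l' ∧ k = k' := by
  rcases l with _ | i <;> rcases l' with _ | i' <;> simp only [len] at hk <;>
    simp only [pt, h0.ne', hk, dif_neg, dif_pos, not_false_iff] at he <;> split_ifs at he <;> simp at he
  · exact ⟨rfl, by omega⟩
  · obtain ⟨rfl, h⟩ := he
    exact ⟨rfl, by omega⟩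

lemma pt_surj (hm : 3 ≤ m) (hg : 5 ≤ g)
    (x : Fin 2 ⊕ (Fin (m - 1) × Fin ((g + 1) / 2 - 1) ⊕ Fin (g / 2 - 1))) :
    x = Sum.inl 0 ∨ x = Sum.inl 1 ∨ ∃ l k, 0 < k ∧ k < len m g l ∧ x = pt m g l k := by
  rcases x with x | ⟨i, j⟩ | j
  · have : ∀ x : Fin 2, x = 0 ∨ x = 1 := by decide
    rcases this x with rfl | rfl <;> simp
  · right; right
    have hlt : (j : ℕ) + 1 < (g + 1) / 2 := by omega
    exact ⟨some i, j + 1, by omega, by simp only [len]; omega, by simp [pt, hlt]⟩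
  · right; right
    have hlt : (j : ℕ) + 1 < g / 2 := by omega
    exact ⟨none, j + 1, by omega, by simp only [len]; omega, by simp [pt, hlt]⟩

lemma adj_pt (hg : 5 ≤ g) (l : Option (Fin (m - 1))) (k : ℕ) (hk : k < len m g l) :
    (Ograph m g).Adj (pt m g l k) (pt m g l (k + 1)) := by
  rcases l with _ | i <;> simp only [len] at hk <;> rcases k with _ | k
  · have h1 : 1 < g / 2 := by omega
    simp [pt, Ograph, h1]
  · by_cases h : k + 1 + 1 < g / 2
    · simp [pt, Ograph, h, hk]
    · simp [pt, Ograph, h, hk]; omega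
  · have h1 : 1 < (g + 1) / 2 := by omega
    simp [pt, Ograph, h1]
  · by_cases h : k + 1 + 1 < (g + 1) / 2
    · simp [pt, Ograph, h, hk]
    · simp [pt, Ograph, h, hk]; omega

lemma adj_iff (hg : 5 ≤ g)
    (x y : Fin 2 ⊕ (Fin (m - 1) × Fin ((g + 1) / 2 - 1) ⊕ Fin (g / 2 - 1))) :
    (Ograph m g).Adj x y ↔ ∃ l k, k < len m g l ∧
      ((x = pt m g l k ∧ y = pt m g l (k + 1)) ∨ (y = pt m g l k ∧ x = pt m g l (k + 1))) := by
  constructor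
  · have ptA : ∀ i (j : Fin ((g + 1) / 2 - 1)), Sum.inr (Sum.inl (i, j)) = pt m g (some i) (j + 1) := by
      intro i j
      have hlt : (j : ℕ) + 1 < (g + 1) / 2 := by omega
      simp [pt, hlt]
    have ptB : ∀ (j : Fin (g / 2 - 1)), Sum.inr (Sum.inr j) = pt m g none (j + 1) := by
      intro j
      have hlt : (j : ℕ) + 1 < g / 2 := by omega
      simp [pt, hlt]
    have z2 : ∀ x : Fin 2, (x.val = 0 → x = 0) ∧ (x.val = 1 → x = 1) := by decide
    intro h
    simp only [Ograph, fromRel_adj] at h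
    obtain ⟨-, h⟩ := h
    have sym : ∀ x y : Fin 2 ⊕ (Fin (m - 1) × Fin ((g + 1) / 2 - 1) ⊕ Fin (g / 2 - 1)),
        (match x, y with
    | Sum.inl u, Sum.inr (Sum.inl (_, j)) =>
        (u.val = 0 ∧ j.val = 0) ∨ (u.val = 1 ∧ j.val = (g + 1) / 2 - 2)
    | Sum.inl u, Sum.inr (Sum.inr j) =>
        (u.val = 0 ∧ j.val = 0) ∨ (u.val = 1 ∧ j.val = g / 2 - 2)
    | Sum.inr (Sum.inl (i, j)), Sum.inr (Sum.inl (i', j')) => i = i' ∧ j'.val = j.val + 1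
    | Sum.inr (Sum.inr j), Sum.inr (Sum.inr j') => j'.val = j.val + 1
    | _, _ => False) → ∃ l k, k < len m g l ∧
      ((x = pt m g l k ∧ y = pt m g l (k + 1)) ∨ (y = pt m g l k ∧ x = pt m g l (k + 1))) := by
      intro x y h
      rcases x with x | ⟨i, j⟩ | j <;> rcases y with y | ⟨i', j'⟩ | j' <;> simp only at h
      · rcases h with ⟨h1, h2⟩ | ⟨h1, h2⟩
        · refine ⟨some i', 0, by simp only [len]; omega, Or.inl ⟨?_, ?_⟩⟩
          · rw [pt_zero, (z2 x).1 h1]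
          · rw [ptA, h2]
        · refine ⟨some i', j' + 1, by simp only [len]; omega, Or.inr ⟨ptA _ _, ?_⟩⟩
          rw [(z2 x).2 h1, ← pt_len hg (some i')]
          congr 1
          simp only [len]; omega
      · rcases h with ⟨h1, h2⟩ | ⟨h1, h2⟩
        · refine ⟨none, 0, by simp only [len]; omega, Or.inl ⟨?_, ?_⟩⟩
          · rw [pt_zero, (z2 x).1 h1]
          · rw [ptB, h2]
        · refine ⟨none, j' + 1, by simp only [len]; omega, Or.inr ⟨ptB _, ?_⟩⟩
          rw [(z2 x).2 h1, ← pt_len hg none]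
          congr 1
          simp only [len]; omega
      · obtain ⟨rfl, h2⟩ := h
        refine ⟨some i, j + 1, by simp only [len]; omega, Or.inl ⟨ptA _ _, ?_⟩⟩
        rw [ptA, h2]
      · refine ⟨none, j + 1, by simp only [len]; omega, Or.inl ⟨ptB _, ?_⟩⟩
        rw [ptB, h]
    rcases h with h | h
    · exact sym x y h
    · obtain ⟨l, k, h1, h2⟩ := sym y x h
      exact ⟨l, k, h1, h2.symm⟩
  · rintro ⟨l, k, hk, ⟨rfl, rfl⟩ | ⟨rfl, rfl⟩⟩
    · exact adj_pt hg l k hk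
    · exact (adj_pt hg l k hk).symm

end O
end Cage

namespace Cage
section O2
variable {m g : ℕ}

lemma inner_adj (hg : 5 ≤ g) {l : Option (Fin (m - 1))} {k : ℕ} (h0 : 0 < k)
    (hk : k < len m g l) (y) :
    (Ograph m g).Adj (pt m g l k) y ↔ y = pt m g l (k - 1) ∨ y = pt m g l (k + 1) := by
  constructor
  · intro h
    rw [adj_iff hg] at h
    obtain ⟨l', k', hk', ⟨h1, h2⟩ | ⟨h1, h2⟩⟩ := h
    · obtain ⟨rfl, rfl⟩ := pt_inj hg h0 hk h1
      exact Or.inr h2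
    · obtain ⟨rfl, rfl⟩ := pt_inj hg h0 hk h2
      exact Or.inl h1
  · rintro (rfl | rfl)
    · have := (adj_pt hg l (k - 1) (by omega)).symm
      rwa [show k - 1 + 1 = k by omega] at this
    · exact adj_pt hg l k hk

lemma pt_eq_zero (l : Option (Fin (m - 1))) (k : ℕ) : pt m g l k = Sum.inl 0 ↔ k = 0 := by
  rcases l with _ | i <;> simp only [pt] <;> split_ifs <;> simp_all

lemma adj_zero (hg : 5 ≤ g) (y) :
    (Ograph m g).Adj (Sum.inl 0) y ↔ ∃ l, y = pt m g l 1 := by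
  rw [adj_iff hg]
  constructor
  · rintro ⟨l, k, hk, ⟨h1, h2⟩ | ⟨h1, h2⟩⟩
    · have := (pt_eq_zero l k).1 h1.symm
      subst this
      exact ⟨l, h2⟩
    · have := (pt_eq_zero l (k+1)).1 h2.symm
      omega
  · rintro ⟨l, rfl⟩
    exact ⟨l, 0, by have := len_ge hg l; omega, Or.inl ⟨(pt_zero l).symm, rfl⟩⟩

lemma pt_eq_one (hg : 5 ≤ g) (l : Option (Fin (m - 1))) (k : ℕ) (hk : k ≤ len m g l) :
    pt m g l k = Sum.inl 1 ↔ k = len m g l := by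
  constructor
  · intro h
    by_contra hne
    rcases Nat.eq_zero_or_pos k with rfl | h0
    · rw [pt_zero] at h; simp at h
    · rw [← pt_len hg l] at h
      have := pt_inj hg h0 (by omega) h
      omega
  · rintro rfl
    exact pt_len hg l

lemma adj_one (hg : 5 ≤ g) (y) :
    (Ograph m g).Adj (Sum.inl 1) y ↔ ∃ l, y = pt m g l (len m g l - 1) := by
  rw [adj_iff hg]
  constructor
  · rintro ⟨l, k, hk, ⟨h1, h2⟩ | ⟨h1, h2⟩⟩
    · have := (pt_eq_one hg l k hk.le).1 h1.symm
      omega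
    · have := (pt_eq_one hg l (k+1) hk).1 h2.symm
      exact ⟨l, by rw [← this]; exact h1⟩
  · rintro ⟨l, rfl⟩
    have := len_ge hg l
    refine ⟨l, len m g l - 1, by omega, Or.inr ⟨rfl, ?_⟩⟩
    rw [show len m g l - 1 + 1 = len m g l by omega, pt_len hg]

lemma deg_inner (hg : 5 ≤ g) {l : Option (Fin (m - 1))} {k : ℕ} (h0 : 0 < k)
    (hk : k < len m g l) : (Ograph m g).degN (pt m g l k) = 2 := by
  unfold degN
  have : (Ograph m g).neighborSet (pt m g l k) = {pt m g l (k - 1), pt m g l (k + 1)} := by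
    ext y
    exact inner_adj hg h0 hk y
  rw [this, Set.ncard_pair]
  intro h
  rcases (by omega : k - 1 = 0 ∨ 0 < k - 1) with h1 | h1
  · rw [h1, pt_zero] at h
    have := (pt_eq_zero l (k+1)).1 h.symm
    omega
  · have := pt_inj hg h1 (by omega) h
    omega

lemma deg_zero (hm : 3 ≤ m) (hg : 5 ≤ g) : (Ograph m g).degN (Sum.inl 0) = m := by
  unfold degN
  have : (Ograph m g).neighborSet (Sum.inl 0) = Set.range (fun l => pt m g l 1) := by
    ext y
    rw [mem_neighborSet, adj_zero hg]
    simp [eq_comm]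
  rw [this, ← Set.image_univ, Set.ncard_image_of_injective, Set.ncard_univ]
  · simp; omega
  · intro l l' h
    exact (pt_inj hg (by omega) (by have := len_ge hg l; omega) h).1

lemma deg_one (hm : 3 ≤ m) (hg : 5 ≤ g) : (Ograph m g).degN (Sum.inl 1) = m := by
  unfold degN
  have : (Ograph m g).neighborSet (Sum.inl 1)
      = Set.range (fun l => pt m g l (len m g l - 1)) := by
    ext y
    rw [mem_neighborSet, adj_one hg]
    simp [eq_comm]
  rw [this, ← Set.image_univ, Set.ncard_image_of_injective, Set.ncard_univ]
  · simp; omega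
  · intro l l' h
    have := len_ge hg l
    exact (pt_inj hg (by omega) (by omega) h).1

lemma O_girth_ge (hm : 3 ≤ m) (hg : 5 ≤ g)
    (S : Finset (Fin 2 ⊕ (Fin (m - 1) × Fin ((g + 1) / 2 - 1) ⊕ Fin (g / 2 - 1))))
    (hne : S.Nonempty)
    (hS : ∀ x ∈ S, ∃ y ∈ S, ∃ z ∈ S, y ≠ z ∧ (Ograph m g).Adj x y ∧ (Ograph m g).Adj x z) :
    g ≤ S.card := by
  have step : ∀ l k, 0 < k → k < len m g l → pt m g l k ∈ S →
      pt m g l (k - 1) ∈ S ∧ pt m g l (k + 1) ∈ S := by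
    intro l k h0 hk hx
    obtain ⟨y, hy, z, hz, hyz, h1, h2⟩ := hS _ hx
    rw [inner_adj hg h0 hk] at h1 h2
    rcases h1 with rfl | rfl <;> rcases h2 with rfl | rfl
    · exact absurd rfl hyz
    · exact ⟨hy, hz⟩
    · exact ⟨hz, hy⟩
    · exact absurd rfl hyz
  have full : ∀ l k, 0 < k → k < len m g l → pt m g l k ∈ S →
      ∀ j ≤ len m g l, pt m g l j ∈ S := by
    intro l k h0 hk hx
    have up : ∀ d, k + d ≤ len m g l → pt m g l (k + d) ∈ S := by
      intro d
      induction d with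
      | zero => intro _; exact hx
      | succ d ih => intro hd; exact (step l (k + d) (by omega) (by omega) (ih (by omega))).2
    have down : ∀ d, d ≤ k → pt m g l (k - d) ∈ S := by
      intro d
      induction d with
      | zero => intro _; exact hx
      | succ d ih =>
        intro hd
        have := (step l (k - d) (by omega) (by omega) (ih (by omega))).1
        rwa [show k - d - 1 = k - (d + 1) by omega] at this
    intro j hj
    rcases le_total k j with h | h
    · have := up (j - k) (by omega)
      rwa [show k + (j - k) = j by omega] at this
    · have := down (k - j) (by omega)
      rwa [show k - (k - j) = j by omega] at this
  have h0 : Sum.inl 0 ∈ S := by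
    obtain ⟨x, hx⟩ := hne
    rcases pt_surj hm hg x with rfl | rfl | ⟨l, k, h0, hk, rfl⟩
    · exact hx
    · obtain ⟨y, hy, _, _, _, h1, _⟩ := hS _ hx
      rw [adj_one hg] at h1
      obtain ⟨l, rfl⟩ := h1
      have := len_ge hg l
      have := full l _ (by omega) (by omega) hy 0 (by omega)
      rwa [pt_zero] at this
    · have := full l _ (by omega) (by omega) hx 0 (by omega)
      rwa [pt_zero] at this
  obtain ⟨y, hy, z, hz, hyz, h1, h2⟩ := hS _ h0
  rw [adj_zero hg] at h1 h2
  obtain ⟨l, rfl⟩ := h1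
  obtain ⟨l', rfl⟩ := h2
  have hll : l ≠ l' := fun h => hyz (by rw [h])
  have L1 := len_ge hg l
  have L2 := len_ge hg l'
  have f1 := full l 1 (by omega) (by omega) hy
  have f2 := full l' 1 (by omega) (by omega) hz
  refine (len_add l l' hll).trans ?_
  rw [← Finset.card_range (len m g l + len m g l')]
  refine Finset.card_le_card_of_injOn
    (fun t => if t ≤ len m g l then pt m g l t else pt m g l' (len m g l + len m g l' - t)) ?_ ?_
  · intro t ht
    simp only [Finset.coe_range, Set.mem_Iio] at ht
    simp only
    split_ifs with h
    · exact f1 t h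
    · exact f2 _ (by omega)
  · have cross : ∀ s t, s ≤ len m g l → ¬ t ≤ len m g l → t < len m g l + len m g l' →
        pt m g l s ≠ pt m g l' (len m g l + len m g l' - t) := by
      intro s t hs ht ht' h
      exact hll (pt_inj hg (by omega) (by omega) h.symm).1.symm
    intro s hs t ht hst
    simp only [Finset.coe_range, Set.mem_Iio] at hs ht
    simp only at hst
    split_ifs at hst with a b b
    · rcases (by omega : s = 0 ∨ s = len m g l ∨ (0 < s ∧ s < len m g l)) with rfl | h | ⟨h, h'⟩
      · rw [pt_zero] at hst
        exact ((pt_eq_zero l t).1 hst.symm).symm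
      · rw [h, pt_len hg] at hst
        rw [h, (pt_eq_one hg l t b).1 hst.symm]
      · exact (pt_inj hg h h' hst).2
    · exact absurd hst (cross s t a b ht)
    · exact absurd hst.symm (cross t s b a hs)
    · have := (pt_inj hg (by omega) (by omega) hst).2
      omega

lemma O_cycle (hm : 3 ≤ m) (hg : 5 ≤ g) (v) (c : (Ograph m g).Walk v v) (hc : c.IsCycle) :
    g ≤ c.length := by
  classical
  have hmem : ∀ x, x ∈ c.support → x ∈ c.support.tail.toFinset := by
    intro x hx
    rw [List.mem_toFinset]
    rw [Walk.mem_support_iff] at hx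
    rcases hx with rfl | hx
    · exact Walk.end_mem_tail_support hc.not_nil
    · exact hx
  have := O_girth_ge hm hg c.support.tail.toFinset ⟨v, hmem v c.start_mem_support⟩ (by
    intro x hx
    rw [List.mem_toFinset] at hx
    have h2 := hc.ncard_neighborSet_toSubgraph_eq_two (List.mem_of_mem_tail hx)
    obtain ⟨y, z, hyz, he⟩ := Set.ncard_eq_two.1 h2
    have hy : y ∈ c.toSubgraph.neighborSet x := by rw [he]; simp
    have hz : z ∈ c.toSubgraph.neighborSet x := by rw [he]; simp
    refine ⟨y, hmem y ?_, z, hmem z ?_, hyz, hy.adj_sub, hz.adj_sub⟩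
    · exact c.mem_verts_toSubgraph.1 (c.toSubgraph.edge_vert hy.symm)
    · exact c.mem_verts_toSubgraph.1 (c.toSubgraph.edge_vert hz.symm))
  refine this.trans ((List.toFinset_card_le _).trans ?_)
  simp

lemma O_mem (hm : 3 ≤ m) (hg : 5 ≤ g) :
    2 + ((m - 1) * ((g + 1) / 2 - 1) + (g / 2 - 1)) ∈ bicageOrders 2 m g := by
  have hdeg : ∀ v, v ≠ Sum.inl 0 → v ≠ Sum.inl 1 → (Ograph m g).degN v = 2 := by
    intro v h0 h1
    rcases pt_surj hm hg v with rfl | rfl | ⟨l, k, hk0, hk, rfl⟩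
    · exact absurd rfl h0
    · exact absurd rfl h1
    · exact deg_inner hg hk0 hk
  have hdeg' : ∀ v, (Ograph m g).degN v = 2 ∨ (Ograph m g).degN v = m := by
    intro v
    by_cases h0 : v = Sum.inl 0
    · right; rw [h0, deg_zero hm hg]
    · by_cases h1 : v = Sum.inl 1
      · right; rw [h1, deg_one hm hg]
      · exact Or.inl (hdeg v h0 h1)
  refine ⟨_, inferInstance, Ograph m g, ?_, ⟨?_, hdeg', ?_, ?_⟩, card_O m g⟩
  · exact planar_of_deg _ (Sum.inl 0) (Sum.inl 1) (fun v h0 h1 => (hdeg v h0 h1).le)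
  · obtain ⟨W, hW⟩ := exists_spider (G := Ograph m g)
      (fun v => by rcases hdeg' v with h | h <;> omega) _ (deg_zero hm hg)
    have hex : ∃ v, ∃ c : (Ograph m g).Walk v v, c.IsCycle ∧ c.length ≤ g := by
      by_contra hcon
      push Not at hcon
      have := moore (g := g + 1) hm (by omega) (fun v c hc => hcon v c hc) hW
      rw [card_O] at this
      rcases Nat.even_or_odd' g with ⟨n, hn | hn⟩
      · rw [show (g + 1 + 1) / 2 - 1 = n by omega, show (g + 1) / 2 - 1 = n - 1 by omega] at this
        have h2 : (m - 1) * (n - 1) < (m - 1) * n := Nat.mul_lt_mul_of_pos_left (by omega) (by omega)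
        omega
      · rw [show (g + 1 + 1) / 2 - 1 = (g + 1) / 2 - 1 by omega] at this
        omega
    obtain ⟨v, c, hc, hle⟩ := hex
    obtain ⟨v', c', hc', he⟩ := exists_girth_eq_length.2 (fun h : (Ograph m g).IsAcyclic => h c hc)
    have h1 := O_cycle hm hg v' c' hc'
    have h2 := girth_le_length hc
    omega
  · have := len_ge hg (none : Option (Fin (m - 1)))
    exact ⟨_, deg_inner hg (l := none) (k := 1) (by omega) (by omega)⟩
  · exact ⟨_, deg_zero hm hg⟩

lemma O_least (hm : 3 ≤ m) (hg : 5 ≤ g) :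
    IsLeast (bicageOrders 2 m g) (2 + ((m - 1) * ((g + 1) / 2 - 1) + (g / 2 - 1))) := by
  refine ⟨O_mem hm hg, ?_⟩
  rintro n ⟨V, _, G, _, ⟨hgi, hdeg, -, ⟨u, hu⟩⟩, rfl⟩
  obtain ⟨W, hW⟩ := exists_spider (fun v => by rcases hdeg v with h | h <;> omega) u hu
  exact moore hm hg (fun v c hc => hgi ▸ girth_le_length hc) hW

end O2
end Cage

/-- For `m ≥ 3` and `g ≥ 5`, `n_p({2,m};g) = (m(g−2)+4)/2` for even `g`
and `(m(g−1)+2)/2` for odd `g`; moreover the only planar `({2,m};g)`-cages up to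
isomorphism are `O_{m,g}` and, when `m` is even and `g` is odd, `F_{m,g}`. -/
theorem planar_two_m_g_cages (m g : ℕ) (hm : 3 ≤ m) (hg : 5 ≤ g) :
    (Even g → IsLeast (bicageOrders 2 m g) ((m * (g - 2) + 4) / 2)) ∧
    (Odd g → IsLeast (bicageOrders 2 m g) ((m * (g - 1) + 2) / 2)) ∧
    ∀ (V : Type) [Fintype V] (G : SimpleGraph V),
      G.IsPlanar → IsBigirthGraph G 2 m g →
      IsLeast (bicageOrders 2 m g) (Fintype.card V) →
      Nonempty (G ≃g Ograph m g) ∨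
        (Even m ∧ Odd g ∧ Nonempty (G ≃g Fgraph m g)) := by
  have hl := Cage.O_least hm hg
  refine ⟨?_, ?_, ?_⟩
  · rintro ⟨n, hn⟩
    convert hl using 1
    obtain ⟨k, rfl⟩ : ∃ k, m = k + 1 := ⟨m - 1, by omega⟩
    obtain ⟨d, rfl⟩ : ∃ d, n = d + 1 := ⟨n - 1, by omega⟩
    rw [show (g + 1) / 2 - 1 = d by omega, show g / 2 - 1 = d by omega,
      show g - 2 = 2 * d by omega, Nat.add_sub_cancel,
      show (k + 1) * (2 * d) + 4 = 2 * (2 + (k * d + d)) by ring]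
    omega
  · rintro ⟨n, hn⟩
    convert hl using 1
    obtain ⟨k, rfl⟩ : ∃ k, m = k + 1 := ⟨m - 1, by omega⟩
    obtain ⟨d, rfl⟩ : ∃ d, n = d + 1 := ⟨n - 1, by omega⟩
    rw [show (g + 1) / 2 - 1 = d + 1 by omega, show g / 2 - 1 = d by omega,
      show g - 1 = 2 * (d + 1) by omega, Nat.add_sub_cancel,
      show (k + 1) * (2 * (d + 1)) + 2 = 2 * (2 + (k * (d + 1) + d)) by ring]
    omega
  · intro V _ G _ hG hleast
    obtain ⟨hgi, hdeg, -, ⟨u, hu⟩⟩ := hG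
    obtain ⟨W, hW⟩ := Cage.exists_spider (fun v => by rcases hdeg v with h | h <;> omega) u hu
    exact Cage.uniq hm hg (fun v c hc => hgi ▸ girth_le_length hc) hW hdeg (hleast.unique hl)
end
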